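/- arXiv:2007.12111 — 2 statements merged into one kernel-verified Lean document; each statement's English description precedes it below -/
import Mathlib

section
/- Let ε > 0 and let p : ℕ → [0,1] be a function satisfying n·p(n) − log n − log log n → ∞ as n → ∞. Then with high probability the random graph G ~ G(n, p(n)) admits a partition of its vertex set V(G) = V* ∪ V' with |V*| ≤ εn such that for every path P of G all of whose vertices lie in V' and which has at most 2n/3 vertices, there exists a Hamilton cycle of G containing every edge of P. -/
open scoped Classical in
/-- The probability, under the binomial random graph `G(n,p)`, that a graph
property `P` holds. Each of the `n.choose 2` possible edges is present
independently with probability `p`. -/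
noncomputable def gnpProb (n : ℕ) (p : ℝ) (P : SimpleGraph (Fin n) → Prop) : ℝ :=
  ∑ G : SimpleGraph (Fin n),
    (if P G then p ^ G.edgeSet.ncard * (1 - p) ^ (n.choose 2 - G.edgeSet.ncard) else 0)

/-!
Fix a set `V₀` of about `εn / 2` vertices and enlarge it to `V*` by adding, for each of the few
vertices with fewer than `30` neighbours in `V₀`, up to `30` further neighbours. Small sets of
vertices expand into `V*` because `G` has minimum degree at least `2`, is locally sparse, and its
vertices of low degree are far apart; larger sets expand already in a random thinning of `G` with
`δ|E(G)|` edges. So `G` has a sparse subgraph `Γ` in which every small set has twice its size of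
outside neighbours in any `X ⊇ V*`.

Replace the interior of the given path by a forced edge `uv` on the remaining vertices `X ⊇ V*`.
Pósa rotations that respect this edge yield quadratically many boosters, i.e. pairs whose addition
to `Γ` lengthens a longest path through `uv` or closes a Hamilton cycle through `uv`. There are so
few sparse subgraphs that a union bound over all of them shows that each has a booster in `G`.
Adding boosters one at a time produces the Hamilton cycle after at most `n + 1` steps.
-/

open scoped Classical
open Finset

/-! ### Vertex pairs and the product formula -/

section Pairs

variable {V : Type*} [DecidableEq V]

/-- The potential edges inside a vertex set `T`: all unordered pairs of distinct elements of `T`. -/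
def pairsIn (T : Finset V) : Finset (Sym2 V) := {e ∈ T.sym2 | ¬ e.IsDiag}

/-- The potential edges joining `A` to `B`. -/
def pairsBetween (A B : Finset V) : Finset (Sym2 V) := (A ×ˢ B).image fun x ↦ s(x.1, x.2)

/-- The number of edges of `G` among the pairs in `F`. -/
noncomputable def edgeCount (G : SimpleGraph V) (F : Finset (Sym2 V)) : ℕ :=
  #{e ∈ F | e ∈ G.edgeSet}

lemma mk_mem_pairsIn {T : Finset V} {a b : V} :
    s(a, b) ∈ pairsIn T ↔ a ∈ T ∧ b ∈ T ∧ a ≠ b := by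
  simp [pairsIn, and_assoc]

lemma mem_pairsIn_univ [Fintype V] {e : Sym2 V} : e ∈ pairsIn univ ↔ ¬ e.IsDiag := by
  simp [pairsIn]

lemma pairsIn_subset_univ [Fintype V] (T : Finset V) : pairsIn T ⊆ pairsIn univ :=
  filter_subset_filter _ (sym2_mono (subset_univ T))

lemma card_pairsIn (T : Finset V) : #(pairsIn T) = (#T).choose 2 := by
  rw [← Sym2.card_image_offDiag]
  congr 1
  ext e
  induction e with | h a b =>
  simp only [mk_mem_pairsIn, mem_image, mem_offDiag, Prod.exists]
  aesop

lemma card_pairsIn_le (T : Finset V) : (#(pairsIn T) : ℝ) ≤ (#T : ℝ) ^ 2 / 2 := by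
  rw [card_pairsIn, Nat.cast_choose_two]
  nlinarith [(Nat.cast_nonneg #T : (0 : ℝ) ≤ #T)]

lemma card_pairsBetween {A B : Finset V} (h : Disjoint A B) :
    #(pairsBetween A B) = #A * #B := by
  rw [pairsBetween, card_image_of_injOn, card_product]
  rintro ⟨a, b⟩ hab ⟨c, d⟩ hcd heq
  simp only [coe_product, Set.mem_prod, mem_coe] at hab hcd
  rcases Sym2.eq_iff.1 heq with ⟨rfl, rfl⟩ | ⟨rfl, rfl⟩
  · rfl
  · exact absurd hcd.2 (disjoint_left.1 h hab.1)

lemma pairsBetween_subset [Fintype V] {A B : Finset V} (h : Disjoint A B) :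
    pairsBetween A B ⊆ pairsIn univ := by
  simp only [pairsBetween, image_subset_iff, mem_product, mem_pairsIn_univ, Sym2.mk_isDiag_iff]
  exact fun x hx ↦ disjoint_iff_ne.1 h _ hx.1 _ hx.2

lemma edgeCount_pairsBetween_le (G : SimpleGraph V) (A B : Finset V) :
    edgeCount G (pairsBetween A B) ≤ ∑ a ∈ A, #{b ∈ B | G.Adj a b} := by
  calc edgeCount G (pairsBetween A B)
      ≤ #(A.biUnion fun a ↦ {b ∈ B | G.Adj a b}.image fun b ↦ s(a, b)) := by
        refine card_le_card fun e he ↦ ?_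
        simp only [pairsBetween, mem_filter, mem_image, mem_product, Prod.exists] at he
        obtain ⟨⟨a, b, ⟨ha, hb⟩, rfl⟩, hab⟩ := he
        exact mem_biUnion.2 ⟨a, ha, mem_image_of_mem _ (mem_filter.2 ⟨hb, hab⟩)⟩
    _ ≤ ∑ a ∈ A, #{b ∈ B | G.Adj a b} :=
        card_biUnion_le.trans (sum_le_sum fun _ _ ↦ card_image_le)

variable [Fintype V]

lemma coe_filter_pairsIn_univ_mem_edgeSet (G : SimpleGraph V) :
    (({e ∈ pairsIn univ | e ∈ G.edgeSet} : Finset (Sym2 V)) : Set (Sym2 V)) = G.edgeSet := by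
  ext e
  simpa [mem_pairsIn_univ] using G.not_isDiag_of_mem_edgeSet

lemma edgeCount_pairsIn_univ (G : SimpleGraph V) :
    edgeCount G (pairsIn univ) = G.edgeSet.ncard := by
  rw [edgeCount, ← Set.ncard_coe_finset, coe_filter_pairsIn_univ_mem_edgeSet]

lemma prod_pairsIn_univ_ite (G : SimpleGraph V) (a b : ℝ) :
    (∏ e ∈ pairsIn univ, if e ∈ G.edgeSet then a else b) =
      a ^ G.edgeSet.ncard * b ^ ((Fintype.card V).choose 2 - G.edgeSet.ncard) := by
  have hcard := card_filter_add_card_filter_not (s := pairsIn (univ : Finset V)) (· ∈ G.edgeSet)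
  rw [card_pairsIn, card_univ] at hcard
  rw [prod_ite, prod_const, prod_const, ← edgeCount_pairsIn_univ G, edgeCount, ← hcard,
    Nat.add_sub_cancel_left]

/-- Choosing a graph is choosing independently, for every pair, whether it is an edge. -/
lemma sum_prod_ite_mem_edgeSet (f g : Sym2 V → ℝ) :
    ∑ G : SimpleGraph V, ∏ e ∈ pairsIn univ, (if e ∈ G.edgeSet then f e else g e) =
      ∏ e ∈ pairsIn univ, (f e + g e) := by
  rw [prod_add]
  refine sum_bij' (fun G _ ↦ {e ∈ pairsIn (univ : Finset V) | e ∈ G.edgeSet})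
    (fun S _ ↦ SimpleGraph.fromEdgeSet (S : Set (Sym2 V))) (by simp) (by simp) ?_ ?_ ?_
  · intro G _
    rw [coe_filter_pairsIn_univ_mem_edgeSet, SimpleGraph.fromEdgeSet_edgeSet]
  · intro S hS
    ext e
    simp only [SimpleGraph.edgeSet_fromEdgeSet, mem_filter, Set.mem_sdiff, mem_coe]
    refine ⟨fun h ↦ h.2.1, fun h ↦ ⟨mem_powerset.1 hS h, h, ?_⟩⟩
    simpa using mem_pairsIn_univ.1 (mem_powerset.1 hS h)
  · intro G _
    rw [prod_ite, ← filter_not]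

lemma sum_pow_ncard_edgeSet (a : ℝ) :
    ∑ G : SimpleGraph V, a ^ G.edgeSet.ncard = (a + 1) ^ #(pairsIn (univ : Finset V)) := by
  have h := sum_prod_ite_mem_edgeSet (V := V) (fun _ ↦ a) (fun _ ↦ 1)
  simpa only [prod_pairsIn_univ_ite, one_pow, mul_one, prod_const] using h

end Pairs

/-! ### Expectation in the binomial random graph -/

section Expectation

variable {n : ℕ} {p : ℝ}

/-- The probability of the single graph `G` under `G(n,p)`, as a product over vertex pairs. -/
noncomputable def gnpWeight (p : ℝ) (G : SimpleGraph (Fin n)) : ℝ :=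
  ∏ e ∈ pairsIn univ, if e ∈ G.edgeSet then p else 1 - p

/-- The expectation of a real random variable under `G(n,p)`. -/
noncomputable def gnpExpect (n : ℕ) (p : ℝ) (f : SimpleGraph (Fin n) → ℝ) : ℝ :=
  ∑ G, gnpWeight p G * f G

lemma gnpWeight_nonneg (hp : p ∈ Set.Icc 0 1) (G : SimpleGraph (Fin n)) : 0 ≤ gnpWeight p G :=
  prod_nonneg fun e _ ↦ by split_ifs; exacts [hp.1, sub_nonneg.2 hp.2]

lemma gnpProb_eq_gnpExpect (P : SimpleGraph (Fin n) → Prop) :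
    gnpProb n p P = gnpExpect n p fun G ↦ if P G then 1 else 0 := by
  simp only [gnpProb, gnpExpect, gnpWeight, prod_pairsIn_univ_ite, Fintype.card_fin, mul_ite,
    mul_one, mul_zero]

lemma gnpExpect_prod (f g : Sym2 (Fin n) → ℝ) :
    gnpExpect n p (fun G ↦ ∏ e ∈ pairsIn univ, if e ∈ G.edgeSet then f e else g e) =
      ∏ e ∈ pairsIn univ, (p * f e + (1 - p) * g e) := by
  rw [← sum_prod_ite_mem_edgeSet]
  refine sum_congr rfl fun G _ ↦ ?_
  rw [gnpWeight, ← prod_mul_distrib]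
  exact prod_congr rfl fun e _ ↦ by split_ifs <;> rfl

lemma gnpExpect_one : gnpExpect n p (fun _ ↦ 1) = 1 := by
  simpa using gnpExpect_prod (n := n) (p := p) (fun _ ↦ 1) (fun _ ↦ 1)

lemma gnpExpect_mono (hp : p ∈ Set.Icc 0 1) {f g : SimpleGraph (Fin n) → ℝ} (h : ∀ G, f G ≤ g G) :
    gnpExpect n p f ≤ gnpExpect n p g :=
  sum_le_sum fun G _ ↦ mul_le_mul_of_nonneg_left (h G) (gnpWeight_nonneg hp G)

lemma gnpExpect_add (f g : SimpleGraph (Fin n) → ℝ) :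
    gnpExpect n p (fun G ↦ f G + g G) = gnpExpect n p f + gnpExpect n p g := by
  simp only [gnpExpect, mul_add, sum_add_distrib]

lemma gnpExpect_sum {ι : Type*} (s : Finset ι) (f : ι → SimpleGraph (Fin n) → ℝ) :
    gnpExpect n p (fun G ↦ ∑ i ∈ s, f i G) = ∑ i ∈ s, gnpExpect n p (f i) := by
  simp only [gnpExpect, mul_sum]
  exact sum_comm

lemma gnpExpect_const_mul (b : ℝ) (f : SimpleGraph (Fin n) → ℝ) :
    gnpExpect n p (fun G ↦ b * f G) = b * gnpExpect n p f := by
  simp only [gnpExpect, mul_sum, mul_left_comm]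

lemma mul_gnpProb_le_gnpExpect (hp : p ∈ Set.Icc 0 1) {P : SimpleGraph (Fin n) → Prop} {b : ℝ}
    {f : SimpleGraph (Fin n) → ℝ} (hf : ∀ G, 0 ≤ f G) (h : ∀ G, P G → b ≤ f G) :
    b * gnpProb n p P ≤ gnpExpect n p f := by
  rw [gnpProb_eq_gnpExpect, ← gnpExpect_const_mul]
  refine gnpExpect_mono hp fun G ↦ ?_
  split_ifs with hP
  · simpa using h G hP
  · simpa using hf G

lemma gnpProb_mono (hp : p ∈ Set.Icc 0 1) {P Q : SimpleGraph (Fin n) → Prop}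
    (h : ∀ G, P G → Q G) : gnpProb n p P ≤ gnpProb n p Q := by
  simp only [gnpProb_eq_gnpExpect]
  exact gnpExpect_mono hp fun G ↦ by split_ifs with hP hQ <;> simp_all

lemma gnpProb_add_gnpProb_not (P : SimpleGraph (Fin n) → Prop) :
    gnpProb n p P + gnpProb n p (fun G ↦ ¬ P G) = 1 := by
  simp only [gnpProb_eq_gnpExpect]
  rw [← gnpExpect_add]
  refine Eq.trans ?_ (gnpExpect_one (n := n) (p := p))
  congr 1 with G
  by_cases h : P G <;> simp [h]

lemma gnpProb_nonneg (hp : p ∈ Set.Icc 0 1) (P : SimpleGraph (Fin n) → Prop) :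
    0 ≤ gnpProb n p P := by
  rw [gnpProb_eq_gnpExpect]
  exact sum_nonneg fun G _ ↦ mul_nonneg (gnpWeight_nonneg hp G) (by positivity)

lemma gnpProb_le_one (hp : p ∈ Set.Icc 0 1) (P : SimpleGraph (Fin n) → Prop) :
    gnpProb n p P ≤ 1 := by
  linarith [gnpProb_add_gnpProb_not (p := p) P, gnpProb_nonneg hp fun G ↦ ¬ P G]

lemma gnpProb_eq_zero {P : SimpleGraph (Fin n) → Prop} (h : ∀ G, ¬ P G) : gnpProb n p P = 0 := by
  simp [gnpProb, h]

lemma gnpProb_not_and_le (hp : p ∈ Set.Icc 0 1) (P Q : SimpleGraph (Fin n) → Prop) :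
    gnpProb n p (fun G ↦ ¬ (P G ∧ Q G)) ≤
      gnpProb n p (fun G ↦ ¬ P G) + gnpProb n p (fun G ↦ ¬ Q G) := by
  simp only [gnpProb_eq_gnpExpect]
  rw [← gnpExpect_add]
  exact gnpExpect_mono hp fun G ↦ by by_cases hP : P G <;> by_cases hQ : Q G <;> simp [hP, hQ]

lemma mul_gnpProb_le_card_filter (hp : p ∈ Set.Icc 0 1) {ι : Type*} (s : Finset ι)
    (P : ι → SimpleGraph (Fin n) → Prop) [∀ G, DecidablePred (P · G)] (b : ℝ) :
    b * gnpProb n p (fun G ↦ b ≤ #{i ∈ s | P i G}) ≤ ∑ i ∈ s, gnpProb n p (P i) := by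
  simp only [gnpProb_eq_gnpExpect (P _)]
  rw [← gnpExpect_sum]
  refine mul_gnpProb_le_gnpExpect hp (fun G ↦ ?_) fun G hG ↦ ?_
  · exact sum_nonneg fun i _ ↦ by split_ifs <;> norm_num
  · rw [natCast_card_filter] at hG
    convert hG

lemma gnpProb_exists_mem_le (hp : p ∈ Set.Icc 0 1) {ι : Type*} (s : Finset ι)
    (P : ι → SimpleGraph (Fin n) → Prop) :
    gnpProb n p (fun G ↦ ∃ i ∈ s, P i G) ≤ ∑ i ∈ s, gnpProb n p (P i) := by
  have hMarkov := mul_gnpProb_le_card_filter hp s P 1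
  rw [one_mul] at hMarkov
  refine (gnpProb_mono hp ?_).trans hMarkov
  rintro G ⟨i, hi, hP⟩
  exact_mod_cast card_pos.2 ⟨i, mem_filter.2 ⟨hi, hP⟩⟩

end Expectation

/-! ### Exponential moments of edge counts -/

section Chernoff

variable {n : ℕ} {p : ℝ} {A F : Finset (Sym2 (Fin n))}

lemma prod_pairsIn_univ_ite_mem (hF : F ⊆ pairsIn univ) (f : Sym2 (Fin n) → ℝ) :
    (∏ e ∈ pairsIn univ, if e ∈ F then f e else 1) = ∏ e ∈ F, f e := by
  rw [prod_ite_mem, inter_eq_right.2 hF]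

lemma gnpExpect_indicator_mul_pow_edgeCount (hA : A ⊆ pairsIn univ) (hF : F ⊆ pairsIn univ)
    (hAF : Disjoint A F) (t : ℝ) :
    gnpExpect n p (fun G ↦ (if ∀ e ∈ A, e ∈ G.edgeSet then 1 else 0) * t ^ edgeCount G F) =
      p ^ #A * (1 - p + t * p) ^ #F := by
  have hprod (G : SimpleGraph (Fin n)) :
      (if ∀ e ∈ A, e ∈ G.edgeSet then 1 else 0) * t ^ edgeCount G F =
        ∏ e ∈ pairsIn univ,
          if e ∈ G.edgeSet then (if e ∈ F then t else 1) else (if e ∈ A then 0 else 1) := by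
    have hindicator : (if ∀ e ∈ A, e ∈ G.edgeSet then (1 : ℝ) else 0) =
        ∏ e ∈ A, if e ∈ G.edgeSet then 1 else 0 := by
      simp only [prod_ite_zero, prod_const_one]
    rw [hindicator, edgeCount, ← prod_const, prod_filter, ← prod_pairsIn_univ_ite_mem hA,
      ← prod_pairsIn_univ_ite_mem hF, ← prod_mul_distrib]
    exact prod_congr rfl fun e _ ↦ by split_ifs <;> simp
  simp only [hprod]
  rw [gnpExpect_prod, ← prod_const, ← prod_const, ← prod_pairsIn_univ_ite_mem hA,
    ← prod_pairsIn_univ_ite_mem hF, ← prod_mul_distrib]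
  refine prod_congr rfl fun e _ ↦ ?_
  by_cases heA : e ∈ A
  · simp [heA, disjoint_left.1 hAF heA]
  · by_cases heF : e ∈ F <;> simp only [heA, heF, if_true, if_false] <;> ring

lemma pow_mul_gnpProb_edgeCount_le (hp : p ∈ Set.Icc 0 1) (hA : A ⊆ pairsIn univ)
    (hF : F ⊆ pairsIn univ) (hAF : Disjoint A F) (d : ℕ) {t : ℝ} (ht0 : 0 ≤ t) (ht1 : t ≤ 1) :
    t ^ d * gnpProb n p (fun G ↦ (∀ e ∈ A, e ∈ G.edgeSet) ∧ edgeCount G F ≤ d) ≤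
      p ^ #A * (1 - p + t * p) ^ #F := by
  rw [← gnpExpect_indicator_mul_pow_edgeCount hA hF hAF]
  refine mul_gnpProb_le_gnpExpect hp (fun G ↦ by positivity) fun G hG ↦ ?_
  rw [if_pos hG.1, one_mul]
  exact pow_le_pow_of_le_one ht0 ht1 hG.2

lemma pow_mul_gnpProb_le_edgeCount (hp : p ∈ Set.Icc 0 1) (hF : F ⊆ pairsIn univ) (d : ℕ) {t : ℝ}
    (ht : 1 ≤ t) :
    t ^ d * gnpProb n p (fun G ↦ d ≤ edgeCount G F) ≤ (1 - p + t * p) ^ #F := by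
  have hmoment := gnpExpect_indicator_mul_pow_edgeCount (p := p) (empty_subset _) hF
    (disjoint_empty_left F) t
  rw [card_empty, pow_zero, one_mul] at hmoment
  rw [← hmoment]
  refine mul_gnpProb_le_gnpExpect hp (fun G ↦ by positivity) fun G hG ↦ ?_
  simpa using pow_le_pow_right₀ ht hG

end Chernoff

/-! ### Thinning -/

section Thinning

variable {n : ℕ} {p : ℝ}

/-- The probability that keeping each edge of `G` independently with probability `δ` leaves
the graph `H`. -/
noncomputable def thinningWeight (δ : ℝ) (G H : SimpleGraph (Fin n)) : ℝ :=
  ∏ e ∈ pairsIn univ, if e ∈ H.edgeSet then (if e ∈ G.edgeSet then δ else 0)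
    else (if e ∈ G.edgeSet then 1 - δ else 1)

lemma thinningWeight_nonneg {δ : ℝ} (hδ : δ ∈ Set.Icc 0 1) (G H : SimpleGraph (Fin n)) :
    0 ≤ thinningWeight δ G H := by
  have := sub_nonneg.2 hδ.2
  exact prod_nonneg fun e _ ↦ by split_ifs <;> linarith [hδ.1]

lemma thinningWeight_eq_zero {δ : ℝ} {G H : SimpleGraph (Fin n)} (h : ¬ H ≤ G) :
    thinningWeight δ G H = 0 := by
  rw [← SimpleGraph.edgeSet_subset_edgeSet, Set.not_subset] at h
  obtain ⟨e, heH, heG⟩ := h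
  exact prod_eq_zero (mem_pairsIn_univ.2 (H.not_isDiag_of_mem_edgeSet heH)) (by simp [heH, heG])

lemma sum_thinningWeight (δ : ℝ) (G : SimpleGraph (Fin n)) : ∑ H, thinningWeight δ G H = 1 := by
  refine (sum_prod_ite_mem_edgeSet (fun e ↦ if e ∈ G.edgeSet then δ else 0)
    (fun e ↦ if e ∈ G.edgeSet then 1 - δ else 1)).trans (prod_eq_one fun e _ ↦ ?_)
  split_ifs <;> ring

lemma gnpExpect_thinningWeight (δ : ℝ) (H : SimpleGraph (Fin n)) :
    gnpExpect n p (fun G ↦ thinningWeight δ G H) = gnpWeight (δ * p) H := by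
  have h := gnpExpect_prod (p := p) (fun e ↦ if e ∈ H.edgeSet then δ else 1 - δ)
    (fun e ↦ if e ∈ H.edgeSet then 0 else 1)
  refine Eq.trans ?_ (h.trans (prod_congr rfl fun e _ ↦ by split_ifs <;> ring))
  congr 1 with G
  exact prod_congr rfl fun e _ ↦ by split_ifs <;> rfl

lemma gnpProb_mul_le_gnpProb_exists_le (hp : p ∈ Set.Icc 0 1) {δ : ℝ} (hδ : δ ∈ Set.Icc 0 1)
    (P : SimpleGraph (Fin n) → Prop) :
    gnpProb n (δ * p) P ≤ gnpProb n p (fun G ↦ ∃ H ≤ G, P H) := by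
  have hmix : gnpProb n (δ * p) P =
      gnpExpect n p (fun G ↦ ∑ H, (if P H then 1 else 0) * thinningWeight δ G H) := by
    rw [gnpExpect_sum]
    simp only [gnpExpect_const_mul, gnpExpect_thinningWeight, gnpProb_eq_gnpExpect]
    exact sum_congr rfl fun _ _ ↦ mul_comm _ _
  rw [hmix, gnpProb_eq_gnpExpect]
  refine gnpExpect_mono hp fun G ↦ ?_
  split_ifs with hG
  · refine (sum_le_sum fun H _ ↦ ?_).trans_eq (sum_thinningWeight δ G)
    exact mul_le_of_le_one_left (thinningWeight_nonneg hδ G H) (by split_ifs <;> norm_num)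
  · refine sum_nonpos fun H _ ↦ ?_
    split_ifs with hH
    · rw [thinningWeight_eq_zero fun hle ↦ hG ⟨H, hle, hH⟩, mul_zero]
    · rw [zero_mul]

lemma gnpProb_le_gnpProb_exists_le (hp : p ∈ Set.Icc 0 1) {q : ℝ} (hq : q ∈ Set.Icc 0 p)
    (P : SimpleGraph (Fin n) → Prop) :
    gnpProb n q P ≤ gnpProb n p (fun G ↦ ∃ H ≤ G, P H) := by
  obtain ⟨δ, hδ, rfl⟩ : ∃ δ ∈ Set.Icc (0 : ℝ) 1, δ * p = q := by
    rcases hp.1.eq_or_lt with rfl | hpos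
    · exact ⟨0, by simp, by rw [mul_zero]; exact le_antisymm hq.1 hq.2⟩
    · exact ⟨q / p, ⟨div_nonneg hq.1 hp.1, div_le_one_of_le₀ hq.2 hp.1⟩,
        div_mul_cancel₀ q hpos.ne'⟩
  exact gnpProb_mul_le_gnpProb_exists_le hp hδ P

end Thinning

/-! ### Consecutive elements of a list -/

section Lists

variable {V : Type*} {l s t : List V} {c x y z : V}

/-- `x` and `y` are neighbouring entries of the list `l`, in either order. -/
def Consecutive (l : List V) (x y : V) : Prop := [x, y] <:+: l ∨ [y, x] <:+: l

lemma pair_infix_cons_iff :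
    [x, y] <:+: c :: l ↔ (c = x ∧ l.head? = some y) ∨ [x, y] <:+: l := by
  rw [List.infix_cons_iff, List.cons_prefix_cons, List.singleton_prefix_iff_head?_eq_some,
    eq_comm (a := x)]

lemma pair_infix_append_iff :
    [x, y] <:+: s ++ t ↔
      [x, y] <:+: s ∨ [x, y] <:+: t ∨ (s.getLast? = some x ∧ t.head? = some y) := by
  induction s with
  | nil => simp
  | cons c s ih =>
    rw [List.cons_append, pair_infix_cons_iff, pair_infix_cons_iff, ih]
    cases s with
    | nil => simp [or_comm]
    | cons d s => simp [or_assoc]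

lemma pair_infix_reverse_iff : [x, y] <:+: l.reverse ↔ [y, x] <:+: l := by
  rw [← List.reverse_infix]
  simp

lemma consecutive_reverse_iff : Consecutive l.reverse x y ↔ Consecutive l x y := by
  rw [Consecutive, Consecutive, pair_infix_reverse_iff, pair_infix_reverse_iff, or_comm]

lemma head?_ne_of_pair_infix (hl : l.Nodup) (h : [x, y] <:+: l) : l.head? ≠ some y := by
  obtain ⟨a, b, rfl⟩ := h
  cases a <;> simp_all [List.nodup_cons, eq_comm]

lemma getLast?_ne_of_pair_infix (hl : l.Nodup) (h : [x, y] <:+: l) : l.getLast? ≠ some x := by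
  rw [← List.head?_reverse]
  exact head?_ne_of_pair_infix (List.nodup_reverse.2 hl) (pair_infix_reverse_iff.2 h)

lemma pair_infix_right_unique (hl : l.Nodup) (hy : [x, y] <:+: l) (hz : [x, z] <:+: l) :
    y = z := by
  obtain ⟨a, b, rfl⟩ := hy
  have hxz : [x, z] <:+: a ++ (x :: y :: b) := by simpa using hz
  have hnodup : (a ++ (x :: y :: b)).Nodup := by simpa using hl
  rw [pair_infix_append_iff, pair_infix_cons_iff] at hxz
  rw [List.nodup_append, List.nodup_cons] at hnodup
  obtain ⟨-, ⟨hx, -⟩, hdisj⟩ := hnodup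
  rcases hxz with h | (h | h) | h
  · exact (hdisj x (h.subset (by simp)) x (by simp) rfl).elim
  · simpa using h.2
  · exact (hx (h.subset (by simp))).elim
  · exact (hdisj x (List.mem_of_getLast? h.1) x (by simp) rfl).elim

lemma pair_infix_left_unique (hl : l.Nodup) (hy : [y, x] <:+: l) (hz : [z, x] <:+: l) :
    y = z :=
  pair_infix_right_unique (List.nodup_reverse.2 hl) (pair_infix_reverse_iff.2 hy)
    (pair_infix_reverse_iff.2 hz)

lemma isChain_append_swap {R : V → V → Prop} (hs : s.IsChain R) (ht : t.IsChain R)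
    (hclose : ∀ a ∈ (s ++ t).getLast?, ∀ b ∈ (s ++ t).head?, R a b) : (t ++ s).IsChain R := by
  refine List.isChain_append.2 ⟨ht, hs, fun a ha b hb ↦ hclose a ?_ b ?_⟩
  · rw [List.getLast?_append, ha]; rfl
  · rw [List.head?_append, hb]; rfl

lemma isChain_adj_reverse {Γ : SimpleGraph V} (h : l.IsChain Γ.Adj) : l.reverse.IsChain Γ.Adj :=
  List.isChain_reverse.2 (h.imp fun _ _ hab ↦ hab.symm)

end Lists

/-! ### Rotations of paths through a prescribed edge -/

section Rotations

variable {V : Type*} {Γ : SimpleGraph V} {X : Finset V} {u v : V} {l l' : List V}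

/-- `l` lists the vertices of a path in `Γ + uv` that lies in `X` and traverses the edge `uv`,
whether or not `uv` is an edge of `Γ`. -/
structure ForcedPath (Γ : SimpleGraph V) (X : Finset V) (u v : V) (l : List V) : Prop where
  nodup : l.Nodup
  mem : ∀ x ∈ l, x ∈ X
  isChain : l.IsChain (Γ ⊔ SimpleGraph.edge u v).Adj
  consecutive : Consecutive l u v

/-- Forced paths with the greatest possible number of vertices. -/
structure LongestForcedPath (Γ : SimpleGraph V) (X : Finset V) (u v : V) (l : List V) : Prop
    extends ForcedPath Γ X u v l where
  length_le : ∀ l', ForcedPath Γ X u v l' → l'.length ≤ l.length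

/-- `l'` arises from the path `l = s ++ t` by Pósa's rotation: the edge from the last vertex `y`
of `l` to the last vertex `z` of `s` is added and the edge following `z` is removed. The
requirement `z ∉ {u, v}` protects the edge `uv` from removal. -/
def IsRotation (Γ : SimpleGraph V) (u v : V) (l l' : List V) : Prop :=
  ∃ s t z y, l = s ++ t ∧ s.getLast? = some z ∧ t.getLast? = some y ∧ Γ.Adj y z ∧ z ≠ u ∧ z ≠ v ∧
    l' = s ++ t.reverse

lemma forcedPath_pair (huv : u ≠ v) (hu : u ∈ X) (hv : v ∈ X) : ForcedPath Γ X u v [u, v] where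
  nodup := by simp [huv]
  mem := by simp [hu, hv]
  isChain := by simp [SimpleGraph.edge_adj, huv]
  consecutive := Or.inl (List.infix_refl _)

namespace ForcedPath

lemma mono {Γ' : SimpleGraph V} (h : ForcedPath Γ X u v l) (hle : Γ ≤ Γ') :
    ForcedPath Γ' X u v l where
  __ := h
  isChain := h.isChain.imp fun _ _ hab ↦ sup_le_sup_right hle _ hab

lemma reverse (h : ForcedPath Γ X u v l) : ForcedPath Γ X u v l.reverse where
  nodup := List.nodup_reverse.2 h.nodup
  mem := by simpa using h.mem
  isChain := isChain_adj_reverse h.isChain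
  consecutive := consecutive_reverse_iff.2 h.consecutive

lemma ne_nil (h : ForcedPath Γ X u v l) : l ≠ [] := by
  rintro rfl
  simpa [Consecutive] using h.consecutive

lemma cons {c w : V} (h : ForcedPath Γ X u v l) (hc : l.head? = some c) (hw : w ∈ X) (hwl : w ∉ l)
    (hwc : Γ.Adj w c) : ForcedPath Γ X u v (w :: l) where
  nodup := List.nodup_cons.2 ⟨hwl, h.nodup⟩
  mem := by simpa [hw] using h.mem
  isChain := by
    refine List.isChain_cons.2 ⟨fun y hy ↦ ?_, h.isChain⟩
    obtain rfl : c = y := by simpa [hc] using hy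
    exact Or.inl hwc
  consecutive := h.consecutive.imp (List.infix_cons ·) (List.infix_cons ·)

lemma isRotation (h : ForcedPath Γ X u v l) (hrot : IsRotation Γ u v l l') :
    ForcedPath Γ X u v l' := by
  obtain ⟨s, t, z, y, rfl, hz, hy, hyz, hzu, hzv, rfl⟩ := hrot
  have hperm : (s ++ t.reverse).Perm (s ++ t) := t.reverse_perm.append_left s
  obtain ⟨hs, ht, -⟩ := List.isChain_append.1 h.isChain
  refine ⟨hperm.nodup_iff.2 h.nodup, fun x hx ↦ h.mem x (hperm.mem_iff.1 hx), ?_, ?_⟩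
  · refine List.isChain_append.2 ⟨hs, isChain_adj_reverse ht, fun a ha b hb ↦ ?_⟩
    obtain rfl : z = a := by simpa [hz] using ha
    obtain rfl : y = b := by simpa [hy] using hb
    exact Or.inl hyz.symm
  · have huv := h.consecutive
    simp only [Consecutive, pair_infix_append_iff, pair_infix_reverse_iff, hz, Option.some.injEq,
      hzu, hzv, false_and, or_false] at huv ⊢
    tauto

end ForcedPath

namespace IsRotation

lemma perm (h : IsRotation Γ u v l l') : l'.Perm l := by
  obtain ⟨s, t, -, -, rfl, -, -, -, -, -, rfl⟩ := h
  exact t.reverse_perm.append_left s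

lemma head?_eq (h : IsRotation Γ u v l l') : l'.head? = l.head? := by
  obtain ⟨s, t, z, _, rfl, hz, -, -, -, -, rfl⟩ := h
  cases s with
  | nil => simp at hz
  | cons => simp

lemma exists_consecutive_imp (h : IsRotation Γ u v l l') :
    ∃ y z w, l.getLast? = some y ∧ [z, w] <:+: l ∧ l'.getLast? = some w ∧
      ∀ a b, Consecutive l' a b → Consecutive l a b ∨ (a = z ∧ b = y) ∨ (a = y ∧ b = z) := by
  obtain ⟨s, t, z, y, rfl, hz, hy, -, -, -, rfl⟩ := h
  obtain ⟨w, t, rfl⟩ : ∃ w t', t = w :: t' :=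
    List.exists_cons_of_ne_nil (by rintro rfl; simp at hy)
  refine ⟨y, z, w, by simp [hy], ?_, by simp, fun a b ↦ ?_⟩
  · exact pair_infix_append_iff.2 (Or.inr (Or.inr ⟨hz, rfl⟩))
  · simp only [Consecutive, pair_infix_append_iff, pair_infix_reverse_iff, hz, List.head?_reverse,
      hy, Option.some.injEq]
    grind

end IsRotation

lemma exists_longestForcedPath [Finite V] (h : ForcedPath Γ X u v l) :
    ∃ l', LongestForcedPath Γ X u v l' := by
  have := Fintype.ofFinite V
  have hfinite : {l | ForcedPath Γ X u v l}.Finite :=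
    (List.finite_length_le V (Fintype.card V)).subset fun l hl ↦ hl.nodup.length_le_card
  obtain ⟨l', hl', hmax⟩ := Set.exists_max_image _ List.length hfinite ⟨l, h⟩
  exact ⟨l', hl', hmax⟩

namespace LongestForcedPath

lemma reverse (h : LongestForcedPath Γ X u v l) : LongestForcedPath Γ X u v l.reverse where
  toForcedPath := h.toForcedPath.reverse
  length_le := by simpa using h.length_le

lemma of_rotations (h : LongestForcedPath Γ X u v l)
    (hrot : Relation.ReflTransGen (IsRotation Γ u v) l l') :
    LongestForcedPath Γ X u v l' ∧ l'.head? = l.head? := by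
  induction hrot with
  | refl => exact ⟨h, rfl⟩
  | tail _ hstep ih =>
    refine ⟨⟨ih.1.isRotation hstep, ?_⟩, hstep.head?_eq.trans ih.2⟩
    rw [hstep.perm.length_eq]
    exact ih.1.length_le

lemma mem_of_adj_getLast? {y z : V} (h : LongestForcedPath Γ X u v l) (hy : l.getLast? = some y)
    (hz : z ∈ X) (hyz : Γ.Adj y z) : z ∈ l := by
  by_contra hzl
  have hext := h.reverse.cons (by simpa using hy) hz (by simpa using hzl) hyz.symm
  simpa using h.length_le _ hext

end LongestForcedPath

variable [Fintype V]

/-- The last vertices of all paths reachable from `l` by rotations. -/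
noncomputable def rotationEnds (Γ : SimpleGraph V) (u v : V) (l : List V) : Finset V :=
  {y | ∃ l', Relation.ReflTransGen (IsRotation Γ u v) l l' ∧ l'.getLast? = some y}

lemma mem_rotationEnds {y : V} : y ∈ rotationEnds Γ u v l ↔
    ∃ l', Relation.ReflTransGen (IsRotation Γ u v) l l' ∧ l'.getLast? = some y := by
  simp [rotationEnds]

/-- Every edge created or destroyed by a rotation has an end in `rotationEnds`. -/
lemma consecutive_of_rotations (hrot : Relation.ReflTransGen (IsRotation Γ u v) l l') {z w : V}
    (hz : z ∉ rotationEnds Γ u v l) (hzl : ∀ r ∈ rotationEnds Γ u v l, ¬ Consecutive l z r)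
    (hzw : Consecutive l' z w) : Consecutive l z w := by
  induction hrot generalizing w with
  | refl => exact hzw
  | @tail l₁ l₂ hl₁ hstep ih =>
    obtain ⟨y, a, b, hy, hab, hb, himp⟩ := hstep.exists_consecutive_imp
    have hyR : y ∈ rotationEnds Γ u v l := mem_rotationEnds.2 ⟨l₁, hl₁, hy⟩
    have hbR : b ∈ rotationEnds Γ u v l := mem_rotationEnds.2 ⟨l₂, hl₁.tail hstep, hb⟩
    rcases himp z w hzw with h | ⟨rfl, rfl⟩ | ⟨rfl, rfl⟩
    · exact ih h
    · exact absurd (ih (Or.inl hab)) (hzl b hbR)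
    · exact absurd hyR hz

end Rotations

/-! ### Pósa's lemma -/

section Posa

variable {V : Type*} [DecidableEq V] {Γ : SimpleGraph V} {X : Finset V} {u v : V} {l l' : List V}

/-- The neighbours in `W` of the set `S`, outside `S` itself. -/
noncomputable def extNeighbors (Γ : SimpleGraph V) (W S : Finset V) : Finset V :=
  {z ∈ W | z ∉ S ∧ ∃ y ∈ S, Γ.Adj y z}

/-- Every set of at most `k` vertices has at least twice as many outside neighbours in `W`. -/
def Expands (Γ : SimpleGraph V) (W : Finset V) (k : ℝ) : Prop :=
  ∀ S : Finset V, #S ≤ k → 2 * #S ≤ #(extNeighbors Γ W S)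

lemma mem_extNeighbors {W S : Finset V} {z : V} :
    z ∈ extNeighbors Γ W S ↔ z ∈ W ∧ z ∉ S ∧ ∃ y ∈ S, Γ.Adj y z := mem_filter

lemma extNeighbors_mono {Γ' : SimpleGraph V} {W W' : Finset V} (hΓ : Γ ≤ Γ') (hW : W ⊆ W')
    (S : Finset V) : extNeighbors Γ W S ⊆ extNeighbors Γ' W' S := by
  intro z
  simp only [mem_extNeighbors]
  rintro ⟨hz, hzS, y, hy, hyz⟩
  exact ⟨hW hz, hzS, y, hy, hΓ hyz⟩

lemma Expands.mono {Γ' : SimpleGraph V} {W W' : Finset V} {k : ℝ} (h : Expands Γ W k) (hΓ : Γ ≤ Γ')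
    (hW : W ⊆ W') : Expands Γ' W' k :=
  fun S hS ↦ (h S hS).trans (card_le_card (extNeighbors_mono hΓ hW S))

variable [Fintype V]

lemma exists_rotationEnds_consecutive (hl : LongestForcedPath Γ X u v l) {z : V}
    (hz : z ∈ extNeighbors Γ (X \ {u, v}) (rotationEnds Γ u v l)) :
    ∃ r ∈ rotationEnds Γ u v l, Consecutive l z r := by
  simp only [mem_extNeighbors, mem_sdiff, mem_insert, mem_singleton, not_or] at hz
  obtain ⟨⟨hzX, hzu, hzv⟩, hzR, y, hyR, hyz⟩ := hz
  obtain ⟨l', hl', hy⟩ := mem_rotationEnds.1 hyR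
  obtain ⟨s, t, rfl⟩ := List.append_of_mem ((hl.of_rotations hl').1.mem_of_adj_getLast? hy hzX hyz)
  obtain ⟨w, t, rfl⟩ : ∃ w t', t = w :: t' := by
    refine List.exists_cons_of_ne_nil ?_
    rintro rfl
    obtain rfl : z = y := by simpa using hy
    exact hyz.ne rfl
  have hrot : IsRotation Γ u v (s ++ z :: w :: t) (s ++ [z] ++ (w :: t).reverse) :=
    ⟨s ++ [z], w :: t, z, y, by simp, by simp, by simpa using hy, hyz, hzu, hzv, rfl⟩
  have hwR : w ∈ rotationEnds Γ u v l := mem_rotationEnds.2 ⟨_, hl'.tail hrot, by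
    rw [List.reverse_cons, ← List.append_assoc, List.getLast?_concat]⟩
  by_contra! hcon
  exact hcon w hwR (consecutive_of_rotations hl' hzR hcon (Or.inl ⟨s, t, by simp⟩))

lemma card_filter_exists_pair_infix_left (hl : l.Nodup) (R : Finset V) :
    #{z | ∃ r ∈ R, [r, z] <:+: l} ≤ #R :=
  card_le_card_of_forall_subsingleton (fun z r ↦ [r, z] <:+: l) (by simp)
    fun _ _ _ hz _ hz' ↦ pair_infix_right_unique hl hz.2 hz'.2

lemma card_filter_exists_pair_infix_right (hl : l.Nodup) (R : Finset V) :
    #{z | ∃ r ∈ R, [z, r] <:+: l} ≤ #R :=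
  card_le_card_of_forall_subsingleton (fun z r ↦ [z, r] <:+: l) (by simp)
    fun _ _ _ hz _ hz' ↦ pair_infix_left_unique hl hz.2 hz'.2

/-- The last vertex of `l` has no successor, which gains the strict inequality. -/
lemma card_extNeighbors_rotationEnds_lt (hl : LongestForcedPath Γ X u v l) :
    #(extNeighbors Γ (X \ {u, v}) (rotationEnds Γ u v l)) < 2 * #(rotationEnds Γ u v l) := by
  set R := rotationEnds Γ u v l
  have hlast := List.getLast?_eq_some_getLast hl.ne_nil
  set y := l.getLast hl.ne_nil
  have hyR : y ∈ R := mem_rotationEnds.2 ⟨l, .refl, hlast⟩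
  have hsub : extNeighbors Γ (X \ {u, v}) R ⊆
      ({z | ∃ r ∈ R.erase y, [r, z] <:+: l} : Finset V) ∪
        ({z | ∃ r ∈ R, [z, r] <:+: l} : Finset V) := by
    intro z hz
    simp only [mem_union, mem_filter, mem_univ, true_and, mem_erase]
    obtain ⟨r, hr, hzr | hrz⟩ := exists_rotationEnds_consecutive hl hz
    · exact Or.inr ⟨r, hr, hzr⟩
    · refine Or.inl ⟨r, ⟨?_, hr⟩, hrz⟩
      rintro rfl
      exact getLast?_ne_of_pair_infix hl.nodup hrz hlast
  have hcard := (card_le_card hsub).trans (card_union_le _ _)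
  have hleft := card_filter_exists_pair_infix_left hl.nodup (R.erase y)
  have hright := card_filter_exists_pair_infix_right hl.nodup R
  have := card_erase_lt_of_mem hyR
  omega

lemma lt_card_rotationEnds {k : ℝ} (hΓ : Expands Γ (X \ {u, v}) k)
    (hl : LongestForcedPath Γ X u v l) : k < #(rotationEnds Γ u v l) := by
  by_contra! hk
  exact (hΓ _ hk).not_gt (card_extNeighbors_rotationEnds_lt hl)

end Posa

/-! ### Boosters -/

section Closing

variable {V : Type*} {Γ Γ' : SimpleGraph V} {X : Finset V} {u v y z : V} {l s t : List V}

/-- `Γ` has a path from `x` to `y` whose vertex set is exactly `X`. -/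
def HasHamiltonPathOn (Γ : SimpleGraph V) (X : Finset V) (x y : V) : Prop :=
  ∃ l : List V, l.Nodup ∧ (∀ w, w ∈ l ↔ w ∈ X) ∧ l.IsChain Γ.Adj ∧
    l.head? = some x ∧ l.getLast? = some y

lemma HasHamiltonPathOn.mono (h : HasHamiltonPathOn Γ X u v) (hle : Γ ≤ Γ') :
    HasHamiltonPathOn Γ' X u v := by
  obtain ⟨l, hnodup, hmem, hchain, hends⟩ := h
  exact ⟨l, hnodup, hmem, hchain.imp fun _ _ hab ↦ hle hab, hends⟩

lemma isChain_adj_of_notMem_left (h : l.IsChain (Γ ⊔ SimpleGraph.edge u v).Adj) (hu : u ∉ l) :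
    l.IsChain Γ.Adj := by
  refine h.imp_of_mem_imp fun a b ha hb hab ↦ ?_
  rw [SimpleGraph.sup_adj, SimpleGraph.edge_adj] at hab
  rcases hab with hab | ⟨⟨rfl, -⟩ | ⟨-, rfl⟩, -⟩
  exacts [hab, absurd ha hu, absurd hb hu]

lemma isChain_adj_of_notMem_right (h : l.IsChain (Γ ⊔ SimpleGraph.edge u v).Adj) (hv : v ∉ l) :
    l.IsChain Γ.Adj :=
  isChain_adj_of_notMem_left (SimpleGraph.edge_comm u v ▸ h) hv

lemma closes_reverse (hclose : ∀ z ∈ l.getLast?, ∀ y ∈ l.head?, Γ.Adj z y) :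
    ∀ z ∈ l.reverse.getLast?, ∀ y ∈ l.reverse.head?, Γ.Adj z y := by
  intro z hz y hy
  exact (hclose y (by simpa using hy) z (by simpa using hz)).symm

lemma hasHamiltonPathOn_of_pair_infix (hl : ForcedPath Γ X u v l) (hX : ∀ x, x ∈ l ↔ x ∈ X)
    (huv : [u, v] <:+: l) (hclose : ∀ z ∈ l.getLast?, ∀ y ∈ l.head?, Γ.Adj z y) :
    HasHamiltonPathOn Γ X v u := by
  obtain ⟨s, t, rfl⟩ : ∃ s t, l = (s ++ [u]) ++ (v :: t) := by
    obtain ⟨s, t, rfl⟩ := huv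
    exact ⟨s, t, by simp⟩
  have hperm : ((v :: t) ++ (s ++ [u])).Perm ((s ++ [u]) ++ (v :: t)) := List.perm_append_comm
  have hdisj := (List.nodup_append.1 (hperm.nodup_iff.2 hl.nodup)).2.2
  obtain ⟨hs, ht, -⟩ := List.isChain_append.1 hl.isChain
  have hs' := isChain_adj_of_notMem_right hs fun hv ↦ hdisj v (by simp) v hv rfl
  have ht' := isChain_adj_of_notMem_left ht fun hu ↦ hdisj u hu u (by simp) rfl
  refine ⟨(v :: t) ++ (s ++ [u]), hperm.nodup_iff.2 hl.nodup, fun x ↦ hperm.mem_iff.trans (hX x),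
    isChain_append_swap hs' ht' hclose, by simp, ?_⟩
  rw [← List.append_assoc, List.getLast?_concat]

lemma ForcedPath.hasHamiltonPathOn (hl : ForcedPath Γ X u v l) (hX : ∀ x, x ∈ l ↔ x ∈ X)
    (hclose : ∀ z ∈ l.getLast?, ∀ y ∈ l.head?, Γ.Adj z y) : HasHamiltonPathOn Γ X v u := by
  rcases hl.consecutive with huv | hvu
  · exact hasHamiltonPathOn_of_pair_infix hl hX huv hclose
  · exact hasHamiltonPathOn_of_pair_infix hl.reverse (by simpa using hX)
      (pair_infix_reverse_iff.2 hvu) (closes_reverse hclose)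

lemma ForcedPath.append_swap (hl : ForcedPath Γ X u v (s ++ t))
    (hclose : ∀ a ∈ (s ++ t).getLast?, ∀ b ∈ (s ++ t).head?, Γ.Adj a b)
    (huv : Consecutive (t ++ s) u v) : ForcedPath Γ X u v (t ++ s) where
  nodup := List.perm_append_comm.nodup_iff.2 hl.nodup
  mem x hx := hl.mem x (List.perm_append_comm.mem_iff.1 hx)
  isChain := isChain_append_swap (List.isChain_append.1 hl.isChain).1
    (List.isChain_append.1 hl.isChain).2.1 fun a ha b hb ↦ Or.inl (hclose a ha b hb)
  consecutive := huv

/-- Closing `s ++ c :: t` to a cycle, one can start at `c` in either direction; the two resulting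
paths omit different edges of the cycle. -/
lemma Consecutive.append_swap_or {c : V} (h : Consecutive (s ++ c :: t) u v) :
    Consecutive (c :: t ++ s) u v ∨ Consecutive (c :: s.reverse ++ t.reverse) u v := by
  simp only [Consecutive, pair_infix_append_iff, pair_infix_cons_iff, pair_infix_reverse_iff,
    List.head?_reverse, List.head?_cons, Option.some.injEq] at h ⊢
  tauto

lemma ForcedPath.exists_perm_head?_eq (hl : ForcedPath Γ X u v l)
    (hclose : ∀ z ∈ l.getLast?, ∀ y ∈ l.head?, Γ.Adj z y) {c : V} (hc : c ∈ l) :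
    ∃ l', ForcedPath Γ X u v l' ∧ l'.Perm l ∧ l'.head? = some c := by
  obtain ⟨s, t, rfl⟩ := List.append_of_mem hc
  rcases hl.consecutive.append_swap_or with huv | huv
  · exact ⟨c :: t ++ s, hl.append_swap hclose huv, List.perm_append_comm, by simp⟩
  · have hrev : (s ++ c :: t).reverse = t.reverse ++ c :: s.reverse := by simp
    exact ⟨c :: s.reverse ++ t.reverse,
      (hrev ▸ hl.reverse).append_swap (hrev ▸ closes_reverse hclose) huv,
      List.perm_append_comm.trans (hrev ▸ List.reverse_perm _), by simp⟩

/-- The pair of ends of some longest forced path. -/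
def AreLongestEnds (Γ : SimpleGraph V) (X : Finset V) (u v y z : V) : Prop :=
  ∃ l, LongestForcedPath Γ X u v l ∧ l.head? = some y ∧ l.getLast? = some z

lemma AreLongestEnds.ne (h : AreLongestEnds Γ X u v y z) : y ≠ z := by
  obtain ⟨l, hl, hy, hz⟩ := h
  rintro rfl
  have hlength : 2 ≤ l.length := by
    rcases hl.consecutive with huv | hvu
    exacts [huv.length_le, hvu.length_le]
  match l, hl.nodup, hy with
  | a :: b :: t, hnodup, hy =>
    obtain rfl : a = y := by simpa using hy
    exact (List.nodup_cons.1 hnodup).1 (List.mem_of_getLast? (by simpa using hz))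

lemma ncard_edgeSet_sup_edge_le [Finite V] (Γ : SimpleGraph V) (y z : V) :
    (Γ ⊔ SimpleGraph.edge y z).edgeSet.ncard ≤ Γ.edgeSet.ncard + 1 := by
  have hsub : (SimpleGraph.edge y z).edgeSet ⊆ {s(y, z)} := by
    rw [SimpleGraph.edge, SimpleGraph.edgeSet_fromEdgeSet]
    exact Set.sdiff_subset
  rw [SimpleGraph.edgeSet_sup]
  calc (Γ.edgeSet ∪ (SimpleGraph.edge y z).edgeSet).ncard
      ≤ (Γ.edgeSet ∪ {s(y, z)}).ncard := Set.ncard_le_ncard (Set.union_subset_union_right _ hsub)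
    _ ≤ Γ.edgeSet.ncard + 1 := by simpa using Set.ncard_union_le Γ.edgeSet {s(y, z)}

end Closing

section Boosters

variable {V : Type*} [DecidableEq V] {Γ Γ' G : SimpleGraph V} {X : Finset V} {u v y z : V}
  {l : List V} {k : ℝ}

/-- The conditions on `Γ`, `X` and the prescribed edge `uv` under which rotations produce
many boosters: expansion into `X \ {u, v}` and connectivity of `Γ` on `X`. -/
structure ForcedExpander (Γ : SimpleGraph V) (X : Finset V) (u v : V) (k : ℝ) : Prop where
  expands : Expands Γ (X \ {u, v}) k
  connected : ∀ Y ⊂ X, Y.Nonempty → (extNeighbors Γ X Y).Nonempty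
  left_mem : u ∈ X
  right_mem : v ∈ X
  ne : u ≠ v

lemma ForcedExpander.mono (h : ForcedExpander Γ X u v k) (hle : Γ ≤ Γ') :
    ForcedExpander Γ' X u v k where
  __ := h
  expands := h.expands.mono hle subset_rfl
  connected Y hY hne := (h.connected Y hY hne).mono (extNeighbors_mono hle subset_rfl Y)

lemma ForcedExpander.exists_longestForcedPath [Finite V] (h : ForcedExpander Γ X u v k) :
    ∃ l, LongestForcedPath Γ X u v l :=
  _root_.exists_longestForcedPath (forcedPath_pair h.ne h.left_mem h.right_mem)

/-- A closed path that misses part of `X` can be reopened next to an edge leaving it. -/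
lemma ForcedExpander.hasHamiltonPathOn_or_exists_longer (h : ForcedExpander Γ X u v k)
    (hl : ForcedPath Γ X u v l) (hclose : ∀ z ∈ l.getLast?, ∀ y ∈ l.head?, Γ.Adj z y) :
    HasHamiltonPathOn Γ X v u ∨ ∃ l', ForcedPath Γ X u v l' ∧ l.length < l'.length := by
  have hlX : l.toFinset ⊆ X := fun x hx ↦ hl.mem x (List.mem_toFinset.1 hx)
  rcases hlX.eq_or_ssubset with hcover | hmiss
  · exact Or.inl (hl.hasHamiltonPathOn (by simp [← hcover]) hclose)
  · obtain ⟨w, hw⟩ := h.connected _ hmiss ((List.toFinset_nonempty_iff l).2 hl.ne_nil)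
    simp only [mem_extNeighbors, List.mem_toFinset] at hw
    obtain ⟨hwX, hwl, c, hcl, hcw⟩ := hw
    obtain ⟨l', hl', hperm, hhead⟩ := hl.exists_perm_head?_eq hclose hcl
    refine Or.inr ⟨w :: l', hl'.cons hhead hwX (mt hperm.mem_iff.1 hwl) hcw.symm, ?_⟩
    simp [hperm.length_eq]

lemma card_le_two_mul_card_image_mk (s : Finset (V × V)) :
    #s ≤ 2 * #(s.image fun x ↦ s(x.1, x.2)) := by
  refine card_le_mul_card_image s 2 fun e _ ↦ ?_
  induction e with | h a b =>
  refine (card_le_card (t := {(a, b), (b, a)}) ?_).trans card_le_two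
  rintro ⟨c, d⟩ hcd
  simpa using (mem_filter.1 hcd).2

lemma AreLongestEnds.hasHamiltonPathOn_sup_edge_or_exists_longer (h : ForcedExpander Γ X u v k)
    (hyz : AreLongestEnds Γ X u v y z) (hl : ForcedPath Γ X u v l) :
    HasHamiltonPathOn (Γ ⊔ SimpleGraph.edge y z) X v u ∨
      ∃ l', ForcedPath (Γ ⊔ SimpleGraph.edge y z) X u v l' ∧ l.length < l'.length := by
  have hadj : (Γ ⊔ SimpleGraph.edge y z).Adj z y := by simp [SimpleGraph.edge_adj, hyz.ne.symm]
  obtain ⟨l₀, hl₀, hy, hz⟩ := hyz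
  refine ((h.mono le_sup_left).hasHamiltonPathOn_or_exists_longer
    (hl₀.toForcedPath.mono le_sup_left) (by simpa [hy, hz] using hadj)).imp_right ?_
  rintro ⟨l', hl', hlt⟩
  exact ⟨l', hl', (hl₀.length_le l hl).trans_lt hlt⟩

variable [Fintype V]

/-- The pairs whose addition to `Γ` creates a Hamilton path on `X` from `v` to `u` or lengthens
the longest forced path. -/
noncomputable def boosters (Γ : SimpleGraph V) (X : Finset V) (u v : V) : Finset (Sym2 V) :=
  ({x | AreLongestEnds Γ X u v x.1 x.2} : Finset (V × V)).image fun x ↦ s(x.1, x.2)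

lemma mem_boosters {e : Sym2 V} :
    e ∈ boosters Γ X u v ↔ ∃ y z, AreLongestEnds Γ X u v y z ∧ s(y, z) = e := by
  simp [boosters]

lemma le_card_filter_areLongestEnds (h : ForcedExpander Γ X u v k)
    (hl : LongestForcedPath Γ X u v l) (hy : l.head? = some y) :
    k ≤ #{z | AreLongestEnds Γ X u v y z} := by
  refine (lt_card_rotationEnds h.expands hl).le.trans ?_
  gcongr
  intro z hz
  obtain ⟨l', hrot, hz⟩ := mem_rotationEnds.1 hz
  obtain ⟨hl', hhead⟩ := hl.of_rotations hrot
  exact mem_filter.2 ⟨mem_univ z, l', hl', hhead.trans hy, hz⟩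

lemma sq_le_card_filter_areLongestEnds (h : ForcedExpander Γ X u v k) (hk : 0 ≤ k) :
    k ^ 2 ≤ #({x | AreLongestEnds Γ X u v x.1 x.2} : Finset (V × V)) := by
  obtain ⟨l, hl⟩ := h.exists_longestForcedPath
  have hfibre (y : V) (hy : y ∈ rotationEnds Γ u v l) :
      k ≤ #{z | AreLongestEnds Γ X u v y z} := by
    obtain ⟨l', hrot, hy⟩ := mem_rotationEnds.1 hy
    exact le_card_filter_areLongestEnds h (hl.of_rotations hrot).1.reverse (by simpa using hy)
  calc k ^ 2 = k * k := sq k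
    _ ≤ #(rotationEnds Γ u v l) * k := by gcongr; exact (lt_card_rotationEnds h.expands hl).le
    _ = ∑ _y ∈ rotationEnds Γ u v l, k := by rw [sum_const, nsmul_eq_mul]
    _ ≤ ∑ y ∈ rotationEnds Γ u v l, (#{z | AreLongestEnds Γ X u v y z} : ℝ) := sum_le_sum hfibre
    _ ≤ ∑ y, (#{z | AreLongestEnds Γ X u v y z} : ℝ) :=
        sum_le_sum_of_subset_of_nonneg (subset_univ _) fun _ _ _ ↦ by positivity
    _ = #({x | AreLongestEnds Γ X u v x.1 x.2} : Finset (V × V)) := by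
        simp only [card_filter, Fintype.sum_prod_type, Nat.cast_sum]

lemma sq_div_two_le_card_boosters (h : ForcedExpander Γ X u v k) (hk : 0 ≤ k) :
    k ^ 2 / 2 ≤ #(boosters Γ X u v) := by
  have hpairs := sq_le_card_filter_areLongestEnds h hk
  have hunordered : (#({x | AreLongestEnds Γ X u v x.1 x.2} : Finset (V × V)) : ℝ) ≤
      2 * #(boosters Γ X u v) := mod_cast card_le_two_mul_card_image_mk _
  linarith

lemma ForcedExpander.notMem_edgeSet_of_mem_boosters (h : ForcedExpander Γ X u v k)
    (hham : ¬ HasHamiltonPathOn Γ X v u) {e : Sym2 V} (he : e ∈ boosters Γ X u v) :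
    e ∉ Γ.edgeSet := by
  intro heΓ
  obtain ⟨y, z, ⟨l, hl, hy, hz⟩, rfl⟩ := mem_boosters.1 he
  have hzy : Γ.Adj z y := (Γ.mem_edgeSet.1 heΓ).symm
  rcases h.hasHamiltonPathOn_or_exists_longer hl.toForcedPath (by simpa [hy, hz] using hzy) with
    h' | ⟨l', hl', hlt⟩
  · exact hham h'
  · exact (hl.length_le l' hl').not_gt hlt

lemma ForcedExpander.exists_hasHamiltonPathOn_or_le_length {Γ₀ : SimpleGraph V} {m N : ℕ}
    (h : ForcedExpander Γ₀ X u v k) (hle : Γ₀ ≤ G) (hm : Γ₀.edgeSet.ncard ≤ m)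
    (hboost : ∀ Γ, Γ₀ ≤ Γ → Γ ≤ G → Γ.edgeSet.ncard ≤ m + N → ¬ HasHamiltonPathOn Γ X v u →
      ∃ e ∈ boosters Γ X u v, e ∈ G.edgeSet) {i : ℕ} (hi : i ≤ N) :
    ∃ Γ, Γ₀ ≤ Γ ∧ Γ ≤ G ∧ Γ.edgeSet.ncard ≤ m + i ∧
      (HasHamiltonPathOn Γ X v u ∨ ∃ l, ForcedPath Γ X u v l ∧ i ≤ l.length) := by
  induction i with
  | zero =>
    exact ⟨Γ₀, le_rfl, hle, hm, Or.inr ⟨_, forcedPath_pair h.ne h.left_mem h.right_mem, by simp⟩⟩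
  | succ i ih =>
    obtain ⟨Γ, hΓ₀, hΓG, hΓm, hΓ⟩ := ih (by omega)
    by_cases hham : HasHamiltonPathOn Γ X v u
    · exact ⟨Γ, hΓ₀, hΓG, by omega, Or.inl hham⟩
    obtain ⟨l, hl, hil⟩ := hΓ.resolve_left hham
    obtain ⟨e, he, heG⟩ := hboost Γ hΓ₀ hΓG (by omega) hham
    obtain ⟨y, z, hyz, rfl⟩ := mem_boosters.1 he
    refine ⟨Γ ⊔ SimpleGraph.edge y z, hΓ₀.trans le_sup_left,
      sup_le hΓG (G.edge_le_iff.2 (Or.inr heG)), ?_, ?_⟩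
    · have := ncard_edgeSet_sup_edge_le Γ y z
      omega
    · refine (hyz.hasHamiltonPathOn_sup_edge_or_exists_longer (h.mono hΓ₀) hl).imp_right ?_
      rintro ⟨l', hl', hlt⟩
      exact ⟨l', hl', by omega⟩

lemma ForcedExpander.hasHamiltonPathOn_of_boosters {Γ₀ : SimpleGraph V} {m : ℕ}
    (h : ForcedExpander Γ₀ X u v k) (hle : Γ₀ ≤ G) (hm : Γ₀.edgeSet.ncard ≤ m)
    (hboost : ∀ Γ, Γ₀ ≤ Γ → Γ ≤ G → Γ.edgeSet.ncard ≤ m + (Fintype.card V + 1) →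
      ¬ HasHamiltonPathOn Γ X v u → ∃ e ∈ boosters Γ X u v, e ∈ G.edgeSet) :
    HasHamiltonPathOn G X v u := by
  obtain ⟨Γ, -, hΓG, -, hham | ⟨l, hl, hlong⟩⟩ :=
    h.exists_hasHamiltonPathOn_or_le_length hle hm hboost le_rfl
  · exact hham.mono hΓG
  · have := hl.nodup.length_le_card
    omega

end Boosters

/-! ### Closing a path to a Hamilton cycle -/

section HamiltonCycles

variable {V : Type*} {G : SimpleGraph V} {X W : Finset V} {u v w : V}

/-- Any two vertices outside `W` are joined by a Hamilton path on every set containing both of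
them and `W`; moreover some edge of `G` avoids `W`. The set `V*` of the theorem is of this kind. -/
structure IsReservoir (G : SimpleGraph V) (W : Finset V) : Prop where
  hasHamiltonPathOn : ∀ X : Finset V, W ⊆ X → ∀ u ∈ X, ∀ v ∈ X, u ∉ W → v ∉ W → u ≠ v →
    HasHamiltonPathOn G X v u
  exists_adj : ∃ a ∉ W, ∃ b ∉ W, G.Adj a b

lemma IsReservoir.mono {H : SimpleGraph V} (h : IsReservoir H W) (hle : H ≤ G) :
    IsReservoir G W where
  hasHamiltonPathOn X hX u hu v hv huW hvW huv :=
    (h.hasHamiltonPathOn X hX u hu v hv huW hvW huv).mono hle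
  exists_adj := by
    obtain ⟨a, ha, b, hb, hab⟩ := h.exists_adj
    exact ⟨a, ha, b, hb, hle hab⟩

lemma HasHamiltonPathOn.exists_isPath (h : HasHamiltonPathOn G X u v) :
    ∃ Q : G.Walk u v, Q.IsPath ∧ ∀ x, x ∈ Q.support ↔ x ∈ X := by
  obtain ⟨l, hnodup, hmem, hchain, hhead, hlast⟩ := h
  have hne : l ≠ [] := by rintro rfl; simp at hhead
  rw [List.head?_eq_some_head hne, Option.some.injEq] at hhead
  rw [List.getLast?_eq_some_getLast hne, Option.some.injEq] at hlast
  refine ⟨(SimpleGraph.Walk.ofSupport l hne hchain).copy hhead hlast, ?_, ?_⟩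
  · simpa [SimpleGraph.Walk.isPath_def] using hnodup
  · simpa using hmem

variable [DecidableEq V]

lemma isHamiltonian_append {P : G.Walk u v} {Q : G.Walk v w} (hP : P.IsPath) (hQ : Q.IsPath)
    (hdisj : ∀ x ∈ P.support, x ∈ Q.support → x = v)
    (hcover : ∀ x, x ∈ P.support ∨ x ∈ Q.support) : (P.append Q).IsHamiltonian := by
  have hQnodup := hQ.support_nodup
  rw [← Q.cons_tail_support, List.nodup_cons] at hQnodup
  have hpath : (P.append Q).IsPath := by
    rw [SimpleGraph.Walk.isPath_def, SimpleGraph.Walk.support_append, List.nodup_append]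
    refine ⟨hP.support_nodup, hQnodup.2, ?_⟩
    rintro a ha b hb rfl
    exact hQnodup.1 (hdisj a ha (List.mem_of_mem_tail hb) ▸ hb)
  refine fun x ↦ List.count_eq_one_of_mem hpath.support_nodup ?_
  exact (SimpleGraph.Walk.mem_support_append_iff P Q).2 (hcover x)

variable [Fintype V]

lemma isHamiltonianCycle_cons (hcard : 3 ≤ Fintype.card V) {Q : G.Walk v u} (huv : G.Adj u v)
    (hQ : Q.IsHamiltonian) : (SimpleGraph.Walk.cons huv Q).IsHamiltonianCycle := by
  have hlength := hQ.length_eq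
  rw [SimpleGraph.Walk.isHamiltonianCycle_iff_isCycle_and_length_eq,
    SimpleGraph.Walk.cons_isCycle_iff]
  refine ⟨⟨hQ.isPath, fun he ↦ ?_⟩, ?_⟩
  · have := hQ.isPath.length_eq_one_of_mem_edges (Sym2.eq_swap ▸ he)
    omega
  · rw [SimpleGraph.Walk.length_cons]
    omega

lemma IsReservoir.exists_isHamiltonianCycle_of_ne (hW : IsReservoir G W)
    (hcard : 3 ≤ Fintype.card V) (huv : u ≠ v) {P : G.Walk u v} (hP : P.IsPath)
    (hPW : ∀ x ∈ P.support, x ∉ W) :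
    ∃ (x : V) (C : G.Walk x x), C.IsHamiltonianCycle ∧ ∀ e ∈ P.edges, e ∈ C.edges := by
  cases P with
  | nil => exact absurd rfl huv
  | @cons _ w _ huw P =>
    set X : Finset V := {x | x ∉ (SimpleGraph.Walk.cons huw P).support ∨ x = u ∨ x = v}
    have hX (x : V) : x ∈ X ↔ x ∉ (SimpleGraph.Walk.cons huw P).support ∨ x = u ∨ x = v := by
      simp [X]
    have hWX : W ⊆ X := fun x hx ↦ (hX x).2 (Or.inl fun hxP ↦ hPW x hxP hx)
    obtain ⟨Q, hQ, hQX⟩ := (hW.hasHamiltonPathOn X hWX u (by simp [hX]) v (by simp [hX])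
      (hPW u (by simp)) (hPW v (by simp)) huv).exists_isPath
    obtain ⟨hP, huP⟩ := (SimpleGraph.Walk.cons_isPath_iff huw P).1 hP
    have hdisj (x : V) (hxP : x ∈ P.support) (hxQ : x ∈ Q.support) : x = v := by
      rcases (hX x).1 ((hQX x).1 hxQ) with hx | rfl | hx
      exacts [absurd (by simp [hxP]) hx, absurd hxP huP, hx]
    have hcover (x : V) : x ∈ P.support ∨ x ∈ Q.support := by
      rw [hQX, hX, SimpleGraph.Walk.support_cons, List.mem_cons]
      tauto
    refine ⟨u, _, isHamiltonianCycle_cons hcard huw (isHamiltonian_append hP hQ hdisj hcover), ?_⟩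
    intro e he
    simp only [SimpleGraph.Walk.edges_cons, SimpleGraph.Walk.edges_append, List.mem_cons,
      List.mem_append] at he ⊢
    tauto

lemma IsReservoir.exists_isHamiltonianCycle (hW : IsReservoir G W) (hcard : 3 ≤ Fintype.card V)
    {P : G.Walk u v} (hP : P.IsPath) (hPW : ∀ x ∈ P.support, x ∉ W) :
    ∃ (x : V) (C : G.Walk x x), C.IsHamiltonianCycle ∧ ∀ e ∈ P.edges, e ∈ C.edges := by
  by_cases huv : u = v
  · subst huv
    obtain rfl : P = SimpleGraph.Walk.nil := by simpa using hP
    obtain ⟨a, ha, b, hb, hab⟩ := hW.exists_adj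
    obtain ⟨x, C, hC, -⟩ := hW.exists_isHamiltonianCycle_of_ne hcard hab.ne
      (P := SimpleGraph.Walk.cons hab SimpleGraph.Walk.nil) (by simp [hab.ne]) (by simp [ha, hb])
    exact ⟨x, C, hC, by simp⟩
  · exact hW.exists_isHamiltonianCycle_of_ne hcard huv hP hPW

end HamiltonCycles

/-! ### Reservoirs from sparse expanding subgraphs -/

section Assembly

variable {V : Type*} {G Γ : SimpleGraph V} {W X : Finset V} {u v : V} {k : ℝ}

/-- Any two disjoint sets of more than `k` vertices are joined by an edge. -/
def LargeSetsJoined (Γ : SimpleGraph V) (k : ℝ) : Prop :=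
  ∀ A B : Finset V, Disjoint A B → k < #A → k < #B → ∃ a ∈ A, ∃ b ∈ B, Γ.Adj a b

lemma LargeSetsJoined.mono (h : LargeSetsJoined Γ k) (hle : Γ ≤ G) : LargeSetsJoined G k := by
  intro A B hAB hA hB
  obtain ⟨a, ha, b, hb, hab⟩ := h A B hAB hA hB
  exact ⟨a, ha, b, hb, hle hab⟩

lemma LargeSetsJoined.exists_adj (h : LargeSetsJoined Γ k) (hk : 0 ≤ k) {U : Finset V}
    (hU : 2 * k + 2 ≤ #U) : ∃ a ∈ U, ∃ b ∈ U, Γ.Adj a b := by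
  have hfloor := Nat.floor_le hk
  obtain ⟨A, hAU, hA⟩ := exists_subset_card_eq (s := U) (n := ⌊k⌋₊ + 1) (by
    have : ((⌊k⌋₊ + 1 : ℕ) : ℝ) ≤ #U := by push_cast; linarith
    exact_mod_cast this)
  have hAcard : (#A : ℝ) = ⌊k⌋₊ + 1 := mod_cast hA
  have hUA : (#(U \ A) : ℝ) + #A = #U := mod_cast card_sdiff_add_card_eq_card hAU
  obtain ⟨a, ha, b, hb, hab⟩ := h A (U \ A) disjoint_sdiff
    (hAcard ▸ Nat.lt_floor_add_one k) (by linarith)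
  exact ⟨a, hAU ha, b, (mem_sdiff.1 hb).1, hab⟩

variable [DecidableEq V]

lemma Expands.extNeighbors_nonempty (h : Expands Γ W k) {Y : Finset V} (hY : Y.Nonempty)
    (hYk : #Y ≤ k) : (extNeighbors Γ W Y).Nonempty := by
  have := h Y hYk
  have := hY.card_pos
  exact card_pos.1 (by omega)

lemma Expands.extNeighbors_nonempty_of_joined (h : Expands Γ W k) (hjoined : LargeSetsJoined Γ k)
    (hWX : W ⊆ X) {Y : Finset V} (hYX : Y ⊂ X) (hY : Y.Nonempty) :
    (extNeighbors Γ X Y).Nonempty := by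
  by_cases hYk : #Y ≤ k
  · exact (h.extNeighbors_nonempty hY hYk).mono (extNeighbors_mono le_rfl hWX Y)
  by_cases hXYk : #(X \ Y) ≤ k
  · obtain ⟨w, hw⟩ := h.extNeighbors_nonempty (sdiff_nonempty.2 hYX.not_subset) hXYk
    simp only [mem_extNeighbors, mem_sdiff, not_and, not_not] at hw
    obtain ⟨hwW, hwY, c, ⟨hcX, hcY⟩, hcw⟩ := hw
    exact ⟨c, mem_extNeighbors.2 ⟨hcX, hcY, w, hwY (hWX hwW), hcw.symm⟩⟩
  · obtain ⟨a, ha, b, hb, hab⟩ := hjoined Y (X \ Y) disjoint_sdiff (not_le.1 hYk) (not_le.1 hXYk)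
    obtain ⟨hbX, hbY⟩ := mem_sdiff.1 hb
    exact ⟨b, mem_extNeighbors.2 ⟨hbX, hbY, a, ha, hab⟩⟩

lemma Expands.forcedExpander (h : Expands Γ W k) (hjoined : LargeSetsJoined Γ k) (hWX : W ⊆ X)
    (hu : u ∈ X) (hv : v ∈ X) (huW : u ∉ W) (hvW : v ∉ W) (huv : u ≠ v) :
    ForcedExpander Γ X u v k where
  expands := h.mono le_rfl fun w hw ↦ by
    simp only [mem_sdiff, mem_insert, mem_singleton, not_or]
    exact ⟨hWX hw, ne_of_mem_of_not_mem hw huW, ne_of_mem_of_not_mem hw hvW⟩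
  connected _ := h.extNeighbors_nonempty_of_joined hjoined hWX
  left_mem := hu
  right_mem := hv
  ne := huv

variable [Fintype V]

/-- Whenever a subgraph of `G` with at most `M` edges has many boosters, all outside the subgraph,
then one of them is an edge of `G`. -/
def HitsBoosters (G : SimpleGraph V) (M : ℕ) (k : ℝ) : Prop :=
  ∀ (Γ : SimpleGraph V) (X : Finset V) (u v : V), Γ ≤ G → Γ.edgeSet.ncard ≤ M →
    k ^ 2 / 2 ≤ #(boosters Γ X u v) → (∀ e ∈ boosters Γ X u v, e ∉ Γ.edgeSet) →
    ∃ e ∈ boosters Γ X u v, e ∈ G.edgeSet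

lemma Expands.isReservoir {M : ℕ} (h : Expands Γ W k) (hjoined : LargeSetsJoined Γ k) (hk : 0 ≤ k)
    (hle : Γ ≤ G) (hM : Γ.edgeSet.ncard + (Fintype.card V + 1) ≤ M) (hboost : HitsBoosters G M k)
    (hW : 2 * k + 2 ≤ #Wᶜ) : IsReservoir G W where
  hasHamiltonPathOn X hWX u hu v hv huW hvW huv := by
    have hexp := h.forcedExpander hjoined hWX hu hv huW hvW huv
    refine hexp.hasHamiltonPathOn_of_boosters hle le_rfl fun Γ' hΓ hΓG hcard hham ↦ ?_
    exact hboost Γ' X u v hΓG (hcard.trans hM) (sq_div_two_le_card_boosters (hexp.mono hΓ) hk)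
      fun _ ↦ (hexp.mono hΓ).notMem_edgeSet_of_mem_boosters hham
  exists_adj := by
    obtain ⟨a, ha, b, hb, hab⟩ := hjoined.exists_adj hk hW
    exact ⟨a, mem_compl.1 ha, b, mem_compl.1 hb, hle hab⟩

end Assembly

/-! ### Expansion of small sets -/

section SmallVertices

variable {V : Type*} {G : SimpleGraph V} {u v w : V}

lemma card_edges_toFinset_le_edgeCount [DecidableEq V] (p : G.Walk u v) :
    #p.edges.toFinset ≤ edgeCount G (pairsIn p.support.toFinset) := by
  refine card_le_card fun e he ↦ ?_
  rw [List.mem_toFinset] at he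
  induction e with | h a b =>
  have hab := p.adj_of_mem_edges he
  simp [mk_mem_pairsIn, hab.ne, hab, p.fst_mem_support_of_mem_edges he,
    p.snd_mem_support_of_mem_edges he]

variable [Fintype V]

/-- Vertices of low degree. The threshold is `30 = 2 * 3 * 5`, where `3` is the density bound of
`LocallySparse` and `5` the factor by which sets are enlarged when it is applied. -/
def IsSmall (G : SimpleGraph V) (v : V) : Prop := G.degree v < 30

/-- `w` is small or has a small neighbour. -/
def NearSmall (G : SimpleGraph V) (w : V) : Prop := ∃ z, IsSmall G z ∧ (z = w ∨ G.Adj z w)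

lemma exists_walk_of_nearSmall {w : V} (hw : NearSmall G w) (hvw : G.Adj v w) :
    ∃ z, IsSmall G z ∧ (z = w ∨ G.Adj z w) ∧ ∃ p : G.Walk z v, p.length ≤ 2 := by
  obtain ⟨z, hz, rfl | hzw⟩ := hw
  · exact ⟨z, hz, Or.inl rfl, hvw.symm.toWalk, by simp⟩
  · exact ⟨z, hz, Or.inr hzw, .cons hzw hvw.symm.toWalk, by simp⟩

variable [DecidableEq V]

/-- At most five vertices, of which one or two are selected small ones, span at most as many edges
as there are unselected vertices among them. -/
def SparseNearSmall (G : SimpleGraph V) : Prop :=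
  ∀ T J : Finset V, #T ≤ 5 → J ⊆ T → J.Nonempty → #J ≤ 2 → (∀ j ∈ J, IsSmall G j) →
    edgeCount G (pairsIn T) + #J ≤ #T

namespace SparseNearSmall

lemma four_lt_length (h : SparseNearSmall G) (hu : IsSmall G u) (hv : IsSmall G v) (huv : u ≠ v)
    (p : G.Walk u v) : 4 < p.length := by
  by_contra! hp
  have hlength := p.length_bypass_le_length
  have hsupport : #p.bypass.support.toFinset = p.bypass.length + 1 := by
    rw [List.toFinset_card_of_nodup p.bypass_isPath.support_nodup, p.bypass.length_support]
  have hedges : #p.bypass.edges.toFinset = p.bypass.length := by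
    rw [List.toFinset_card_of_nodup p.bypass_isPath.isTrail.edges_nodup, p.bypass.length_edges]
  have hsparse := h p.bypass.support.toFinset {u, v} (by omega) (by simp [insert_subset_iff])
    (by simp) card_le_two (by simp [hu, hv])
  have := card_edges_toFinset_le_edgeCount p.bypass
  rw [card_pair huv] at hsparse
  omega

lemma five_lt_length_of_isCycle (h : SparseNearSmall G) (hv : IsSmall G v) {p : G.Walk v v}
    (hp : p.IsCycle) : 5 < p.length := by
  by_contra! hlength
  have hsupport : #p.support.toFinset ≤ p.length := by
    rw [← p.cons_tail_support, List.toFinset_cons,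
      insert_eq_of_mem (List.mem_toFinset.2 (p.end_mem_tail_support hp.not_nil)),
      List.toFinset_card_of_nodup hp.support_nodup, List.length_tail, p.length_support]
    simp
  have hedges : #p.edges.toFinset = p.length := by
    rw [List.toFinset_card_of_nodup hp.isTrail.edges_nodup, p.length_edges]
  have hsparse := h p.support.toFinset {v} (by omega) (by simp) (by simp) (by simp) (by simp [hv])
  have := card_edges_toFinset_le_edgeCount p
  rw [card_singleton] at hsparse
  omega

lemma not_adj (h : SparseNearSmall G) (hu : IsSmall G u) (hv : IsSmall G v) : ¬ G.Adj u v := by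
  intro huv
  have := h.four_lt_length hu hv huv.ne huv.toWalk
  simp at this

lemma disjoint_neighborFinset (h : SparseNearSmall G) (hu : IsSmall G u) (hv : IsSmall G v)
    (huv : u ≠ v) : Disjoint (G.neighborFinset u) (G.neighborFinset v) := by
  rw [disjoint_left]
  intro w hw hw'
  rw [SimpleGraph.mem_neighborFinset] at hw hw'
  have := h.four_lt_length hu hv huv (.cons hw (.cons hw'.symm .nil))
  simp at this

lemma not_triangle (h : SparseNearSmall G) (hv : IsSmall G v) {a b : V} (hva : G.Adj v a)
    (hab : G.Adj a b) : ¬ G.Adj b v := by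
  intro hbv
  have := h.five_lt_length_of_isCycle hv (p := .cons hva (.cons hab (.cons hbv .nil))) (by
    simp [SimpleGraph.Walk.cons_isCycle_iff, hva.ne, hva.ne', hab.ne, hbv.ne, hbv.ne'])
  simp at this

lemma not_quadrilateral (h : SparseNearSmall G) (hv : IsSmall G v) {a b c : V} (hva : G.Adj v a)
    (hab : G.Adj a b) (hbc : G.Adj b c) (hvb : v ≠ b) (hac : a ≠ c) : ¬ G.Adj c v := by
  intro hcv
  have := h.five_lt_length_of_isCycle hv
    (p := .cons hva (.cons hab (.cons hbc (.cons hcv .nil)))) (by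
    simp [SimpleGraph.Walk.cons_isCycle_iff, hva.ne, hva.ne', hab.ne, hbc.ne, hcv.ne, hcv.ne',
      hvb.symm, hac, hvb])
  simp at this

lemma eq_of_nearSmall (h : SparseNearSmall G) (hv : ¬ IsSmall G v) {a b : V} (hva : G.Adj v a)
    (hvb : G.Adj v b) (ha : NearSmall G a) (hb : NearSmall G b) : a = b := by
  obtain ⟨y, hy, hya, p, hp⟩ := exists_walk_of_nearSmall ha hva
  obtain ⟨z, hz, hzb, q, hq⟩ := exists_walk_of_nearSmall hb hvb
  obtain rfl : y = z := by
    by_contra hyz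
    have := h.four_lt_length hy hz hyz (p.append q.reverse)
    simp only [SimpleGraph.Walk.length_append, SimpleGraph.Walk.length_reverse] at this
    omega
  have hyv : y ≠ v := by rintro rfl; exact hv hy
  by_contra hab
  rcases hya, hzb with ⟨rfl | hya, rfl | hyb⟩
  · exact hab rfl
  · exact h.not_triangle hy hyb hvb.symm hva
  · exact h.not_triangle hy hya hva.symm hvb
  · exact h.not_quadrilateral hy hya hva.symm hvb hyv hab hyb.symm

end SparseNearSmall

/-- Every nonempty set of at most `t` vertices has average degree less than `6`. -/
def LocallySparse (G : SimpleGraph V) (t : ℝ) : Prop :=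
  ∀ T : Finset V, T.Nonempty → #T ≤ t → edgeCount G (pairsIn T) < 3 * #T

end SmallVertices

section Stars

variable {V : Type*}

lemma card_sigma_le_two_mul_card_image_mk [DecidableEq V] {S : Finset V} {A : V → Finset V} :
    #(S.sigma A) ≤ 2 * #((S.sigma A).image fun x ↦ s(x.1, x.2)) := by
  refine card_le_mul_card_image _ _ fun e _ ↦ ?_
  induction e with | h a b =>
  refine (card_le_card (t := {⟨a, b⟩, ⟨b, a⟩}) ?_).trans card_le_two
  rintro ⟨c, d⟩ hcd
  simp only [mem_filter, Sym2.eq_iff] at hcd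
  rcases hcd.2 with ⟨rfl, rfl⟩ | ⟨rfl, rfl⟩ <;> simp

variable [Fintype V]

lemma ncard_edgeSet_fromRel_le {A : V → Finset V} {d : ℕ} (hA : ∀ v, #(A v) ≤ d) :
    (SimpleGraph.fromRel fun v w ↦ w ∈ A v).edgeSet.ncard ≤ Fintype.card V * d := by
  have hsub : (SimpleGraph.fromRel fun v w ↦ w ∈ A v).edgeSet ⊆
      ((univ : Finset V).biUnion fun v ↦ (A v).image fun w ↦ s(v, w) : Finset (Sym2 V)) := by
    intro e
    induction e with | h a b =>
    rw [SimpleGraph.mem_edgeSet, SimpleGraph.fromRel_adj]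
    simp only [coe_biUnion, Set.mem_iUnion, mem_coe, mem_image, mem_univ]
    rintro ⟨-, hb | ha⟩
    · exact ⟨a, trivial, b, hb, rfl⟩
    · exact ⟨b, trivial, a, ha, Sym2.eq_swap⟩
  have hcard := Set.ncard_le_ncard hsub (Set.toFinite _)
  rw [Set.ncard_coe_finset] at hcard
  exact hcard.trans (card_biUnion_le_card_mul _ _ _ fun v _ ↦ card_image_le.trans (hA v))

variable {G : SimpleGraph V} {V₀ : Finset V} {A : V → Finset V} {v w : V} {S : Finset V}

/-- The vertices with fewer than `30` neighbours in `V₀`. -/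
noncomputable def poorVertices (G : SimpleGraph V) (V₀ : Finset V) : Finset V :=
  {v | #{w ∈ V₀ | G.Adj v w} < 30}

/-- `A` selects up to `30` neighbours of each vertex, from within `V₀` where `V₀` has enough. -/
structure IsStarChoice (G : SimpleGraph V) (V₀ : Finset V) (A : V → Finset V) : Prop where
  subset_neighborFinset : ∀ v, A v ⊆ G.neighborFinset v
  card_eq : ∀ v, #(A v) = min 30 (G.degree v)
  subset_of_notMem : ∀ v ∉ poorVertices G V₀, A v ⊆ V₀

lemma exists_isStarChoice (G : SimpleGraph V) (V₀ : Finset V) : ∃ A, IsStarChoice G V₀ A := by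
  have hexists (v : V) : ∃ B ⊆ G.neighborFinset v, #B = min 30 (G.degree v) ∧
      (v ∉ poorVertices G V₀ → B ⊆ V₀) := by
    by_cases hv : v ∈ poorVertices G V₀
    · obtain ⟨B, hB, hcard⟩ := exists_subset_card_eq (min_le_right 30 (G.degree v))
      exact ⟨B, hB, hcard, fun h ↦ absurd hv h⟩
    · have hrich : 30 ≤ #{w ∈ V₀ | G.Adj v w} := by simpa [poorVertices] using hv
      obtain ⟨B, hB, hcard⟩ := exists_subset_card_eq hrich
      have hBG : B ⊆ G.neighborFinset v := fun w hw ↦ by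
        simpa using (mem_filter.1 (hB hw)).2
      have hdeg : 30 ≤ G.degree v := hcard ▸ card_le_card hBG
      exact ⟨B, hBG, hcard.trans (min_eq_left hdeg).symm, fun _ ↦ hB.trans (filter_subset _ _)⟩
  choose A hAG hcard hAV using hexists
  exact ⟨A, hAG, hcard, hAV⟩

namespace IsStarChoice

lemma adj (h : IsStarChoice G V₀ A) (hw : w ∈ A v) : G.Adj v w :=
  (G.mem_neighborFinset v w).1 (h.subset_neighborFinset v hw)

lemma fromRel_le (h : IsStarChoice G V₀ A) : SimpleGraph.fromRel (fun v w ↦ w ∈ A v) ≤ G := by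
  rintro x y ⟨-, hy | hx⟩
  exacts [h.adj hy, (h.adj hx).symm]

lemma card_le (h : IsStarChoice G V₀ A) (v : V) : #(A v) ≤ 30 :=
  (h.card_eq v).trans_le (min_le_left _ _)

lemma eq_neighborFinset (h : IsStarChoice G V₀ A) (hv : IsSmall G v) : A v = G.neighborFinset v :=
  eq_of_subset_of_card_le (h.subset_neighborFinset v) <| by
    rw [h.card_eq, min_eq_right hv.le, G.card_neighborFinset_eq_degree]

variable [DecidableEq V]

lemma subset_union (h : IsStarChoice G V₀ A) (v : V) :
    A v ⊆ V₀ ∪ (poorVertices G V₀).biUnion A := by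
  by_cases hv : v ∈ poorVertices G V₀
  · exact (subset_biUnion_of_mem A hv).trans subset_union_right
  · exact (h.subset_of_notMem v hv).trans subset_union_left

lemma two_mul_card_le_card_biUnion (h : IsStarChoice G V₀ A) (hsparse : SparseNearSmall G)
    (hdeg : ∀ v, 2 ≤ G.degree v) (hS : ∀ v ∈ S, IsSmall G v) : 2 * #S ≤ #(S.biUnion A) := by
  rw [card_biUnion fun v hv w hw hvw ↦ ?_, mul_comm, ← smul_eq_mul]
  · refine card_nsmul_le_sum _ _ _ fun v _ ↦ ?_
    rw [h.card_eq]
    exact le_min (by norm_num) (hdeg v)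
  · rw [Function.onFun, h.eq_neighborFinset (hS v hv), h.eq_neighborFinset (hS w hw)]
    exact hsparse.disjoint_neighborFinset (hS v hv) (hS w hw) hvw

lemma disjoint_biUnion (h : IsStarChoice G V₀ A) (hsparse : SparseNearSmall G)
    (hS : ∀ v ∈ S, IsSmall G v) : Disjoint (S.biUnion A) S := by
  rw [disjoint_left]
  intro w hw hwS
  obtain ⟨v, hv, hvw⟩ := mem_biUnion.1 hw
  exact hsparse.not_adj (hS v hv) (hS w hwS) (h.adj hvw)

lemma card_biUnion_inter_le (h : IsStarChoice G V₀ A) (hsparse : SparseNearSmall G)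
    (hS : ∀ v ∈ S, ¬ IsSmall G v) {N : Finset V} (hN : ∀ w ∈ N, NearSmall G w) :
    #(S.biUnion A ∩ N) ≤ #S := by
  rw [biUnion_inter, ← mul_one #S]
  refine card_biUnion_le_card_mul _ _ _ fun v hv ↦ card_le_one.2 fun a ha b hb ↦ ?_
  rw [mem_inter] at ha hb
  exact hsparse.eq_of_nearSmall (hS v hv) (h.adj ha.1) (h.adj hb.1) (hN a ha.2) (hN b hb.2)

lemma card_mul_le_edgeCount (h : IsStarChoice G V₀ A) (hS : ∀ v ∈ S, ¬ IsSmall G v) :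
    #S * 30 ≤ 2 * edgeCount G (pairsIn (S ∪ S.biUnion A)) := by
  have hcard : #(S.sigma A) = #S * 30 := by
    rw [card_sigma, sum_const_nat fun v hv ↦ ?_]
    rw [h.card_eq, min_eq_left (not_lt.1 (hS v hv))]
  have himage : #((S.sigma A).image fun x ↦ s(x.1, x.2)) ≤
      edgeCount G (pairsIn (S ∪ S.biUnion A)) := by
    refine card_le_card fun e he ↦ ?_
    obtain ⟨⟨v, w⟩, hvw, rfl⟩ := mem_image.1 he
    obtain ⟨hv, hw⟩ := mem_sigma.1 hvw
    have hadj := h.adj hw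
    rw [mem_filter, mk_mem_pairsIn]
    exact ⟨⟨mem_union_left _ hv, mem_union_right _ (mem_biUnion.2 ⟨v, hv, hw⟩), hadj.ne⟩, hadj⟩
  have := card_sigma_le_two_mul_card_image_mk (S := S) (A := A)
  omega

lemma four_mul_card_le_card_biUnion_sdiff (h : IsStarChoice G V₀ A) {s : ℝ}
    (hlocal : LocallySparse G (5 * s)) (hS : ∀ v ∈ S, ¬ IsSmall G v) (hSs : #S ≤ s) :
    4 * #S ≤ #(S.biUnion A \ S) := by
  by_contra! hlt
  have hne : S.Nonempty := card_pos.1 (by omega)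
  have hT : #(S ∪ S.biUnion A) = #S + #(S.biUnion A \ S) := by
    rw [union_comm, ← card_sdiff_add_card, add_comm]
  have hT5 : (#(S ∪ S.biUnion A) : ℝ) ≤ 5 * #S := mod_cast (by omega)
  have hedges := hlocal _ (hne.mono subset_union_left) (hT5.trans (by linarith))
  have := h.card_mul_le_edgeCount hS
  omega

lemma two_mul_card_le_card_biUnion_sdiff (h : IsStarChoice G V₀ A) (hsparse : SparseNearSmall G)
    (hdeg : ∀ v, 2 ≤ G.degree v) {s : ℝ} (hlocal : LocallySparse G (5 * s)) (hS : #S ≤ s) :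
    2 * #S ≤ #(S.biUnion A \ S) := by
  set S₁ : Finset V := {v ∈ S | IsSmall G v}
  set S₂ : Finset V := {v ∈ S | ¬ IsSmall G v}
  set N₁ := S₁.biUnion A
  set N₂ := S₂.biUnion A
  have hsmall : ∀ v ∈ S₁, IsSmall G v := fun v hv ↦ (mem_filter.1 hv).2
  have hlarge : ∀ v ∈ S₂, ¬ IsSmall G v := fun v hv ↦ (mem_filter.1 hv).2
  have hunion : S₁ ∪ S₂ = S := filter_union_filter_not_eq _ S
  have hcard : #S₁ + #S₂ = #S := card_filter_add_card_filter_not _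
  have hN₁ : 2 * #S₁ ≤ #N₁ := h.two_mul_card_le_card_biUnion hsparse hdeg hsmall
  have hN₂ : 4 * #S₂ ≤ #(N₂ \ S₂) := by
    have hS₂ : (#S₂ : ℝ) ≤ #S := mod_cast card_le_card (filter_subset _ _)
    exact h.four_mul_card_le_card_biUnion_sdiff hlocal hlarge (hS₂.trans hS)
  have hinter : #(N₂ ∩ (S₁ ∪ N₁)) ≤ #S₂ := by
    refine h.card_biUnion_inter_le hsparse hlarge fun w hw ↦ ?_
    rcases mem_union.1 hw with hw | hw
    · exact ⟨w, hsmall w hw, Or.inl rfl⟩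
    · obtain ⟨z, hz, hzw⟩ := mem_biUnion.1 hw
      exact ⟨z, hsmall z hz, Or.inr (h.adj hzw)⟩
  have hsub : (N₁ \ S₂) ∪ ((N₂ \ S₂) \ (S₁ ∪ N₁)) ⊆ S.biUnion A \ S := by
    have hdisj := disjoint_left.1 (h.disjoint_biUnion hsparse hsmall)
    rw [← hunion, union_biUnion]
    intro z
    simp only [mem_union, mem_sdiff]
    have := @hdisj z
    tauto
  have hsdiff₁ := le_card_sdiff S₂ N₁
  have hsdiff₂ := card_sdiff_add_card_inter (N₂ \ S₂) (S₁ ∪ N₁)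
  have hsdiff₃ : #((N₂ \ S₂) ∩ (S₁ ∪ N₁)) ≤ #(N₂ ∩ (S₁ ∪ N₁)) :=
    card_le_card (inter_subset_inter_right sdiff_subset)
  have hle := card_le_card hsub
  rw [card_union_of_disjoint (disjoint_left.2 fun z hz hz' ↦ (mem_sdiff.1 hz').2
    (mem_union_right _ (mem_sdiff.1 hz).1))] at hle
  omega

theorem expands (h : IsStarChoice G V₀ A) (hsparse : SparseNearSmall G)
    (hdeg : ∀ v, 2 ≤ G.degree v) {s : ℝ} (hlocal : LocallySparse G (5 * s)) :
    Expands (.fromRel fun v w ↦ w ∈ A v) (V₀ ∪ (poorVertices G V₀).biUnion A) s := by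
  refine fun S hS ↦ (h.two_mul_card_le_card_biUnion_sdiff hsparse hdeg hlocal hS).trans
    (card_le_card fun z hz ↦ ?_)
  obtain ⟨hz, hzS⟩ := mem_sdiff.1 hz
  obtain ⟨y, hy, hyz⟩ := mem_biUnion.1 hz
  exact mem_extNeighbors.2 ⟨h.subset_union y hyz, hzS, y, hy, (h.adj hyz).ne, Or.inl hyz⟩

end IsStarChoice

end Stars

section Reservoir

variable {V : Type*} [DecidableEq V] {G Γ : SimpleGraph V} {V₀ : Finset V} {s k : ℝ}

/-- Every set whose size is in `(s, k]` has twice as many external neighbours in `W`. -/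
def ExpandsBetween (Γ : SimpleGraph V) (W : Finset V) (s k : ℝ) : Prop :=
  ∀ S : Finset V, s < #S → #S ≤ k → 2 * #S ≤ #(extNeighbors Γ W S)

lemma ExpandsBetween.expands_sup {Γ' : SimpleGraph V} {W W' : Finset V}
    (h : ExpandsBetween Γ W s k) (h' : Expands Γ' W' s) (hW : W ⊆ W') :
    Expands (Γ' ⊔ Γ) W' k := by
  intro S hS
  rcases le_or_gt (#S : ℝ) s with hs | hs
  · exact (h' S hs).trans (card_le_card (extNeighbors_mono le_sup_left subset_rfl S))
  · exact (h S hs hS).trans (card_le_card (extNeighbors_mono le_sup_right hW S))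

variable [Fintype V]

theorem exists_isReservoir {m K M : ℕ} (hk : 0 ≤ k) (hdeg : ∀ v, 2 ≤ G.degree v)
    (hsparse : SparseNearSmall G) (hlocal : LocallySparse G (5 * s)) (hle : Γ ≤ G)
    (hm : Γ.edgeSet.ncard ≤ m) (hexp : ExpandsBetween Γ V₀ s k) (hjoined : LargeSetsJoined Γ k)
    (hboost : HitsBoosters G M k) (hM : m + Fintype.card V * 30 + (Fintype.card V + 1) ≤ M)
    (hpoor : #(poorVertices G V₀) * 30 ≤ K) (hK : 2 * k + 2 + #V₀ + K ≤ Fintype.card V) :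
    ∃ W, #W ≤ #V₀ + K ∧ IsReservoir G W := by
  obtain ⟨A, hA⟩ := exists_isStarChoice G V₀
  set W := V₀ ∪ (poorVertices G V₀).biUnion A
  set Γ₁ := SimpleGraph.fromRel fun v w ↦ w ∈ A v
  have hW : #W ≤ #V₀ + K := (card_union_le _ _).trans <| Nat.add_le_add_left
    ((card_biUnion_le_card_mul _ _ _ fun v _ ↦ hA.card_le v).trans hpoor) _
  have hΓ : (Γ₁ ⊔ Γ).edgeSet.ncard ≤ Fintype.card V * 30 + m := by
    rw [SimpleGraph.edgeSet_sup]
    exact (Set.ncard_union_le _ _).trans (add_le_add (ncard_edgeSet_fromRel_le hA.card_le) hm)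
  have hcompl : 2 * k + 2 ≤ (#Wᶜ : ℝ) := by
    have hcard : (#W : ℝ) + #Wᶜ = Fintype.card V := mod_cast card_add_card_compl W
    have hW' : (#W : ℝ) ≤ #V₀ + K := mod_cast hW
    linarith
  have hexp' : Expands (Γ₁ ⊔ Γ) W k :=
    hexp.expands_sup (hA.expands hsparse hdeg hlocal) subset_union_left
  exact ⟨W, hW, hexp'.isReservoir (hjoined.mono le_sup_right) hk (sup_le hA.fromRel_le hle)
    (by omega) hboost hcompl⟩

end Reservoir

/-! ### Low degrees in `G(n, p)` -/

section LowDegrees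

variable {n : ℕ} {p x : ℝ}

lemma one_sub_add_mul_pow_le_exp (hp : p ∈ Set.Icc 0 1) {t : ℝ} (ht : 0 ≤ t) (m : ℕ) :
    (1 - p + t * p) ^ m ≤ Real.exp (-(1 - t) * p * m) := by
  have hbase : 1 - p + t * p ≤ Real.exp (-(1 - t) * p) := by
    linarith [Real.add_one_le_exp (-(1 - t) * p)]
  have hnonneg : 0 ≤ 1 - p + t * p := add_nonneg (sub_nonneg.2 hp.2) (mul_nonneg ht hp.1)
  calc (1 - p + t * p) ^ m ≤ Real.exp (-(1 - t) * p) ^ m := pow_le_pow_left₀ hnonneg hbase m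
    _ = Real.exp (-(1 - t) * p * m) := by rw [← Real.exp_nat_mul, mul_comm]

lemma gnpProb_exists_mem_le_card_mul (hp : p ∈ Set.Icc 0 1) {ι : Type*} {s : Finset ι}
    {P : ι → SimpleGraph (Fin n) → Prop} {c : ℝ} (hc : ∀ i ∈ s, gnpProb n p (P i) ≤ c) :
    gnpProb n p (fun G ↦ ∃ i ∈ s, P i G) ≤ #s * c := by
  rw [← nsmul_eq_mul]
  exact (gnpProb_exists_mem_le hp s P).trans (sum_le_card_nsmul _ _ _ hc)

lemma gnpProb_and_edgeCount_le_le (hp : p ∈ Set.Icc 0 1) {A F : Finset (Sym2 (Fin n))}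
    (hA : A ⊆ pairsIn univ) (hF : F ⊆ pairsIn univ) (hAF : Disjoint A F) (d : ℕ) (hx : 1 ≤ x) :
    gnpProb n p (fun G ↦ (∀ e ∈ A, e ∈ G.edgeSet) ∧ edgeCount G F ≤ d) ≤
      p ^ #A * x ^ d * Real.exp (-(1 - x⁻¹) * p * #F) := by
  have hx0 : 0 < x := by linarith
  have hchernoff := pow_mul_gnpProb_edgeCount_le hp hA hF hAF d (inv_nonneg.2 hx0.le)
    (inv_le_one_of_one_le₀ hx)
  rw [inv_pow, inv_mul_le_iff₀ (pow_pos hx0 d)] at hchernoff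
  calc _ ≤ x ^ d * (p ^ #A * (1 - p + x⁻¹ * p) ^ #F) := hchernoff
    _ ≤ x ^ d * (p ^ #A * Real.exp (-(1 - x⁻¹) * p * #F)) := by
      gcongr
      · exact pow_nonneg hp.1 _
      · exact one_sub_add_mul_pow_le_exp hp (inv_nonneg.2 hx0.le) _
    _ = p ^ #A * x ^ d * Real.exp (-(1 - x⁻¹) * p * #F) := by ring

lemma gnpProb_and_sum_card_filter_adj_le_le (hp : p ∈ Set.Icc 0 1) {J T W : Finset (Fin n)}
    {A : Finset (Sym2 (Fin n))} (hJ : J ⊆ T) (hA : A ⊆ pairsIn T) (hW : Disjoint W T) (d : ℕ)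
    (hx : 1 ≤ x) (hxW : p * #W ≤ x) :
    gnpProb n p (fun G ↦ (∀ e ∈ A, e ∈ G.edgeSet) ∧ ∑ j ∈ J, #{w ∈ W | G.Adj j w} ≤ d) ≤
      p ^ #A * x ^ d * Real.exp (#J - p * #J * #W) := by
  have hJW : Disjoint J W := (hW.mono_right hJ).symm
  have hdisj : Disjoint A (pairsBetween J W) := by
    refine disjoint_left.2 fun e he he' ↦ ?_
    obtain ⟨⟨j, w⟩, hjw, rfl⟩ := mem_image.1 he'
    exact disjoint_left.1 hW (mem_product.1 hjw).2 (mk_mem_pairsIn.1 (hA he)).2.1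
  calc _ ≤ gnpProb n p
        (fun G ↦ (∀ e ∈ A, e ∈ G.edgeSet) ∧ edgeCount G (pairsBetween J W) ≤ d) :=
        gnpProb_mono hp fun G hG ↦ ⟨hG.1, (edgeCount_pairsBetween_le G J W).trans hG.2⟩
    _ ≤ p ^ #A * x ^ d * Real.exp (-(1 - x⁻¹) * p * #(pairsBetween J W)) :=
      gnpProb_and_edgeCount_le_le hp (hA.trans (pairsIn_subset_univ T)) (pairsBetween_subset hJW)
        hdisj d hx
    _ ≤ p ^ #A * x ^ d * Real.exp (#J - p * #J * #W) := by
      have hx0 : 0 < x := by linarith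
      have hJ : x⁻¹ * (p * #W) * #J ≤ 1 * #J := by
        gcongr
        exact inv_mul_le_one_of_le₀ hxW hx0.le
      gcongr
      · exact mul_nonneg (pow_nonneg hp.1 _) (by positivity)
      · rw [card_pairsBetween hJW]
        push_cast
        linarith

lemma gnpProb_card_filter_adj_le_le (hp : p ∈ Set.Icc 0 1) (v : Fin n) (W : Finset (Fin n)) (d : ℕ)
    (hx : 1 ≤ x) (hxW : p * #W ≤ x) :
    gnpProb n p (fun G ↦ #{w ∈ W | G.Adj v w} ≤ d) ≤ x ^ d * Real.exp (2 - p * #W) := by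
  have hcard : (#(W.erase v) : ℝ) ≤ #W := mod_cast card_erase_le
  have hcard' : (#W : ℝ) ≤ #(W.erase v) + 1 := mod_cast tsub_le_iff_right.1 pred_card_le_card_erase
  have hbound := gnpProb_and_sum_card_filter_adj_le_le hp (J := {v}) (T := {v}) (W := W.erase v)
    subset_rfl (empty_subset _) (by simp) d hx ((mul_le_mul_of_nonneg_left hcard hp.1).trans hxW)
  rw [card_empty, pow_zero, one_mul, card_singleton, Nat.cast_one, mul_one] at hbound
  calc _ ≤ _ := gnpProb_mono hp fun G hG ↦ ⟨by simp, by
        rw [sum_singleton]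
        exact (card_le_card (filter_subset_filter _ (erase_subset v W))).trans hG⟩
    _ ≤ x ^ d * Real.exp (1 - p * #(W.erase v)) := hbound
    _ ≤ x ^ d * Real.exp (2 - p * #W) := 
      mul_le_mul_of_nonneg_left (Real.exp_le_exp.2 (by nlinarith [hp.1, hp.2])) (by positivity)

lemma gnpProb_not_forall_two_le_degree_le (hp : p ∈ Set.Icc 0 1) (hnp : 1 ≤ n * p) :
    gnpProb n p (fun G ↦ ¬ ∀ v, 2 ≤ G.degree v) ≤ n * (n * p * Real.exp (2 - n * p)) := by
  have hunion := gnpProb_exists_mem_le_card_mul hp (s := (univ : Finset (Fin n)))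
    fun v _ ↦ gnpProb_card_filter_adj_le_le hp v univ 1 hnp (by simp [mul_comm])
  refine (gnpProb_mono hp fun G hG ↦ ?_).trans (hunion.trans_eq (by simp [mul_comm p]))
  obtain ⟨v, hv⟩ := not_forall.1 hG
  refine ⟨v, mem_univ v, ?_⟩
  rw [← SimpleGraph.neighborFinset_eq_filter, SimpleGraph.card_neighborFinset_eq_degree]
  omega

lemma gnpProb_le_card_poorVertices_le (hp : p ∈ Set.Icc 0 1) (hnp : 1 ≤ n * p)
    (V₀ : Finset (Fin n)) {b : ℝ} (hb : 0 < b) :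
    gnpProb n p (fun G ↦ b ≤ #(poorVertices G V₀)) ≤
      n / b * ((n * p) ^ 29 * Real.exp (2 - p * #V₀)) := by
  have hcard : (#V₀ : ℝ) ≤ n := mod_cast (card_le_univ V₀).trans_eq (Fintype.card_fin n)
  have hvertex (v : Fin n) : gnpProb n p (fun G ↦ #{w ∈ V₀ | G.Adj v w} < 30) ≤
      (n * p) ^ 29 * Real.exp (2 - p * #V₀) := by
    simp only [Nat.lt_succ_iff]
    exact gnpProb_card_filter_adj_le_le hp v V₀ 29 hnp
      (by rw [mul_comm p]; exact mul_le_mul_of_nonneg_right hcard hp.1)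
  have hmarkov := (mul_gnpProb_le_card_filter hp univ
    (fun v G ↦ #{w ∈ V₀ | G.Adj v w} < 30) b).trans (sum_le_card_nsmul _ _ _ fun v _ ↦ hvertex v)
  rw [card_univ, Fintype.card_fin, nsmul_eq_mul] at hmarkov
  rw [div_mul_eq_mul_div, le_div_iff₀' hb]
  exact hmarkov

end LowDegrees

/-! ### Sparsity of small vertex sets in `G(n, p)` -/

section SmallSets

variable {n : ℕ} {p : ℝ}

lemma gnpProb_exists_card_eq_le (hp : p ∈ Set.Icc 0 1) {τ : ℕ}
    {Q : Finset (Fin n) → SimpleGraph (Fin n) → Prop} {c : ℝ}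
    (hc : ∀ T, #T = τ → gnpProb n p (Q T) ≤ c) :
    gnpProb n p (fun G ↦ ∃ T, #T = τ ∧ Q T G) ≤ n.choose τ * c := by
  have hunion := gnpProb_exists_mem_le_card_mul hp (s := powersetCard τ univ) (P := Q)
    fun T hT ↦ hc T (mem_powersetCard_univ.1 hT)
  simpa only [mem_powersetCard_univ, card_powersetCard, card_univ, Fintype.card_fin] using hunion

lemma gnpProb_subset_and_isSmall_le (hp : p ∈ Set.Icc 0 1) (hnp : 1 ≤ n * p)
    {J T : Finset (Fin n)} {A : Finset (Sym2 (Fin n))} (hJT : J ⊆ T) (hJ : #J ≤ 2)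
    (hA : A ⊆ pairsIn T) :
    gnpProb n p (fun G ↦ (∀ e ∈ A, e ∈ G.edgeSet) ∧ ∀ j ∈ J, IsSmall G j) ≤
      p ^ #A * (n * p) ^ 60 * Real.exp (#J - p * #J * (n - #T)) := by
  have hcompl : (#Tᶜ : ℝ) = n - #T := by
    rw [card_compl, Fintype.card_fin, Nat.cast_sub (card_finset_fin_le T)]
  have hdegrees := gnpProb_and_sum_card_filter_adj_le_le hp hJT hA disjoint_compl_left 60 hnp
    (by rw [hcompl]; nlinarith [hp.1, (Nat.cast_nonneg #T : (0 : ℝ) ≤ #T)])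
  rw [hcompl] at hdegrees
  refine (gnpProb_mono hp fun G hG ↦ ⟨hG.1, ?_⟩).trans hdegrees
  have hsmall (j) (hj : j ∈ J) : #{w ∈ Tᶜ | G.Adj j w} ≤ 30 := by
    refine (card_le_card fun w hw ↦ ?_).trans (hG.2 j hj).le
    exact (G.mem_neighborFinset j w).2 (mem_filter.1 hw).2
  calc ∑ j ∈ J, #{w ∈ Tᶜ | G.Adj j w} ≤ #J * 30 := sum_le_card_nsmul _ _ _ hsmall
    _ ≤ 60 := by omega

lemma pow_mul_pow_mul_exp_neg_le {x : ℝ} (hx : x = n * p) (hx1 : 1 ≤ x)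
    (hnx : n * Real.exp (-x) ≤ 1) {τ j : ℕ} (hτ : τ ≤ 5) (hj1 : 1 ≤ j) (hj2 : j ≤ 2)
    (hjτ : j ≤ τ) :
    (n : ℝ) ^ τ * p ^ (τ + 1 - j) * Real.exp (-(j * x)) ≤ x ^ 5 * Real.exp (-x) := by
  obtain rfl | rfl : j = 1 ∨ j = 2 := by omega
  · rw [Nat.add_sub_cancel, ← mul_pow, ← hx, Nat.cast_one, one_mul]
    gcongr
  · obtain ⟨σ, rfl⟩ : ∃ σ, τ = σ + 1 := ⟨τ - 1, by omega⟩
    calc (n : ℝ) ^ (σ + 1) * p ^ σ * Real.exp (-((2 : ℕ) * x))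
        = x ^ σ * Real.exp (-x) * (n * Real.exp (-x)) := by
          rw [hx, mul_pow, Nat.cast_two, two_mul, neg_add, Real.exp_add]
          ring
      _ ≤ x ^ 5 * Real.exp (-x) * 1 := by
          gcongr
          omega
      _ = x ^ 5 * Real.exp (-x) := mul_one _

lemma pow_mul_gnpProb_subset_and_isSmall_le (hp : p ∈ Set.Icc 0 1) (hnp : 1 ≤ n * p)
    (hn : n * Real.exp (-(n * p)) ≤ 1) {J T : Finset (Fin n)} {A : Finset (Sym2 (Fin n))}
    (hT : #T ≤ 5) (hJT : J ⊆ T) (hJ1 : J.Nonempty) (hJ2 : #J ≤ 2) (hA : A ⊆ pairsIn T)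
    (hJA : #T < #A + #J) :
    n ^ #T * gnpProb n p (fun G ↦ (∀ e ∈ A, e ∈ G.edgeSet) ∧ ∀ j ∈ J, IsSmall G j) ≤
      Real.exp 12 * ((n * p) ^ 65 * Real.exp (-(n * p))) := by
  have hpA : p ^ #A ≤ p ^ (#T + 1 - #J) := pow_le_pow_of_le_one hp.1 hp.2 (by omega)
  have hexp : Real.exp (#J - p * #J * (n - #T)) ≤ Real.exp 12 * Real.exp (-(#J * (n * p))) := by
    rw [← Real.exp_add, Real.exp_le_exp]
    have hJ : (#J : ℝ) ≤ 2 := mod_cast hJ2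
    have hpT : p * #T ≤ 1 * 5 := mul_le_mul hp.2 (mod_cast hT) (by positivity) zero_le_one
    nlinarith [mul_le_mul hJ hpT (mul_nonneg hp.1 (Nat.cast_nonneg _)) zero_le_two]
  have hp0 := hp.1
  calc _ ≤ (n : ℝ) ^ #T * (p ^ (#T + 1 - #J) * (n * p) ^ 60 *
          (Real.exp 12 * Real.exp (-(#J * (n * p))))) := by
        gcongr
        exact (gnpProb_subset_and_isSmall_le hp hnp hJT hJ2 hA).trans (by gcongr)
    _ = Real.exp 12 * (n * p) ^ 60 *
          ((n : ℝ) ^ #T * p ^ (#T + 1 - #J) * Real.exp (-(#J * (n * p)))) := by ring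
    _ ≤ Real.exp 12 * (n * p) ^ 60 * ((n * p) ^ 5 * Real.exp (-(n * p))) :=
      mul_le_mul_of_nonneg_left (pow_mul_pow_mul_exp_neg_le rfl hnp hn hT hJ1.card_pos hJ2
        (card_le_card hJT)) (by positivity)
    _ = Real.exp 12 * ((n * p) ^ 65 * Real.exp (-(n * p))) := by ring

/-- `2 ^ 15` bounds the number of pairs of a subset of `T` and a set of edges inside `T`. -/
lemma pow_mul_gnpProb_exists_isSmall_le (hp : p ∈ Set.Icc 0 1) (hnp : 1 ≤ n * p)
    (hn : n * Real.exp (-(n * p)) ≤ 1) {T : Finset (Fin n)} (hT : #T ≤ 5) :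
    n ^ #T * gnpProb n p (fun G ↦ ∃ J ⊆ T, J.Nonempty ∧ #J ≤ 2 ∧ (∀ j ∈ J, IsSmall G j) ∧
        #T < edgeCount G (pairsIn T) + #J) ≤
      2 ^ 15 * (Real.exp 12 * ((n * p) ^ 65 * Real.exp (-(n * p)))) := by
  set R := Real.exp 12 * ((n * p) ^ 65 * Real.exp (-(n * p)))
  set s : Finset (Finset (Fin n) × Finset (Sym2 (Fin n))) :=
    {x ∈ T.powerset ×ˢ (pairsIn T).powerset | x.1.Nonempty ∧ #x.1 ≤ 2 ∧ #T < #x.2 + #x.1}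
  have hn0 : (0 : ℝ) < n := by
    by_contra! h
    nlinarith [hp.1]
  have hpair : ∀ x ∈ s, gnpProb n p (fun G ↦ (∀ e ∈ x.2, e ∈ G.edgeSet) ∧ ∀ j ∈ x.1, IsSmall G j)
      ≤ R / n ^ #T := by
    rintro ⟨J, A⟩ hx
    simp only [s, mem_filter, mem_product, mem_powerset] at hx
    obtain ⟨⟨hJT, hA⟩, hJ1, hJ2, hJA⟩ := hx
    rw [le_div_iff₀' (by positivity)]
    exact pow_mul_gnpProb_subset_and_isSmall_le hp hnp hn hT hJT hJ1 hJ2 hA hJA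
  have hcard : #s ≤ 2 ^ 15 := by
    refine (card_filter_le _ _).trans ?_
    rw [card_product, card_powerset, card_powerset, card_pairsIn, ← pow_add]
    exact Nat.pow_le_pow_right two_pos (add_le_add hT (Nat.choose_le_choose 2 hT))
  rw [← le_div_iff₀' (by positivity), mul_div_assoc]
  calc _ ≤ gnpProb n p (fun G ↦ ∃ x ∈ s,
          (∀ e ∈ x.2, e ∈ G.edgeSet) ∧ ∀ j ∈ x.1, IsSmall G j) := by
        refine gnpProb_mono hp fun G ⟨J, hJT, hJ1, hJ2, hsmall, hlt⟩ ↦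
          ⟨(J, {e ∈ pairsIn T | e ∈ G.edgeSet}), ?_, fun e he ↦ (mem_filter.1 he).2, hsmall⟩
        simp only [s, mem_filter, mem_product, mem_powerset, filter_subset, and_true]
        exact ⟨hJT, hJ1, hJ2, hlt⟩
    _ ≤ #s * (R / n ^ #T) := gnpProb_exists_mem_le_card_mul hp hpair
    _ ≤ 2 ^ 15 * (R / n ^ #T) := by
      gcongr
      exact_mod_cast hcard

lemma gnpProb_not_sparseNearSmall_le (hp : p ∈ Set.Icc 0 1) (hnp : 1 ≤ n * p)
    (hn : n * Real.exp (-(n * p)) ≤ 1) :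
    gnpProb n p (fun G ↦ ¬ SparseNearSmall G) ≤
      6 * (2 ^ 15 * (Real.exp 12 * ((n * p) ^ 65 * Real.exp (-(n * p))))) := by
  set c := 2 ^ 15 * (Real.exp 12 * ((n * p) ^ 65 * Real.exp (-(n * p))))
  have hn0 : (0 : ℝ) < n := by
    by_contra! h
    nlinarith [hp.1]
  let Q (T : Finset (Fin n)) (G : SimpleGraph (Fin n)) : Prop :=
    ∃ J ⊆ T, J.Nonempty ∧ #J ≤ 2 ∧ (∀ j ∈ J, IsSmall G j) ∧ #T < edgeCount G (pairsIn T) + #J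
  have hsize : ∀ τ ∈ range 6, gnpProb n p (fun G ↦ ∃ T, #T = τ ∧ Q T G) ≤ c := by
    intro τ hτ
    calc _ ≤ n.choose τ * (c / n ^ τ) := gnpProb_exists_card_eq_le hp fun T hT ↦ by
          rw [le_div_iff₀' (by positivity), ← hT]
          exact pow_mul_gnpProb_exists_isSmall_le hp hnp hn
            (hT ▸ Nat.lt_succ_iff.1 (mem_range.1 hτ))
      _ ≤ (n : ℝ) ^ τ * (c / n ^ τ) := by
          gcongr
          exact_mod_cast Nat.choose_le_pow n τ
      _ = c := mul_div_cancel₀ c (by positivity)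
  calc _ ≤ gnpProb n p (fun G ↦ ∃ τ ∈ range 6, ∃ T, #T = τ ∧ Q T G) := by
        refine gnpProb_mono hp fun G hG ↦ ?_
        simp only [SparseNearSmall, not_forall, not_le] at hG
        obtain ⟨T, J, hT, hJT, hJ1, hJ2, hsmall, hlt⟩ := hG
        exact ⟨#T, mem_range.2 (Nat.lt_succ_iff.2 hT), T, rfl, J, hJT, hJ1, hJ2, hsmall, hlt⟩
    _ ≤ #(range 6) * c := gnpProb_exists_mem_le_card_mul hp hsize
    _ = 6 * c := by rw [card_range]; norm_num

lemma gnpProb_le_edgeCount_pairsIn_le (hp : p ∈ Set.Icc 0 1) {T : Finset (Fin n)}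
    (h0 : 0 < p * #T) (h1 : p * #T ≤ 1) (d : ℕ) :
    gnpProb n p (fun G ↦ d ≤ edgeCount G (pairsIn T)) ≤ (p * #T) ^ d * Real.exp (#T / 2) := by
  have hT : 0 < (#T : ℝ) := pos_of_mul_pos_right h0 hp.1
  have hchernoff := (pow_mul_gnpProb_le_edgeCount hp (pairsIn_subset_univ T) d
    (one_le_inv₀ h0 |>.2 h1)).trans (one_sub_add_mul_pow_le_exp hp (inv_nonneg.2 h0.le) _)
  rw [inv_pow, inv_mul_le_iff₀ (pow_pos h0 d)] at hchernoff
  refine hchernoff.trans (mul_le_mul_of_nonneg_left (Real.exp_le_exp.2 ?_) (pow_nonneg h0.le d))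
  calc -(1 - (p * #T)⁻¹) * p * #(pairsIn T)
      ≤ (p * #T)⁻¹ * p * ((#T : ℝ) ^ 2 / 2) := by
        have hle := mul_le_mul_of_nonneg_left (card_pairsIn_le T)
          (mul_nonneg (inv_nonneg.2 h0.le) hp.1)
        nlinarith [mul_nonneg hp.1 (Nat.cast_nonneg #(pairsIn T) : (0 : ℝ) ≤ #(pairsIn T))]
    _ = #T / 2 := by
        have := left_ne_zero_of_mul h0.ne'
        field_simp

lemma choose_le_div_mul_exp_pow {m k : ℕ} (hk : 0 < k) :
    (m.choose k : ℝ) ≤ (m / k * Real.exp 1) ^ k := by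
  calc (m.choose k : ℝ) ≤ (m : ℝ) ^ k / k.factorial := Nat.choose_le_pow_div k m
    _ = (m / k : ℝ) ^ k * ((k : ℝ) ^ k / k.factorial) := by
      rw [div_pow]
      field_simp
    _ ≤ (m / k : ℝ) ^ k * Real.exp k := by
      gcongr
      exact Real.pow_div_factorial_le_exp _ (Nat.cast_nonneg k) k
    _ = (m / k * Real.exp 1) ^ k := by rw [mul_pow, ← Real.exp_nat_mul, mul_one]

lemma exp_three_halves_le : Real.exp (3 / 2) ≤ 5 := by
  refine (pow_le_pow_iff_left₀ (Real.exp_pos _).le (by norm_num) two_ne_zero).1 ?_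
  calc Real.exp (3 / 2) ^ 2 = Real.exp 1 ^ 3 := by
        rw [← Real.exp_nat_mul, ← Real.exp_nat_mul]
        norm_num
    _ ≤ 2.72 ^ 3 := by
        gcongr
        exact Real.exp_one_lt_d9.le.trans (by norm_num)
    _ ≤ 5 ^ 2 := by norm_num

lemma gnpProb_exists_card_eq_dense_le (hp : p ∈ Set.Icc 0 1) (hnp : 5 ≤ n * p) {τ : ℕ}
    (hτ : 0 < τ) (hτn : τ ≤ 5 * (n / (n * p) ^ 2)) :
    gnpProb n p (fun G ↦ ∃ T, #T = τ ∧ 3 * τ ≤ edgeCount G (pairsIn T)) ≤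
      (125 / (n * p)) ^ τ := by
  have hnp0 : 0 < n * p := by linarith
  have hp0 : 0 < p := pos_of_mul_pos_right hnp0 (Nat.cast_nonneg n)
  have hn0 : (0 : ℝ) < n := pos_of_mul_pos_left hnp0 hp.1
  have hpτ : p * τ ≤ 5 / (n * p) := by
    refine (mul_le_mul_of_nonneg_left hτn hp.1).trans_eq ?_
    field_simp
  have hbase : n / τ * Real.exp 1 * ((p * τ) ^ 3 * Real.exp (1 / 2)) ≤ 125 / (n * p) := by
    calc n / τ * Real.exp 1 * ((p * τ) ^ 3 * Real.exp (1 / 2))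
        = n * p * (p * τ) ^ 2 * Real.exp (3 / 2) := by
          rw [show (3 / 2 : ℝ) = 1 + 1 / 2 by norm_num, Real.exp_add]
          field_simp
      _ ≤ n * p * (5 / (n * p)) ^ 2 * 5 := by
          gcongr
          exact exp_three_halves_le
      _ = 125 / (n * p) := by
          field_simp
          norm_num
  calc _ ≤ n.choose τ * ((p * τ) ^ (3 * τ) * Real.exp (τ / 2)) :=
        gnpProb_exists_card_eq_le hp fun T hT ↦ hT ▸ gnpProb_le_edgeCount_pairsIn_le hp
          (by rw [hT]; positivity)
          (by rw [hT]; exact hpτ.trans (div_le_one_of_le₀ hnp hnp0.le)) _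
    _ ≤ (n / τ * Real.exp 1) ^ τ * ((p * τ) ^ (3 * τ) * Real.exp (τ / 2)) := by
        gcongr
        exact choose_le_div_mul_exp_pow hτ
    _ = (n / τ * Real.exp 1 * ((p * τ) ^ 3 * Real.exp (1 / 2))) ^ τ := by
        rw [mul_pow _ (_ * _), mul_pow (_ ^ 3), ← pow_mul, ← Real.exp_nat_mul, mul_one_div]
    _ ≤ (125 / (n * p)) ^ τ := pow_le_pow_left₀ (by positivity) hbase τ

lemma gnpProb_not_locallySparse_le (hp : p ∈ Set.Icc 0 1) (hnp : 250 ≤ n * p) :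
    gnpProb n p (fun G ↦ ¬ LocallySparse G (5 * (n / (n * p) ^ 2))) ≤ 250 / (n * p) := by
  set t := 5 * (n / (n * p) ^ 2)
  have hratio : 125 / (n * p) ≤ 1 / 2 := by
    rw [div_le_div_iff₀ (by linarith) two_pos]
    linarith
  have hsize : ∀ i ∈ range n, gnpProb n p (fun G ↦ ((i + 1 : ℕ) : ℝ) ≤ t ∧
      ∃ T, #T = i + 1 ∧ 3 * (i + 1) ≤ edgeCount G (pairsIn T)) ≤ 125 / (n * p) * (1 / 2) ^ i := by
    intro i _
    by_cases hi : ((i + 1 : ℕ) : ℝ) ≤ t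
    · calc _ ≤ _ := gnpProb_mono hp fun G hG ↦ hG.2
        _ ≤ (125 / (n * p)) ^ (i + 1) :=
          gnpProb_exists_card_eq_dense_le hp (by linarith) i.succ_pos hi
        _ ≤ 125 / (n * p) * (1 / 2) ^ i := by
          rw [pow_succ']
          gcongr
    · rw [gnpProb_eq_zero fun G hG ↦ hi hG.1]
      positivity
  calc _ ≤ _ := gnpProb_mono hp fun G hG ↦ by
        simp only [LocallySparse, not_forall, not_lt] at hG
        obtain ⟨T, hT, hTt, hdense⟩ := hG
        have hcard : #T - 1 + 1 = #T := Nat.sub_add_cancel hT.card_pos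
        refine ⟨#T - 1, mem_range.2 ?_, ?_, T, ?_⟩
        · exact (Nat.sub_lt hT.card_pos one_pos).trans_le (card_finset_fin_le T)
        all_goals rw [hcard]
        exacts [hTt, ⟨rfl, hdense⟩]
    _ ≤ ∑ i ∈ range n, 125 / (n * p) * (1 / 2) ^ i :=
        (gnpProb_exists_mem_le hp _ _).trans (sum_le_sum hsize)
    _ ≤ 125 / (n * p) * 2 := by
        rw [← mul_sum]
        gcongr
        exact sum_geometric_two_le n
    _ = 250 / (n * p) := by ring

end SmallSets

/-! ### Large vertex sets in `G(n, p)` -/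

section LargeSets

variable {n : ℕ} {p : ℝ}

lemma gnpProb_subset_and_disjoint_le (hp : p ∈ Set.Icc 0 1) {A F : Finset (Sym2 (Fin n))}
    (hA : A ⊆ pairsIn univ) (hF : F ⊆ pairsIn univ) (hAF : Disjoint A F) :
    gnpProb n p (fun G ↦ (∀ e ∈ A, e ∈ G.edgeSet) ∧ ∀ e ∈ F, e ∉ G.edgeSet) ≤
      p ^ #A * Real.exp (-(p * #F)) := by
  have hmoment := pow_mul_gnpProb_edgeCount_le hp hA hF hAF 0 le_rfl zero_le_one
  simp only [pow_zero, one_mul, Nat.le_zero, edgeCount, card_eq_zero, filter_eq_empty_iff]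
    at hmoment
  refine hmoment.trans (mul_le_mul_of_nonneg_left ?_ (pow_nonneg hp.1 _))
  exact (one_sub_add_mul_pow_le_exp hp le_rfl _).trans_eq (by ring_nf)

lemma gnpProb_forall_not_adj_le (hp : p ∈ Set.Icc 0 1) {A B : Finset (Fin n)}
    (hAB : Disjoint A B) :
    gnpProb n p (fun G ↦ ∀ a ∈ A, ∀ b ∈ B, ¬ G.Adj a b) ≤ Real.exp (-(p * (#A * #B))) := by
  have hempty := gnpProb_subset_and_disjoint_le hp (empty_subset _) (pairsBetween_subset hAB)
    (disjoint_empty_left _)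
  rw [card_pairsBetween hAB, card_empty, pow_zero, one_mul, Nat.cast_mul] at hempty
  refine (gnpProb_mono hp fun G hG ↦ ⟨by simp, ?_⟩).trans hempty
  simp only [pairsBetween, forall_mem_image, mem_product, Prod.forall]
  exact fun a b h ↦ hG a h.1 b h.2

lemma sum_pow_card_le_exp {b : ℝ} (hb : 0 ≤ b) :
    ∑ A : Finset (Fin n), b ^ #A ≤ Real.exp (n * b) := by
  have hsum := Fintype.sum_pow_mul_eq_add_pow (Fin n) b 1
  simp only [one_pow, mul_one, Fintype.card_fin] at hsum
  rw [hsum, Real.exp_nat_mul]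
  exact pow_le_pow_left₀ (by positivity) (Real.add_one_le_exp b) n

lemma two_pow_le_exp (n : ℕ) : (2 : ℝ) ^ n ≤ Real.exp n := by
  simpa using sum_pow_card_le_exp (n := n) zero_le_one

lemma gnpProb_card_le_and_forall_not_adj_le (hp : p ∈ Set.Icc 0 1) {V₀ A T : Finset (Fin n)}
    {s k c : ℝ} (hc0 : 0 ≤ c) (hc : c ≤ p * (#V₀ - 3 * k)) (hsA : s < #A) (hAk : #A ≤ k)
    (hTA : #T ≤ 2 * #A) :
    gnpProb n p (fun G ↦ ∀ a ∈ A, ∀ b ∈ V₀ \ (T ∪ A), ¬ G.Adj a b) ≤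
      Real.exp (-(c / 6)) ^ #A * Real.exp (-(c / 6)) ^ #T * Real.exp (-(c * s / 3)) := by
  have hAB : Disjoint A (V₀ \ (T ∪ A)) :=
    disjoint_sdiff.mono_left subset_union_right
  have hcard : (#V₀ : ℝ) - 3 * k ≤ #(V₀ \ (T ∪ A)) := by
    have hnat : #V₀ ≤ #(V₀ \ (T ∪ A)) + 3 * #A := by
      have := le_card_sdiff (T ∪ A) V₀
      have := card_union_le T A
      omega
    have hreal : (#V₀ : ℝ) ≤ #(V₀ \ (T ∪ A)) + 3 * #A := mod_cast hnat
    linarith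
  have hTA' : (#T : ℝ) ≤ 2 * #A := mod_cast hTA
  have hcB : c * #A ≤ p * (#A * #(V₀ \ (T ∪ A))) := by
    rw [mul_left_comm, mul_comm]
    exact mul_le_mul_of_nonneg_left (hc.trans (mul_le_mul_of_nonneg_left hcard hp.1))
      (Nat.cast_nonneg _)
  refine (gnpProb_forall_not_adj_le hp hAB).trans ?_
  rw [← Real.exp_nat_mul, ← Real.exp_nat_mul, ← Real.exp_add, ← Real.exp_add, Real.exp_le_exp]
  nlinarith [mul_le_mul_of_nonneg_left hTA' hc0, mul_le_mul_of_nonneg_left hsA.le hc0]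

lemma gnpProb_not_expandsBetween_le (hp : p ∈ Set.Icc 0 1) {V₀ : Finset (Fin n)} {s k c : ℝ}
    (hc0 : 0 ≤ c) (hc : c ≤ p * (#V₀ - 3 * k)) :
    gnpProb n p (fun G ↦ ¬ ExpandsBetween G V₀ s k) ≤
      Real.exp (2 * n * Real.exp (-(c / 6)) - c * s / 3) := by
  set b := Real.exp (-(c / 6))
  let I : Finset (Finset (Fin n) × Finset (Fin n)) := {x | s < #x.1 ∧ #x.1 ≤ k ∧ #x.2 ≤ 2 * #x.1}
  calc _ ≤ gnpProb n p (fun G ↦ ∃ x ∈ I, ∀ a ∈ x.1, ∀ b ∈ V₀ \ (x.2 ∪ x.1), ¬ G.Adj a b) := by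
        refine gnpProb_mono hp fun G hG ↦ ?_
        simp only [ExpandsBetween, not_forall, not_le] at hG
        obtain ⟨A, hsA, hAk, hlt⟩ := hG
        refine ⟨(A, extNeighbors G V₀ A), by simp [I, hsA, hAk, hlt.le], fun a ha z hz hadj ↦ ?_⟩
        simp only [mem_sdiff, mem_union, mem_extNeighbors] at hz
        exact hz.2 (or_iff_not_imp_right.2 fun hzA ↦ ⟨hz.1, hzA, a, ha, hadj⟩)
    _ ≤ ∑ x ∈ I, b ^ #x.1 * b ^ #x.2 * Real.exp (-(c * s / 3)) := by
        refine (gnpProb_exists_mem_le hp _ _).trans (sum_le_sum fun x hx ↦ ?_)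
        obtain ⟨hsA, hAk, hTA⟩ := (mem_filter.1 hx).2
        exact gnpProb_card_le_and_forall_not_adj_le hp hc0 hc hsA hAk hTA
    _ ≤ ∑ x : Finset (Fin n) × Finset (Fin n), b ^ #x.1 * b ^ #x.2 * Real.exp (-(c * s / 3)) :=
        sum_le_sum_of_subset_of_nonneg (subset_univ I) fun _ _ _ ↦ by positivity
    _ = (∑ A : Finset (Fin n), b ^ #A) * (∑ A : Finset (Fin n), b ^ #A) *
          Real.exp (-(c * s / 3)) := by
        rw [← sum_mul, Fintype.sum_prod_type, sum_mul_sum]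
    _ ≤ Real.exp (n * b) * Real.exp (n * b) * Real.exp (-(c * s / 3)) := by
        gcongr <;> exact sum_pow_card_le_exp (Real.exp_pos _).le
    _ = Real.exp (2 * n * b - c * s / 3) := by
        rw [← Real.exp_add, ← Real.exp_add]
        ring_nf

lemma gnpProb_not_largeSetsJoined_le (hp : p ∈ Set.Icc 0 1) {k : ℝ} (hk : 0 ≤ k) :
    gnpProb n p (fun G ↦ ¬ LargeSetsJoined G k) ≤ Real.exp (2 * n - p * k ^ 2) := by
  let I : Finset (Finset (Fin n) × Finset (Fin n)) := {x | Disjoint x.1 x.2 ∧ k < #x.1 ∧ k < #x.2}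
  have hI : (#I : ℝ) ≤ Real.exp n * Real.exp n := by
    calc (#I : ℝ) ≤ 2 ^ n * 2 ^ n := mod_cast (card_le_univ I).trans_eq (by simp)
      _ ≤ Real.exp n * Real.exp n := by gcongr <;> exact two_pow_le_exp n
  have hpair : ∀ x ∈ I, gnpProb n p (fun G ↦ ∀ a ∈ x.1, ∀ b ∈ x.2, ¬ G.Adj a b) ≤
      Real.exp (-(p * k ^ 2)) := by
    rintro ⟨A, B⟩ hx
    obtain ⟨hAB, hA, hB⟩ := (mem_filter.1 hx).2
    refine (gnpProb_forall_not_adj_le hp hAB).trans (Real.exp_le_exp.2 (neg_le_neg ?_))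
    rw [sq]
    exact mul_le_mul_of_nonneg_left (mul_le_mul hA.le hB.le hk (Nat.cast_nonneg _)) hp.1
  calc _ ≤ gnpProb n p (fun G ↦ ∃ x ∈ I, ∀ a ∈ x.1, ∀ b ∈ x.2, ¬ G.Adj a b) := by
        refine gnpProb_mono hp fun G hG ↦ ?_
        simp only [LargeSetsJoined, not_forall, not_exists, not_and] at hG
        obtain ⟨A, B, hAB, hA, hB, hno⟩ := hG
        exact ⟨(A, B), mem_filter.2 ⟨mem_univ _, hAB, hA, hB⟩, hno⟩
    _ ≤ #I * Real.exp (-(p * k ^ 2)) := gnpProb_exists_mem_le_card_mul hp hpair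
    _ ≤ Real.exp n * Real.exp n * Real.exp (-(p * k ^ 2)) := by gcongr
    _ = Real.exp (2 * n - p * k ^ 2) := by
        rw [← Real.exp_add, ← Real.exp_add]
        ring_nf

lemma gnpProb_not_ncard_edgeSet_le_le (hp : p ∈ Set.Icc 0 1) {m : ℕ}
    (hm : 2 * (p * n ^ 2) ≤ m + 1) :
    gnpProb n p (fun G ↦ ¬ G.edgeSet.ncard ≤ m) ≤ Real.exp (-(p * n ^ 2)) := by
  have hpairs : p * #(pairsIn (univ : Finset (Fin n))) ≤ p * ((n : ℝ) ^ 2 / 2) := by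
    refine mul_le_mul_of_nonneg_left ((card_pairsIn_le _).trans_eq ?_) hp.1
    rw [card_univ, Fintype.card_fin]
  have hpairs0 : 0 ≤ p * #(pairsIn (univ : Finset (Fin n))) := mul_nonneg hp.1 (by positivity)
  have hchernoff := (pow_mul_gnpProb_le_edgeCount hp (F := pairsIn (univ : Finset (Fin n)))
    subset_rfl (m + 1) (Real.one_le_exp zero_le_one)).trans
    (one_sub_add_mul_pow_le_exp hp (Real.exp_pos 1).le _)
  rw [← Real.exp_nat_mul, mul_one, ← le_div_iff₀' (Real.exp_pos _), ← Real.exp_sub] at hchernoff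
  simp only [not_le, ← Nat.succ_le_iff, ← edgeCount_pairsIn_univ]
  refine hchernoff.trans (Real.exp_le_exp.2 ?_)
  push_cast
  nlinarith [Real.exp_one_lt_d9]

lemma gnpProb_not_exists_le_le (hp : p ∈ Set.Icc 0 1) {δ : ℝ} (hδ : δ ∈ Set.Icc 0 1)
    (P : SimpleGraph (Fin n) → Prop) :
    gnpProb n p (fun G ↦ ¬ ∃ H ≤ G, P H) ≤ gnpProb n (δ * p) (fun G ↦ ¬ P G) := by
  linarith [gnpProb_mul_le_gnpProb_exists_le hp hδ P, gnpProb_add_gnpProb_not (p := δ * p) P,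
    gnpProb_add_gnpProb_not (p := p) fun G ↦ ∃ H ≤ G, P H]

lemma gnpProb_not_exists_sparse_expander_le (hp : p ∈ Set.Icc 0 1) {δ : ℝ} (hδ : δ ∈ Set.Icc 0 1)
    {V₀ : Finset (Fin n)} {s k c : ℝ} (hk : 0 ≤ k) (hc0 : 0 ≤ c)
    (hc : c ≤ δ * p * (#V₀ - 3 * k)) {m : ℕ} (hm : 2 * (δ * p * n ^ 2) ≤ m + 1) :
    gnpProb n p (fun G ↦ ¬ ∃ Γ ≤ G, Γ.edgeSet.ncard ≤ m ∧ ExpandsBetween Γ V₀ s k ∧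
        LargeSetsJoined Γ k) ≤
      Real.exp (-(δ * p * n ^ 2)) + (Real.exp (2 * n * Real.exp (-(c / 6)) - c * s / 3) +
        Real.exp (2 * n - δ * p * k ^ 2)) := by
  have hδp : δ * p ∈ Set.Icc 0 1 := unitInterval.mul_mem hδ hp
  refine (gnpProb_not_exists_le_le hp hδ _).trans ((gnpProb_not_and_le hδp _ _).trans ?_)
  refine add_le_add (gnpProb_not_ncard_edgeSet_le_le hδp hm) ?_
  exact (gnpProb_not_and_le hδp _ _).trans (add_le_add (gnpProb_not_expandsBetween_le hδp hc0 hc)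
    (gnpProb_not_largeSetsJoined_le hδp hk))

lemma boosters_subset_pairsIn_univ (Γ : SimpleGraph (Fin n)) (X : Finset (Fin n)) (u v : Fin n) :
    boosters Γ X u v ⊆ pairsIn univ := by
  intro e he
  obtain ⟨y, z, hends, rfl⟩ := mem_boosters.1 he
  exact mk_mem_pairsIn.2 ⟨mem_univ y, mem_univ z, hends.ne⟩

lemma gnpProb_le_and_avoids_boosters_le (hp : p ∈ Set.Icc 0 1) {Γ : SimpleGraph (Fin n)}
    {X : Finset (Fin n)} {u v : Fin n} {M : ℕ} {k r : ℝ} (hr : 0 ≤ r)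
    (hM : Γ.edgeSet.ncard ≤ M) (hk : k ^ 2 / 2 ≤ #(boosters Γ X u v))
    (hΓ : ∀ e ∈ boosters Γ X u v, e ∉ Γ.edgeSet) :
    gnpProb n p (fun G ↦ Γ ≤ G ∧ ∀ e ∈ boosters Γ X u v, e ∉ G.edgeSet) ≤
      (p * Real.exp (-r)) ^ Γ.edgeSet.ncard * Real.exp (r * M - p * k ^ 2 / 2) := by
  let A : Finset (Sym2 (Fin n)) := {e ∈ pairsIn univ | e ∈ Γ.edgeSet}
  have hAΓ : Disjoint A (boosters Γ X u v) :=
    disjoint_left.2 fun e heA heB ↦ hΓ e heB (mem_filter.1 heA).2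
  have hcard : #A = Γ.edgeSet.ncard := edgeCount_pairsIn_univ Γ
  have hM' : r * (Γ.edgeSet.ncard : ℝ) ≤ r * M := by gcongr
  have hk' : p * (k ^ 2 / 2) ≤ p * #(boosters Γ X u v) := mul_le_mul_of_nonneg_left hk hp.1
  calc _ ≤ gnpProb n p (fun G ↦ (∀ e ∈ A, e ∈ G.edgeSet) ∧
          ∀ e ∈ boosters Γ X u v, e ∉ G.edgeSet) :=
        gnpProb_mono hp fun G hG ↦
          ⟨fun e he ↦ SimpleGraph.edgeSet_mono hG.1 (mem_filter.1 he).2, hG.2⟩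
    _ ≤ p ^ #A * Real.exp (-(p * #(boosters Γ X u v))) :=
        gnpProb_subset_and_disjoint_le hp (filter_subset _ _)
          (boosters_subset_pairsIn_univ Γ X u v) hAΓ
    _ ≤ _ := by
        rw [hcard, mul_pow, mul_assoc, ← Real.exp_nat_mul, ← Real.exp_add]
        refine mul_le_mul_of_nonneg_left (Real.exp_le_exp.2 ?_) (pow_nonneg hp.1 _)
        linarith

lemma sum_pow_ncard_edgeSet_le_exp {a : ℝ} (ha : 0 ≤ a) :
    ∑ Γ : SimpleGraph (Fin n), a ^ Γ.edgeSet.ncard ≤ Real.exp (a * n ^ 2 / 2) := by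
  rw [sum_pow_ncard_edgeSet]
  refine (pow_le_pow_left₀ (by positivity) (Real.add_one_le_exp a) _).trans ?_
  rw [← Real.exp_nat_mul, Real.exp_le_exp]
  have hpairs := mul_le_mul_of_nonneg_right (card_pairsIn_le (univ : Finset (Fin n))) ha
  rw [card_univ, Fintype.card_fin] at hpairs
  linarith

/-- The weight `exp (r * (M - e(Γ)))`, at least `1`, keeps the sum over the sparse graphs `Γ`
small. -/
lemma gnpProb_not_hitsBoosters_le (hp : p ∈ Set.Icc 0 1) {M : ℕ} {k r : ℝ} (hr : 0 ≤ r) :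
    gnpProb n p (fun G ↦ ¬ HitsBoosters G M k) ≤
      Real.exp (3 * n + r * M + Real.exp (-r) * (p * n ^ 2) / 2 - p * k ^ 2 / 2) := by
  set a := p * Real.exp (-r)
  have ha : 0 ≤ a := mul_nonneg hp.1 (Real.exp_pos _).le
  set b := Real.exp (r * M - p * k ^ 2 / 2)
  let I : Finset (SimpleGraph (Fin n) × Finset (Fin n) × Fin n × Fin n) :=
    {x | x.1.edgeSet.ncard ≤ M ∧ k ^ 2 / 2 ≤ #(boosters x.1 x.2.1 x.2.2.1 x.2.2.2) ∧
      ∀ e ∈ boosters x.1 x.2.1 x.2.2.1 x.2.2.2, e ∉ x.1.edgeSet}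
  calc _ ≤ gnpProb n p (fun G ↦ ∃ x ∈ I, x.1 ≤ G ∧
          ∀ e ∈ boosters x.1 x.2.1 x.2.2.1 x.2.2.2, e ∉ G.edgeSet) := by
        refine gnpProb_mono hp fun G hG ↦ ?_
        simp only [HitsBoosters, not_forall, not_exists, not_and] at hG
        obtain ⟨Γ, X, u, v, hle, hM, hk, hΓ, hno⟩ := hG
        exact ⟨(Γ, X, u, v), mem_filter.2 ⟨mem_univ _, hM, hk, hΓ⟩, hle, hno⟩
    _ ≤ ∑ x ∈ I, a ^ x.1.edgeSet.ncard * b := by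
        refine (gnpProb_exists_mem_le hp _ _).trans (sum_le_sum fun x hx ↦ ?_)
        obtain ⟨hM, hk, hΓ⟩ := (mem_filter.1 hx).2
        exact gnpProb_le_and_avoids_boosters_le hp hr hM hk hΓ
    _ ≤ ∑ x : SimpleGraph (Fin n) × Finset (Fin n) × Fin n × Fin n, a ^ x.1.edgeSet.ncard * b :=
        sum_le_sum_of_subset_of_nonneg (subset_univ I) fun _ _ _ ↦ by positivity
    _ = 2 ^ n * (n * n) * ((∑ Γ : SimpleGraph (Fin n), a ^ Γ.edgeSet.ncard) * b) := by
        rw [Fintype.sum_prod_type, sum_mul, mul_sum]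
        simp
    _ ≤ Real.exp n * (Real.exp n * Real.exp n) * (Real.exp (a * n ^ 2 / 2) * b) := by
        have hn : (n : ℝ) ≤ Real.exp n := by linarith [Real.add_one_le_exp (n : ℝ)]
        gcongr
        exacts [two_pow_le_exp n, sum_pow_ncard_edgeSet_le_exp ha]
    _ = Real.exp (3 * n + r * M + Real.exp (-r) * (p * n ^ 2) / 2 - p * k ^ 2 / 2) := by
        simp only [← Real.exp_add, a, b]
        ring_nf

end LargeSets

/-! ### High probability -/

open Filter Topology

/-- The property `P n` holds with high probability in `G(n, p n)`. -/
def Whp (p : ℕ → ℝ) (P : ∀ n : ℕ, SimpleGraph (Fin n) → Prop) : Prop :=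
  Tendsto (fun n ↦ gnpProb n (p n) (P n)) atTop (𝓝 1)

namespace Whp

variable {p : ℕ → ℝ} {P Q : ∀ n : ℕ, SimpleGraph (Fin n) → Prop}

lemma tendsto_gnpProb_not (hP : Whp p P) :
    Tendsto (fun n ↦ gnpProb n (p n) fun G ↦ ¬ P n G) atTop (𝓝 0) := by
  have hsub := hP.const_sub 1
  rw [sub_self] at hsub
  exact hsub.congr fun n ↦ by linarith [gnpProb_add_gnpProb_not (p := p n) (P n)]

lemma of_gnpProb_not_le (hp : ∀ n, p n ∈ Set.Icc 0 1) {f : ℕ → ℝ} (hf : Tendsto f atTop (𝓝 0))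
    (h : ∀ᶠ n in atTop, gnpProb n (p n) (fun G ↦ ¬ P n G) ≤ f n) : Whp p P := by
  have hlower := hf.const_sub 1
  rw [sub_zero] at hlower
  refine tendsto_of_tendsto_of_tendsto_of_le_of_le' hlower tendsto_const_nhds ?_
    (.of_forall fun n ↦ gnpProb_le_one (hp n) _)
  filter_upwards [h] with n hn
  linarith [gnpProb_add_gnpProb_not (p := p n) (P n)]

lemma mono (hp : ∀ n, p n ∈ Set.Icc 0 1) (hP : Whp p P)
    (h : ∀ᶠ n in atTop, ∀ G, P n G → Q n G) : Whp p Q := by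
  refine of_gnpProb_not_le hp hP.tendsto_gnpProb_not ?_
  filter_upwards [h] with n hn
  exact gnpProb_mono (hp n) fun G ↦ mt (hn G)

lemma and (hp : ∀ n, p n ∈ Set.Icc 0 1) (hP : Whp p P) (hQ : Whp p Q) :
    Whp p fun n G ↦ P n G ∧ Q n G := by
  have hadd := hP.tendsto_gnpProb_not.add hQ.tendsto_gnpProb_not
  rw [add_zero] at hadd
  exact of_gnpProb_not_le hp hadd (.of_forall fun n ↦ gnpProb_not_and_le (hp n) _ _)

lemma exists_le (hp : ∀ n, p n ∈ Set.Icc 0 1) {q : ℕ → ℝ} (hq : ∀ n, q n ∈ Set.Icc 0 (p n))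
    (hP : Whp q P) : Whp p fun n G ↦ ∃ H ≤ G, P n H :=
  tendsto_of_tendsto_of_tendsto_of_le_of_le hP tendsto_const_nhds
    (fun n ↦ gnpProb_le_gnpProb_exists_le (hp n) (hq n) _) fun n ↦ gnpProb_le_one (hp n) _

end Whp

section Asymptotics

lemma tendsto_pow_mul_exp_neg_mul {x : ℕ → ℝ} (hx : Tendsto x atTop atTop) {c : ℝ} (hc : 0 < c)
    (m : ℕ) : Tendsto (fun n ↦ x n ^ m * Real.exp (-(c * x n))) atTop (𝓝 0) := by
  simpa [Function.comp_def] using (tendsto_rpow_mul_exp_neg_mul_atTop_nhds_zero m c hc).comp hx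

lemma tendsto_exp_zero_of_mul_le {x f : ℕ → ℝ} (hx : Tendsto x atTop atTop) {a c : ℝ} (hc : 0 < c)
    (hf : ∀ᶠ n : ℕ in atTop, f n ≤ a * n - c * (x n * n)) :
    Tendsto (fun n ↦ Real.exp (f n)) atTop (𝓝 0) := by
  refine Real.tendsto_exp_atBot.comp <| tendsto_atBot_mono' _ ?_ <|
    tendsto_neg_atTop_atBot.comp tendsto_natCast_atTop_atTop
  filter_upwards [hf, (hx.const_mul_atTop hc).eventually_ge_atTop (a + 1)] with n hn hcx
  simp only [Function.comp_apply]
  linarith [mul_le_mul_of_nonneg_right hcx (Nat.cast_nonneg (α := ℝ) n)]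

lemma tendsto_log_natCast : Tendsto (fun n : ℕ ↦ Real.log n) atTop atTop :=
  Real.tendsto_log_atTop.comp tendsto_natCast_atTop_atTop

lemma tendsto_log_sub_log_log :
    Tendsto (fun n : ℕ ↦ Real.log n - Real.log (Real.log n)) atTop atTop := by
  have hbound := Real.isLittleO_log_id_atTop.bound (c := 1 / 2) (by norm_num)
  refine tendsto_atTop_mono' _ ?_
    (tendsto_log_natCast.const_mul_atTop (show (0 : ℝ) < 1 / 2 by norm_num))
  filter_upwards [tendsto_log_natCast.eventually hbound] with n hn
  rw [id, Real.norm_of_nonneg (Real.log_natCast_nonneg n)] at hn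
  linarith [(Real.le_norm_self _).trans hn]

variable {p : ℕ → ℝ}

lemma exists_truncation (hp : ∀ n, 0 ≤ p n)
    (hlog : Tendsto (fun n : ℕ ↦ n * p n - Real.log n - Real.log (Real.log n)) atTop atTop) :
    ∃ q : ℕ → ℝ, (∀ n, q n ∈ Set.Icc 0 (p n)) ∧ (∀ n, n * q n ≤ 2 * Real.log n) ∧
      Tendsto (fun n : ℕ ↦ n * q n - Real.log n - Real.log (Real.log n)) atTop atTop := by
  have hmul (n : ℕ) : n * min (p n) (2 * Real.log n / n) = min (n * p n) (2 * Real.log n) := by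
    rcases eq_or_ne n 0 with rfl | hn
    · simp
    · have hn' : (n : ℝ) ≠ 0 := mod_cast hn
      rw [mul_min_of_nonneg _ _ n.cast_nonneg, mul_div_cancel₀ _ hn']
  refine ⟨fun n ↦ min (p n) (2 * Real.log n / n), fun n ↦ ⟨le_min (hp n) ?_, min_le_left _ _⟩,
    fun n ↦ (hmul n).trans_le (min_le_right _ _), tendsto_atTop.2 fun b ↦ ?_⟩
  · have := Real.log_natCast_nonneg n
    positivity
  · filter_upwards [hlog.eventually_ge_atTop b, tendsto_log_sub_log_log.eventually_ge_atTop b]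
      with n hn hlog
    rw [hmul]
    rcases min_choice (n * p n) (2 * Real.log n) with h | h <;> rw [h] <;> linarith

lemma eventually_log_le_mul
    (hlog : Tendsto (fun n : ℕ ↦ n * p n - Real.log n - Real.log (Real.log n)) atTop atTop) :
    ∀ᶠ n : ℕ in atTop, Real.log n ≤ n * p n := by
  filter_upwards [hlog.eventually_ge_atTop 0, tendsto_log_natCast.eventually_ge_atTop 1]
    with n hn h1
  linarith [Real.log_nonneg h1]

lemma tendsto_zero_of_mul_le_two_mul_log (hp : ∀ n, 0 ≤ p n)
    (hle : ∀ n : ℕ, n * p n ≤ 2 * Real.log n) : Tendsto p atTop (𝓝 0) := by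
  have hdiv : Tendsto (fun n : ℕ ↦ 2 * (Real.log n / n)) atTop (𝓝 0) := by
    simpa using (Real.isLittleO_log_id_atTop.tendsto_div_nhds_zero.comp
      tendsto_natCast_atTop_atTop).const_mul 2
  refine squeeze_zero' (.of_forall hp) ?_ hdiv
  filter_upwards [eventually_gt_atTop 0] with n hn
  have hn' : (0 : ℝ) < n := mod_cast hn
  rw [← mul_div_assoc, le_div_iff₀' hn']
  exact hle n

lemma tendsto_mul_mul_exp_two_sub (hp : ∀ n, 0 ≤ p n)
    (hle : ∀ n : ℕ, n * p n ≤ 2 * Real.log n)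
    (hlog : Tendsto (fun n : ℕ ↦ n * p n - Real.log n - Real.log (Real.log n)) atTop atTop) :
    Tendsto (fun n : ℕ ↦ n * (n * p n * Real.exp (2 - n * p n))) atTop (𝓝 0) := by
  have hexp := (Real.tendsto_exp_neg_atTop_nhds_zero.comp hlog).const_mul (2 * Real.exp 2)
  rw [mul_zero] at hexp
  refine squeeze_zero' ?_ ?_ hexp
  · exact .of_forall fun n ↦ by have := hp n; positivity
  · filter_upwards [eventually_gt_atTop 0, tendsto_log_natCast.eventually_gt_atTop 0] with n hn hlog
    have hn' : (0 : ℝ) < n := mod_cast hn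
    have hsplit : -(n * p n - Real.log n - Real.log (Real.log n)) =
        Real.log n + Real.log (Real.log n) + -(n * p n) := by ring
    calc n * (n * p n * Real.exp (2 - n * p n))
        ≤ n * (2 * Real.log n * Real.exp (2 - n * p n)) :=
          mul_le_mul_of_nonneg_left (mul_le_mul_of_nonneg_right (hle n) (Real.exp_pos _).le) hn'.le
      _ = 2 * Real.exp 2 * Real.exp (-(n * p n - Real.log n - Real.log (Real.log n))) := by
        rw [hsplit, sub_eq_add_neg, Real.exp_add 2, Real.exp_add, Real.exp_add, Real.exp_log hn',
          Real.exp_log hlog]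
        ring

/-- The exponent is `n / x` times a factor tending to `-c / 3`, where `x = n p n`. -/
lemma tendsto_exp_expansion_error (hp : Tendsto p atTop (𝓝 0))
    (hnp : Tendsto (fun n : ℕ ↦ n * p n) atTop atTop) {c : ℝ} (hc : 0 < c) :
    Tendsto (fun n : ℕ ↦ Real.exp (2 * n * Real.exp (-(c * (n * p n) / 6)) -
      c * (n * p n) * (n / (n * p n) ^ 2) / 3)) atTop (𝓝 0) := by
  have hpos : ∀ᶠ n : ℕ in atTop, 0 < p n := by
    filter_upwards [hnp.eventually_gt_atTop 0] with n hn
    exact pos_of_mul_pos_right hn n.cast_nonneg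
  have hinv : Tendsto (fun n ↦ (p n)⁻¹) atTop atTop :=
    (tendsto_nhdsWithin_iff.2 ⟨hp, hpos⟩).inv_tendsto_nhdsGT_zero
  have hfactor : Tendsto (fun n : ℕ ↦ 2 * ((n * p n) ^ 1 * Real.exp (-(c / 6 * (n * p n)))) - c / 3)
      atTop (𝓝 (2 * 0 - c / 3)) :=
    ((tendsto_pow_mul_exp_neg_mul hnp (by positivity) 1).const_mul 2).sub_const _
  refine Real.tendsto_exp_atBot.comp ((hinv.atTop_mul_neg (by linarith) hfactor).congr' ?_)
  filter_upwards [hpos, eventually_ne_atTop 0] with n hpn hn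
  have hn' : (n : ℝ) ≠ 0 := mod_cast hn
  rw [show c / 6 * (n * p n) = c * (n * p n) / 6 by ring]
  field_simp

end Asymptotics

section WhpEvents

variable {p : ℕ → ℝ}

lemma whp_forall_two_le_degree (hp : ∀ n, p n ∈ Set.Icc 0 1)
    (hnp : Tendsto (fun n : ℕ ↦ n * p n) atTop atTop) (hle : ∀ n : ℕ, n * p n ≤ 2 * Real.log n)
    (hlog : Tendsto (fun n : ℕ ↦ n * p n - Real.log n - Real.log (Real.log n)) atTop atTop) :
    Whp p fun _ G ↦ ∀ v, 2 ≤ G.degree v := by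
  refine .of_gnpProb_not_le hp (tendsto_mul_mul_exp_two_sub (fun n ↦ (hp n).1) hle hlog) ?_
  filter_upwards [hnp.eventually_ge_atTop 1] with n hn
  exact gnpProb_not_forall_two_le_degree_le (hp n) hn

lemma whp_sparseNearSmall (hp : ∀ n, p n ∈ Set.Icc 0 1)
    (hlog : ∀ᶠ n : ℕ in atTop, Real.log n ≤ n * p n) : Whp p fun _ G ↦ SparseNearSmall G := by
  have hnp : Tendsto (fun n : ℕ ↦ n * p n) atTop atTop :=
    tendsto_atTop_mono' _ hlog tendsto_log_natCast
  have hzero : Tendsto (fun n : ℕ ↦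
      6 * (2 ^ 15 * (Real.exp 12 * ((n * p n) ^ 65 * Real.exp (-(n * p n)))))) atTop (𝓝 0) := by
    simpa using (((tendsto_pow_mul_exp_neg_mul hnp one_pos 65).const_mul (Real.exp 12)).const_mul
      (2 ^ 15)).const_mul 6
  refine .of_gnpProb_not_le hp hzero ?_
  filter_upwards [hnp.eventually_ge_atTop 1, hlog, eventually_gt_atTop 0] with n hn1 hlog hn
  refine gnpProb_not_sparseNearSmall_le (hp n) hn1 ?_
  rw [Real.exp_neg, ← div_eq_mul_inv, div_le_one (Real.exp_pos _)]
  exact (Real.log_le_iff_le_exp (mod_cast hn)).1 hlog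

lemma whp_locallySparse (hp : ∀ n, p n ∈ Set.Icc 0 1)
    (hnp : Tendsto (fun n : ℕ ↦ n * p n) atTop atTop) :
    Whp p fun n G ↦ LocallySparse G (5 * (n / (n * p n) ^ 2)) := by
  refine .of_gnpProb_not_le hp (hnp.const_div_atTop 250) ?_
  filter_upwards [hnp.eventually_ge_atTop 250] with n hn
  exact gnpProb_not_locallySparse_le (hp n) hn

variable {V₀ : ∀ n : ℕ, Finset (Fin n)} {c : ℝ}

lemma whp_card_poorVertices_lt (hp : ∀ n, p n ∈ Set.Icc 0 1)
    (hnp : Tendsto (fun n : ℕ ↦ n * p n) atTop atTop) (hc : 0 < c)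
    (hV₀ : ∀ᶠ n : ℕ in atTop, c * n ≤ #(V₀ n)) {β : ℝ} (hβ : 0 < β) :
    Whp p fun n G ↦ #(poorVertices G (V₀ n)) < β * n := by
  have hzero := (tendsto_pow_mul_exp_neg_mul hnp hc 29).const_mul (1 / β * Real.exp 2)
  rw [mul_zero] at hzero
  refine .of_gnpProb_not_le hp hzero ?_
  filter_upwards [hnp.eventually_ge_atTop 1, hV₀, eventually_gt_atTop 0] with n hn1 hV hn
  have : (0 : ℝ) < n := mod_cast hn
  simp only [not_lt]
  refine (gnpProb_le_card_poorVertices_le (hp n) hn1 (V₀ n) (by positivity)).trans ?_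
  have hexp : 2 - p n * #(V₀ n) ≤ 2 + -(c * (n * p n)) := by
    linarith [mul_le_mul_of_nonneg_left hV (hp n).1]
  calc n / (β * n) * ((n * p n) ^ 29 * Real.exp (2 - p n * #(V₀ n)))
      ≤ n / (β * n) * ((n * p n) ^ 29 * Real.exp (2 + -(c * (n * p n)))) := by gcongr
    _ = 1 / β * Real.exp 2 * ((n * p n) ^ 29 * Real.exp (-(c * (n * p n)))) := by
      rw [Real.exp_add]
      field_simp

lemma whp_exists_sparse_expander (hp : ∀ n, p n ∈ Set.Icc 0 1) (hp0 : Tendsto p atTop (𝓝 0))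
    (hnp : Tendsto (fun n : ℕ ↦ n * p n) atTop atTop)
    (hV₀ : ∀ᶠ n : ℕ in atTop, c * n ≤ #(V₀ n)) {κ δ : ℝ} (hκ : 0 < κ) (hκc : 3 * κ < c)
    (hδ : δ ∈ Set.Ioc 0 1) :
    Whp p fun n G ↦ ∃ Γ ≤ G, Γ.edgeSet.ncard ≤ ⌊2 * (δ * (n * p n) * n)⌋₊ ∧
      ExpandsBetween Γ (V₀ n) (n / (n * p n) ^ 2) (κ * n) ∧ LargeSetsJoined Γ (κ * n) := by
  have hδ0 := hδ.1
  have hγ : 0 < δ * (c - 3 * κ) := mul_pos hδ0 (by linarith)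
  have hedges : Tendsto (fun n : ℕ ↦ Real.exp (-(δ * p n * n ^ 2))) atTop (𝓝 0) :=
    tendsto_exp_zero_of_mul_le (a := 0) hnp hδ0 (.of_forall fun n ↦ by linarith)
  have hjoined : Tendsto (fun n : ℕ ↦ Real.exp (2 * n - δ * p n * (κ * n) ^ 2)) atTop (𝓝 0) :=
    tendsto_exp_zero_of_mul_le (a := 2) (c := δ * κ ^ 2) hnp (by positivity)
      (.of_forall fun n ↦ by linarith)
  have hzero := hedges.add ((tendsto_exp_expansion_error hp0 hnp hγ).add hjoined)
  simp only [add_zero] at hzero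
  refine .of_gnpProb_not_le hp hzero ?_
  filter_upwards [hV₀] with n hV
  refine gnpProb_not_exists_sparse_expander_le (hp n) (Set.Ioc_subset_Icc_self hδ)
    (by positivity) (mul_nonneg hγ.le (mul_nonneg n.cast_nonneg (hp n).1)) ?_ ?_
  · linarith [mul_le_mul_of_nonneg_left hV (mul_nonneg hδ0.le (hp n).1)]
  · linarith [Nat.lt_floor_add_one (2 * (δ * (n * p n) * n))]

lemma exists_exp_neg_le_and_mul_le {a : ℝ} (ha : 0 < a) :
    ∃ r > 0, Real.exp (-r) ≤ a ∧ ∃ δ ∈ Set.Ioc (0 : ℝ) 1, r * δ ≤ a := by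
  obtain ⟨r, hr, hexp⟩ := ((eventually_gt_atTop 0).and
    (Real.tendsto_exp_neg_atTop_nhds_zero.eventually_le_const ha)).exists
  refine ⟨r, hr, hexp, min 1 (a / r), ⟨by positivity, min_le_left _ _⟩, ?_⟩
  rw [← le_div_iff₀' hr]
  exact min_le_right _ _

lemma exists_whp_hitsBoosters (hp : ∀ n, p n ∈ Set.Icc 0 1)
    (hnp : Tendsto (fun n : ℕ ↦ n * p n) atTop atTop) {κ : ℝ} (hκ : 0 < κ) :
    ∃ δ ∈ Set.Ioc (0 : ℝ) 1,
      Whp p fun n G ↦ HitsBoosters G ⌊3 * (δ * (n * p n) * n)⌋₊ (κ * n) := by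
  obtain ⟨r, hr, hexp, δ, hδ, hrδ⟩ := exists_exp_neg_le_and_mul_le (a := κ ^ 2 / 12) (by positivity)
  refine ⟨δ, hδ, .of_gnpProb_not_le hp ?_
    (.of_forall fun n ↦ gnpProb_not_hitsBoosters_le (hp n) hr.le)⟩
  refine tendsto_exp_zero_of_mul_le (a := 3) (c := κ ^ 2 / 8) hnp (by positivity) ?_
  filter_upwards [hnp.eventually_ge_atTop 0] with n hn
  have hδ0 := hδ.1
  have hx : 0 ≤ n * p n * n := by positivity
  have hM : r * ⌊3 * (δ * (n * p n) * n)⌋₊ ≤ r * (3 * (δ * (n * p n) * n)) := by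
    gcongr
    exact Nat.floor_le (by positivity)
  linarith [mul_le_mul_of_nonneg_right hrδ hx, mul_le_mul_of_nonneg_right hexp hx,
    mul_nonneg (sq_nonneg κ) hx]

end WhpEvents

section Main

variable {p : ℕ → ℝ} {ε : ℝ}

lemma exists_card_eq_floor (hε : ε ≤ 1) (n : ℕ) : ∃ V₀ : Finset (Fin n), #V₀ = ⌊ε * n⌋₊ := by
  have hfloor : ⌊ε * n⌋₊ ≤ #(univ : Finset (Fin n)) := by
    rw [card_univ, Fintype.card_fin]
    exact Nat.floor_le_of_le (mul_le_of_le_one_left n.cast_nonneg hε)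
  obtain ⟨V₀, -, hV₀⟩ := exists_subset_card_eq hfloor
  exact ⟨V₀, hV₀⟩

lemma exists_isReservoir_of_card_le {n : ℕ} {x δ : ℝ} {G : SimpleGraph (Fin n)}
    {V₀ : Finset (Fin n)} (hε : ε ∈ Set.Ioc 0 (1 / 2)) (hn : 4 ≤ n) (hδx : 32 ≤ δ * x)
    (hV₀ : #V₀ ≤ ε / 2 * n) (hdeg : ∀ v, 2 ≤ G.degree v) (hsparse : SparseNearSmall G)
    (hlocal : LocallySparse G (5 * (n / x ^ 2)))
    (hpoor : #(poorVertices G V₀) < ε / 120 * n)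
    (hexpander : ∃ Γ ≤ G, Γ.edgeSet.ncard ≤ ⌊2 * (δ * x * n)⌋₊ ∧
      ExpandsBetween Γ V₀ (n / x ^ 2) (ε / 24 * n) ∧ LargeSetsJoined Γ (ε / 24 * n))
    (hboost : HitsBoosters G ⌊3 * (δ * x * n)⌋₊ (ε / 24 * n)) :
    ∃ W : Finset (Fin n), #W ≤ ε * n ∧ IsReservoir G W := by
  obtain ⟨Γ, hle, hm, hexp, hjoined⟩ := hexpander
  obtain ⟨hε0, hε1⟩ := hε
  have hn' : (4 : ℝ) ≤ n := mod_cast hn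
  have hK : (⌊ε / 4 * n⌋₊ : ℝ) ≤ ε / 4 * n := Nat.floor_le (by positivity)
  have hmM : ⌊2 * (δ * x * n)⌋₊ + Fintype.card (Fin n) * 30 + (Fintype.card (Fin n) + 1) ≤
      ⌊3 * (δ * x * n)⌋₊ := by
    rw [Fintype.card_fin]
    refine Nat.le_floor ?_
    have hfloor : (⌊2 * (δ * x * n)⌋₊ : ℝ) ≤ 2 * (δ * x * n) := Nat.floor_le (by positivity)
    push_cast
    linarith [mul_le_mul_of_nonneg_right hδx (Nat.cast_nonneg (α := ℝ) n)]
  have hpoorK : #(poorVertices G V₀) * 30 ≤ ⌊ε / 4 * n⌋₊ := Nat.le_floor (by push_cast; linarith)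
  have hcard : 2 * (ε / 24 * n) + 2 + #V₀ + ⌊ε / 4 * n⌋₊ ≤ (Fintype.card (Fin n) : ℝ) := by
    rw [Fintype.card_fin]
    linarith [mul_le_mul_of_nonneg_right hε1 (Nat.cast_nonneg (α := ℝ) n)]
  obtain ⟨W, hWcard, hW⟩ := exists_isReservoir (by positivity) hdeg hsparse hlocal hle hm hexp
    hjoined hboost hmM hpoorK hcard
  refine ⟨W, ?_, hW⟩
  have hWcard' : (#W : ℝ) ≤ #V₀ + ⌊ε / 4 * n⌋₊ := mod_cast hWcard
  linarith [mul_pos hε0 (by linarith : (0 : ℝ) < n)]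

lemma whp_exists_isReservoir_of_mul_le (hp : ∀ n, p n ∈ Set.Icc 0 1)
    (hle : ∀ n : ℕ, n * p n ≤ 2 * Real.log n)
    (hlog : Tendsto (fun n : ℕ ↦ n * p n - Real.log n - Real.log (Real.log n)) atTop atTop)
    (hε : ε ∈ Set.Ioc 0 (1 / 2)) :
    Whp p fun n G ↦ ∃ W : Finset (Fin n), #W ≤ ε * n ∧ IsReservoir G W := by
  have hε0 := hε.1
  have hlogle := eventually_log_le_mul hlog
  have hnp : Tendsto (fun n : ℕ ↦ n * p n) atTop atTop :=
    tendsto_atTop_mono' _ hlogle tendsto_log_natCast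
  have hp0 := tendsto_zero_of_mul_le_two_mul_log (fun n ↦ (hp n).1) hle
  choose V₀ hV₀ using exists_card_eq_floor (ε := ε / 2) (by linarith [hε.2])
  have hV₀lower : ∀ᶠ n : ℕ in atTop, ε / 4 * n ≤ #(V₀ n) := by
    filter_upwards [(tendsto_natCast_atTop_atTop.const_mul_atTop hε0).eventually_ge_atTop 4]
      with n hn
    linarith [hV₀ n ▸ Nat.lt_floor_add_one (ε / 2 * n)]
  obtain ⟨δ, hδ, hboost⟩ := exists_whp_hitsBoosters hp hnp (κ := ε / 24) (by positivity)
  have hevents := (whp_forall_two_le_degree hp hnp hle hlog).and hp <|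
    (whp_sparseNearSmall hp hlogle).and hp <| (whp_locallySparse hp hnp).and hp <|
    (whp_card_poorVertices_lt hp hnp (by positivity) hV₀lower (β := ε / 120)
      (by positivity)).and hp <|
    (whp_exists_sparse_expander hp hp0 hnp hV₀lower (κ := ε / 24) (by positivity) (by linarith)
      hδ).and hp hboost
  refine hevents.mono hp ?_
  filter_upwards [eventually_ge_atTop 4, (hnp.const_mul_atTop hδ.1).eventually_ge_atTop 32]
    with n hn hδx G ⟨hdeg, hsparse, hlocal, hpoor, hexpander, hboost⟩
  have hV₀upper : #(V₀ n) ≤ ε / 2 * n := hV₀ n ▸ Nat.floor_le (by positivity)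
  exact exists_isReservoir_of_card_le hε hn hδx hV₀upper hdeg hsparse hlocal hpoor hexpander hboost

lemma whp_exists_isReservoir (hp : ∀ n, p n ∈ Set.Icc 0 1)
    (hlog : Tendsto (fun n : ℕ ↦ n * p n - Real.log n - Real.log (Real.log n)) atTop atTop)
    (hε : 0 < ε) : Whp p fun n G ↦ ∃ W : Finset (Fin n), #W ≤ ε * n ∧ IsReservoir G W := by
  obtain ⟨q, hqp, hqle, hqlog⟩ := exists_truncation (fun n ↦ (hp n).1) hlog
  have hq (n : ℕ) : q n ∈ Set.Icc 0 1 := ⟨(hqp n).1, (hqp n).2.trans (hp n).2⟩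
  have hη : min ε (1 / 2) ∈ Set.Ioc 0 (1 / 2) := ⟨by positivity, min_le_right _ _⟩
  refine ((whp_exists_isReservoir_of_mul_le hq hqle hqlog hη).exists_le hp hqp).mono hp
    (.of_forall ?_)
  rintro n G ⟨H, hHG, W, hWcard, hW⟩
  exact ⟨W, hWcard.trans (by gcongr; exact min_le_left _ _), hW.mono hHG⟩

end Main

theorem paths_extend_to_hamilton_cycles_general
    (ε : ℝ) (hε : 0 < ε)
    (p : ℕ → ℝ) (hp01 : ∀ n, 0 ≤ p n ∧ p n ≤ 1)
    (hp : Filter.Tendsto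
      (fun n : ℕ => n * p n - Real.log n - Real.log (Real.log n))
      Filter.atTop Filter.atTop) :
    Filter.Tendsto
      (fun n : ℕ => gnpProb n (p n) (fun G =>
        ∃ Vstar : Finset (Fin n), (Vstar.card : ℝ) ≤ ε * n ∧
          ∀ (u v : Fin n) (P : G.Walk u v), P.IsPath →
            (∀ x ∈ P.support, x ∉ Vstar) →
            ∃ (x : Fin n) (C : G.Walk x x), C.IsHamiltonianCycle ∧
              ∀ e ∈ P.edges, e ∈ C.edges))
      Filter.atTop (nhds 1) := by
  refine (whp_exists_isReservoir hp01 hp hε).mono hp01 ?_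
  filter_upwards [eventually_ge_atTop 3] with n hn G ⟨W, hWcard, hW⟩
  exact ⟨W, hWcard, fun u v P hP hPW ↦ hW.exists_isHamiltonianCycle (by simpa using hn) hP hPW⟩

/-- **Lemma (extending paths to Hamilton cycles).**
Let `ε > 0` and `p(n) = (log n + log log n + ω(1))/n`. Then whp `G ~ G(n, p(n))`
admits a partition `V(G) = V* ∪ V'` with `|V*| ≤ εn` such that every path `P` all
of whose vertices lie in `V'` and which has at most `2n/3` vertices can be extended
to a Hamilton cycle of `G`. -/
theorem paths_extend_to_hamilton_cycles
    (ε : ℝ) (hε : 0 < ε)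
    (p : ℕ → ℝ) (hp01 : ∀ n, 0 ≤ p n ∧ p n ≤ 1)
    (hp : Filter.Tendsto
      (fun n : ℕ => n * p n - Real.log n - Real.log (Real.log n))
      Filter.atTop Filter.atTop) :
    Filter.Tendsto
      (fun n : ℕ => gnpProb n (p n) (fun G =>
        ∃ Vstar : Finset (Fin n), (Vstar.card : ℝ) ≤ ε * n ∧
          ∀ (u v : Fin n) (P : G.Walk u v), P.IsPath →
            (∀ x ∈ P.support, x ∉ Vstar) →
            (P.support.length : ℝ) ≤ 2 * n / 3 →
            ∃ (x : Fin n) (C : G.Walk x x), C.IsHamiltonianCycle ∧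
              ∀ e ∈ P.edges, e ∈ C.edges))
      Filter.atTop (nhds 1) :=
  Whp.mono hp01 (paths_extend_to_hamilton_cycles_general ε hε p hp01 hp) <| .of_forall
    fun _ _ ⟨W, hWcard, hW⟩ ↦ ⟨W, hWcard, fun u v P hP hPW _ ↦ hW u v P hP hPW⟩
end

section
/- Let ε > 0 and let p : ℕ → [0,1] be a function satisfying n·p(n) − log n − log log n → ∞ and n·p(n) − log n − log log n = o(log log n) as n → ∞. Then with high probability the random graph G ~ G(n, p(n)) is such that every vertex set U ⊆ V(G) with |U| ≤ εn/100 spans at most ε|U|·(log n)/10 edges of G. -/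
/-!
For a fixed set `U` of `u` vertices the number of edges inside `U` is binomial with mean at most
`μ = d * u ^ 2 / (2 * n)`, where `n * p ≤ d`. A threshold `a = β * d * u` exceeds `μ` by the factor
`s ^ 2 = 2 * β * n / u`, which for `u ≤ α * n` and `α < 2 * β` is at least a constant `r ^ 2 > 1`.
The Chernoff bound with tilt `s` gives probability at most `s ^ (-(1 - s⁻¹) * a)`. There are at most
`(e * n / u) ^ u = (e * s ^ 2 / (2 * β)) ^ u` choices of `U`, so sets of size `u` contribute at most
the `u`-th power of `e / (2 * β) * r ^ (2 - (1 - r⁻¹) * β * d)`, which tends to `0` as `d → ∞`. The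
geometric series then bounds the failure probability.
-/

open Filter Finset MeasureTheory ProbabilityTheory Real SimpleGraph unitInterval
open scoped Asymptotics

section BinomialRandom

variable {V : Type*} {p : I}

instance measurableSingletonClass_simpleGraph [Countable V] :
    MeasurableSingletonClass (SimpleGraph V) where
  measurableSet_singleton G := by
    rw [← measurableEmbedding_edgeSet.measurableSet_image, Set.image_singleton]
    exact measurableSet_singleton _

lemma binomialRandom_real_singleton [Finite V] (G : SimpleGraph V) :
    G(V, p).real {G} =
      (p : ℝ) ^ G.edgeSet.ncard * (1 - p : ℝ) ^ ((Nat.card V).choose 2 - G.edgeSet.ncard) := by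
  simp [measureReal_def]

lemma gnpProb_eq_binomialRandom_real (n : ℕ) (P : SimpleGraph (Fin n) → Prop) :
    gnpProb n p P = G(Fin n, p).real {G | P G} := by
  classical
  have hP : {G | P G} = ((univ.filter P : Finset (SimpleGraph (Fin n))) : Set _) := by simp
  rw [hP, ← sum_measureReal_singleton, sum_filter, gnpProb]
  simp only [binomialRandom_real_singleton, Nat.card_fin]

open scoped Classical in
lemma sum_simpleGraph_eq_sum_powerset [Fintype V] {M : Type*} [AddCommMonoid M]
    (f : Finset (Sym2 V) → M) :
    ∑ G : SimpleGraph V, f G.edgeFinset =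
      ∑ s ∈ (⊤ : SimpleGraph V).edgeFinset.powerset, f s := by
  refine sum_bij' (fun G _ ↦ G.edgeFinset) (fun s _ ↦ fromEdgeSet (s : Set (Sym2 V)))
    (fun G _ ↦ mem_powerset.2 (edgeFinset_mono le_top)) (fun _ _ ↦ mem_univ _)
    (fun G _ ↦ by simp) (fun s hs ↦ ?_) (fun _ _ ↦ rfl)
  have hs' : ∀ e ∈ s, ¬ e.IsDiag := fun e he ↦ by simpa using mem_powerset.1 hs he
  ext e
  simpa using hs' e

open scoped Classical in
lemma integral_prod_edgeFinset [Fintype V] (f : Sym2 V → ℝ) :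
    ∫ G, ∏ e ∈ G.edgeFinset, f e ∂G(V, p) =
      ∏ e ∈ (⊤ : SimpleGraph V).edgeFinset, (p * f e + (1 - p)) := by
  rw [integral_fintype .of_finite, prod_add, ← sum_simpleGraph_eq_sum_powerset
    fun s ↦ (∏ e ∈ s, (p : ℝ) * f e) * ∏ e ∈ (⊤ : SimpleGraph V).edgeFinset \ s, (1 - p : ℝ)]
  refine sum_congr rfl fun G _ ↦ ?_
  rw [binomialRandom_real_singleton, ← coe_edgeFinset, Set.ncard_coe_finset, prod_mul_distrib,
    prod_const, prod_const, card_sdiff_of_subset (edgeFinset_mono le_top),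
    card_edgeFinset_top_eq_card_choose_two, Nat.card_eq_fintype_card, smul_eq_mul]
  ring

lemma edgeSet_sep_forall_mem_eq_inter [DecidableEq V] (G : SimpleGraph V) (U : Finset V) :
    {e ∈ G.edgeSet | ∀ v ∈ e, v ∈ U} = G.edgeSet ∩ ↑{e ∈ U.sym2 | ¬ e.IsDiag} := by
  ext e
  have hnotDiag : e ∈ G.edgeSet → ¬ e.IsDiag := G.not_isDiag_of_mem_edgeSet
  simp only [Set.mem_sep_iff, Set.mem_inter_iff, mem_coe, mem_filter, mem_sym2_iff]
  tauto

variable [Finite V]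

lemma mgf_ncard_edgeSet_inter {F : Finset (Sym2 V)} (hF : ∀ e ∈ F, ¬ e.IsDiag) (t : ℝ) :
    mgf (fun G : SimpleGraph V ↦ ((G.edgeSet ∩ ↑F).ncard : ℝ)) G(V, p) t =
      (1 + p * (exp t - 1)) ^ #F := by
  classical
  have := Fintype.ofFinite V
  have hexp (G : SimpleGraph V) : exp (t * (G.edgeSet ∩ F).ncard) =
      ∏ e ∈ G.edgeFinset, if e ∈ F then exp t else 1 := by
    rw [← coe_edgeFinset, ← coe_inter, Set.ncard_coe_finset, prod_ite_mem, prod_const, mul_comm,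
      exp_nat_mul]
  have hF_top : (⊤ : SimpleGraph V).edgeFinset ∩ F = F :=
    inter_eq_right.2 fun e he ↦ by simpa using hF e he
  have hfactor (e : Sym2 V) : p * (if e ∈ F then exp t else 1) + (1 - p) =
      if e ∈ F then 1 + p * (exp t - 1) else 1 := by
    split_ifs <;> ring
  simp_rw [mgf, hexp, integral_prod_edgeFinset, hfactor]
  rw [prod_ite_mem, hF_top, prod_const]

lemma binomialRandom_real_le_ncard_edgeSet_inter_le {F : Finset (Sym2 V)}
    (hF : ∀ e ∈ F, ¬ e.IsDiag) {s : ℝ} (hs : 1 ≤ s) (a : ℝ) :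
    G(V, p).real {G | a ≤ (G.edgeSet ∩ F).ncard} ≤ exp ((s - 1) * (p * #F)) * s ^ (-a) := by
  have hs0 : 0 < s := by positivity
  have hp0 : 0 ≤ (p : ℝ) := p.2.1
  calc G(V, p).real {G | a ≤ (G.edgeSet ∩ F).ncard}
      ≤ exp (-log s * a) *
          mgf (fun G : SimpleGraph V ↦ ((G.edgeSet ∩ ↑F).ncard : ℝ)) G(V, p) (log s) :=
        measure_ge_le_exp_mul_mgf a (log_nonneg hs) .of_finite
    _ = (1 + p * (s - 1)) ^ #F * s ^ (-a) := by
        rw [mgf_ncard_edgeSet_inter hF, exp_log hs0, rpow_def_of_pos hs0, neg_mul_comm, mul_comm]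
    _ ≤ exp (p * (s - 1)) ^ #F * s ^ (-a) := by
        have : 0 ≤ 1 + p * (s - 1) := by nlinarith
        gcongr
        linarith [add_one_le_exp (p * (s - 1))]
    _ = exp ((s - 1) * (p * #F)) * s ^ (-a) := by
        rw [← exp_nat_mul]
        ring_nf

-- The tilt `s`, the square root of the ratio of `a` to the mean, is not the optimal one, but it
-- turns the Chernoff bound into a pure power of `s`.
lemma binomialRandom_real_le_ncard_edgeSet_inter_le_rpow {F : Finset (Sym2 V)}
    (hF : ∀ e ∈ F, ¬ e.IsDiag) {s a : ℝ} (hs : 1 ≤ s) (ha : s ^ 2 * (p * #F) ≤ a) :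
    G(V, p).real {G | a ≤ (G.edgeSet ∩ F).ncard} ≤ s ^ (-((1 - s⁻¹) * a)) := by
  have hs0 : 0 < s := by positivity
  have hp0 : 0 ≤ (p : ℝ) := p.2.1
  have hexponent : (s - 1) * (p * #F) ≤ log s * (s⁻¹ * a) :=
    calc (s - 1) * (p * #F) = (1 - s⁻¹) * (s⁻¹ * (s ^ 2 * (p * #F))) := by field_simp
      _ ≤ log s * (s⁻¹ * a) := by
        gcongr
        · exact log_nonneg hs
        · exact one_sub_inv_le_log_of_pos hs0
  calc G(V, p).real {G | a ≤ (G.edgeSet ∩ F).ncard}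
      ≤ exp ((s - 1) * (p * #F)) * s ^ (-a) :=
        binomialRandom_real_le_ncard_edgeSet_inter_le hF hs a
    _ ≤ exp (log s * (s⁻¹ * a)) * s ^ (-a) := by gcongr
    _ = s ^ (-((1 - s⁻¹) * a)) := by
        rw [← rpow_def_of_pos hs0, ← rpow_add hs0]
        ring_nf

lemma binomialRandom_real_le_ncard_spanned_le {U : Finset V} {s a : ℝ} (hs : 1 ≤ s)
    (ha : s ^ 2 * (p * (#U : ℝ) ^ 2 / 2) ≤ a) :
    G(V, p).real {G | a ≤ ({e ∈ G.edgeSet | ∀ v ∈ e, v ∈ U}.ncard : ℝ)} ≤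
      s ^ (-((1 - s⁻¹) * a)) := by
  have hp0 : 0 ≤ (p : ℝ) := p.2.1
  classical
  simp only [edgeSet_sep_forall_mem_eq_inter]
  refine binomialRandom_real_le_ncard_edgeSet_inter_le_rpow (by simp) hs (le_trans ?_ ha)
  rw [sym2_eq_image, Sym2.filter_image_mk_not_isDiag, Sym2.card_image_offDiag,
    Nat.cast_choose_two, mul_div_assoc]
  gcongr
  nlinarith [(#U).cast_nonneg (α := ℝ)]

end BinomialRandom

section UnionBound

lemma choose_le_exp_one_mul_div_pow (n k : ℕ) :
    (n.choose k : ℝ) ≤ (exp 1 * (n / k)) ^ k := by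
  have hpow : (0 : ℝ) < k ^ k := by exact_mod_cast Nat.pow_self_pos
  have hfactorial : (k : ℝ) ^ k ≤ exp k * k.factorial :=
    (div_le_iff₀ (by positivity)).1 (pow_div_factorial_le_exp _ k.cast_nonneg k)
  calc (n.choose k : ℝ) ≤ n ^ k / k.factorial := Nat.choose_le_pow_div k n
    _ ≤ exp k * n ^ k / k ^ k := by
        rw [div_le_div_iff₀ (by positivity) hpow]
        nlinarith [pow_nonneg (n.cast_nonneg (α := ℝ)) k]
    _ = (exp 1 * (n / k)) ^ k := by rw [mul_pow, div_pow, exp_one_pow, mul_div_assoc]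

lemma sum_nonempty_le_of_choose_mul_le_pow {V : Type*} [Fintype V] {f : Finset V → ℝ} {q : ℝ}
    (hq0 : 0 ≤ q) (hq1 : q < 1)
    (hf : ∀ U, U.Nonempty → (Fintype.card V).choose #U * f U ≤ q ^ #U) :
    ∑ U with U.Nonempty, f U ≤ q / (1 - q) := by
  set N := Fintype.card V
  calc ∑ U with U.Nonempty, f U
      ≤ ∑ U : Finset V with U.Nonempty, q ^ #U / N.choose #U := by
        refine sum_le_sum fun U hU ↦ ?_
        have hchoose : 0 < N.choose #U := Nat.choose_pos (card_le_univ U)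
        rw [le_div_iff₀' (by exact_mod_cast hchoose)]
        exact hf U (mem_filter.1 hU).2
    _ = ∑ k ∈ range (N + 1), if 0 < k then q ^ k else 0 := by
        simp only [sum_filter, ← card_pos, ← powerset_univ]
        rw [sum_powerset_apply_card fun k ↦ if 0 < k then q ^ k / N.choose k else 0]
        refine sum_congr rfl fun k hk ↦ ?_
        have hchoose : N.choose k ≠ 0 := (Nat.choose_pos (Nat.lt_succ_iff.1 (mem_range.1 hk))).ne'
        split_ifs <;> simp [N, field]
    _ = ∑ k ∈ Ico 1 (N + 1), q ^ k := by
        rw [← sum_filter]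
        congr 1
        ext k
        simp only [mem_filter, mem_range, mem_Ico]
        omega
    _ ≤ q / (1 - q) := by simpa using geom_sum_Ico_le_of_lt_one (m := 1) (n := N + 1) hq0 hq1

lemma measureReal_biUnion_nonempty_le_of_choose_mul_le_pow {V Ω : Type*} [Fintype V]
    [MeasurableSpace Ω] {μ : Measure Ω} [IsFiniteMeasure μ] {A : Finset V → Set Ω} {q : ℝ}
    (hq0 : 0 ≤ q) (hq1 : q < 1)
    (hA : ∀ U, U.Nonempty → (Fintype.card V).choose #U * μ.real (A U) ≤ q ^ #U) :
    μ.real (⋃ (U : Finset V) (_ : U.Nonempty), A U) ≤ q / (1 - q) :=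
  calc μ.real (⋃ (U : Finset V) (_ : U.Nonempty), A U)
      = μ.real (⋃ U ∈ ({U | U.Nonempty} : Finset (Finset V)), A U) := by simp
    _ ≤ ∑ U with U.Nonempty, μ.real (A U) := measureReal_biUnion_finset_le _ _
    _ ≤ q / (1 - q) := sum_nonempty_le_of_choose_mul_le_pow hq0 hq1 hA

end UnionBound

section SparseSets

/-- The ratio of the geometric series that dominates, in the union bound over the sizes of `U`, the
probability that some `U` with `r ^ 2 * |U| ≤ 2 * β * n` spans at least `β * d * |U|` edges of
`G(n, p)`, where `n * p ≤ d`. -/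
noncomputable def denseSetRatio (β r d : ℝ) : ℝ :=
  exp 1 / (2 * β) * r ^ (2 - (1 - r⁻¹) * (β * d))

lemma denseSetRatio_nonneg {β r : ℝ} (hβ : 0 ≤ β) (hr : 0 ≤ r) (d : ℝ) :
    0 ≤ denseSetRatio β r d := by
  unfold denseSetRatio
  positivity

lemma tendsto_denseSetRatio {β r : ℝ} (hβ : 0 < β) (hr : 1 < r) :
    Tendsto (denseSetRatio β r) atTop (nhds 0) := by
  have hκ : 0 < 1 - r⁻¹ := sub_pos.2 (inv_lt_one_of_one_lt₀ hr)
  have hexponent : Tendsto (fun d ↦ 2 - (1 - r⁻¹) * (β * d)) atTop atBot :=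
    tendsto_atBot_add_const_left _ 2
      (tendsto_neg_atTop_atBot.comp ((tendsto_id.const_mul_atTop hβ).const_mul_atTop hκ))
  have hrpow : Tendsto (fun d ↦ r ^ (2 - (1 - r⁻¹) * (β * d))) atTop (nhds 0) :=
    (tendsto_rpow_atBot_of_base_gt_one r hr).comp hexponent
  rw [← mul_zero (exp 1 / (2 * β))]
  exact hrpow.const_mul _

lemma choose_mul_rpow_le_denseSetRatio_pow {β r s d : ℝ} (hβ : 0 < β) (hr : 1 < r) (hrs : r ≤ s)
    (hd : 2 ≤ (1 - r⁻¹) * (β * d)) {n k : ℕ} (hk : 0 < k) (hs : s ^ 2 * k = 2 * β * n) :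
    n.choose k * s ^ (-((1 - s⁻¹) * (β * d * k))) ≤ denseSetRatio β r d ^ k := by
  have hr0 : 0 < r := by positivity
  have hs0 : 0 < s := hr0.trans_le hrs
  have hκ : 0 < 1 - r⁻¹ := sub_pos.2 (inv_lt_one_of_one_lt₀ hr)
  have hd0 : 0 < β * d := pos_of_mul_pos_right (by linarith) hκ.le
  have hratio : (n : ℝ) / k = s ^ (2 : ℝ) / (2 * β) := by
    rw [rpow_two]
    field_simp
    linarith
  calc n.choose k * s ^ (-((1 - s⁻¹) * (β * d * k)))
      ≤ (exp 1 * (n / k)) ^ k * s ^ (-((1 - r⁻¹) * (β * d * k))) := by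
        gcongr
        · exact choose_le_exp_one_mul_div_pow n k
        · linarith
    _ = (exp 1 / (2 * β) * s ^ (2 - (1 - r⁻¹) * (β * d))) ^ k := by
        have hpow : s ^ (-((1 - r⁻¹) * (β * d * k))) = (s ^ (-((1 - r⁻¹) * (β * d)))) ^ k := by
          rw [← rpow_mul_natCast hs0.le]
          ring_nf
        rw [hratio, hpow, ← mul_pow, sub_eq_add_neg 2, rpow_add hs0]
        ring
    _ ≤ denseSetRatio β r d ^ k := by
        unfold denseSetRatio
        have hbase : s ^ (2 - (1 - r⁻¹) * (β * d)) ≤ r ^ (2 - (1 - r⁻¹) * (β * d)) :=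
          rpow_le_rpow_of_nonpos hr0 hrs (by linarith)
        gcongr

variable {V : Type*} [Fintype V] {p : I} {β r d : ℝ}

lemma choose_mul_binomialRandom_real_dense_le (hβ : 0 < β) (hr : 1 < r)
    (hp : Fintype.card V * (p : ℝ) ≤ d) (hd : 2 ≤ (1 - r⁻¹) * (β * d)) {U : Finset V}
    (hU : U.Nonempty) (hUr : r ^ 2 * #U ≤ 2 * β * Fintype.card V) :
    (Fintype.card V).choose #U *
      G(V, p).real {G | β * d * #U ≤ ({e ∈ G.edgeSet | ∀ v ∈ e, v ∈ U}.ncard : ℝ)} ≤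
        denseSetRatio β r d ^ #U := by
  set N := Fintype.card V
  have hU0 : (0 : ℝ) < #U := by exact_mod_cast hU.card_pos
  set s := √(2 * β * N / #U)
  have hs : s ^ 2 * #U = 2 * β * N := by
    rw [sq_sqrt (by positivity)]
    field_simp
  have hrs : r ≤ s := le_sqrt_of_sq_le ((le_div_iff₀ hU0).2 hUr)
  have hmean : s ^ 2 * (p * (#U : ℝ) ^ 2 / 2) ≤ β * d * #U :=
    calc s ^ 2 * (p * (#U : ℝ) ^ 2 / 2) = s ^ 2 * #U * p * #U / 2 := by ring
      _ = β * (N * p) * #U := by rw [hs]; ring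
      _ ≤ β * d * #U := by gcongr
  calc _ ≤ N.choose #U * s ^ (-((1 - s⁻¹) * (β * d * #U))) := by
        gcongr
        exact binomialRandom_real_le_ncard_spanned_le (hr.le.trans hrs) hmean
    _ ≤ denseSetRatio β r d ^ #U :=
        choose_mul_rpow_le_denseSetRatio_pow hβ hr hrs hd hU.card_pos hs

lemma one_sub_le_binomialRandom_real_sparse (hβ : 0 < β) (hr : 1 < r)
    (hp : Fintype.card V * (p : ℝ) ≤ d) (hd : 2 ≤ (1 - r⁻¹) * (β * d))
    (hq : denseSetRatio β r d < 1) :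
    1 - denseSetRatio β r d / (1 - denseSetRatio β r d) ≤
      G(V, p).real {G | ∀ U : Finset V, r ^ 2 * #U ≤ 2 * β * Fintype.card V →
        ({e ∈ G.edgeSet | ∀ v ∈ e, v ∈ U}.ncard : ℝ) ≤ β * d * #U} := by
  classical
  set sparse := {G : SimpleGraph V | ∀ U : Finset V, r ^ 2 * #U ≤ 2 * β * Fintype.card V →
    ({e ∈ G.edgeSet | ∀ v ∈ e, v ∈ U}.ncard : ℝ) ≤ β * d * #U}
  let dense (U : Finset V) := {G : SimpleGraph V | r ^ 2 * #U ≤ 2 * β * Fintype.card V ∧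
    β * d * #U ≤ ({e ∈ G.edgeSet | ∀ v ∈ e, v ∈ U}.ncard : ℝ)}
  have hsub : sparseᶜ ⊆ ⋃ (U : Finset V) (_ : U.Nonempty), dense U := by
    intro G hG
    simp only [sparse, Set.mem_compl_iff, Set.mem_ofPred_eq, not_forall, not_le] at hG
    obtain ⟨U, hUr, hspan⟩ := hG
    have hU : U.Nonempty := by
      rw [nonempty_iff_ne_empty]
      rintro rfl
      rw [edgeSet_sep_forall_mem_eq_inter] at hspan
      simp at hspan
    exact Set.mem_biUnion hU ⟨hUr, hspan.le⟩
  have hratio0 : 0 ≤ denseSetRatio β r d := denseSetRatio_nonneg hβ.le (by positivity) d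
  have hdense (U : Finset V) (hU : U.Nonempty) :
      (Fintype.card V).choose #U * G(V, p).real (dense U) ≤ denseSetRatio β r d ^ #U := by
    by_cases hUr : r ^ 2 * #U ≤ 2 * β * Fintype.card V
    · simpa only [dense, hUr, true_and] using
        choose_mul_binomialRandom_real_dense_le hβ hr hp hd hU hUr
    · simpa [dense, hUr] using pow_nonneg hratio0 #U
  have hcompl : G(V, p).real sparseᶜ ≤ denseSetRatio β r d / (1 - denseSetRatio β r d) :=
    (measureReal_mono hsub (measure_ne_top _ _)).trans <|
      measureReal_biUnion_nonempty_le_of_choose_mul_le_pow hratio0 hq hdense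
  rw [probReal_compl_eq_one_sub (Set.toFinite _).measurableSet] at hcompl
  linarith

end SparseSets

lemma isEquivalent_log_of_isLittleO_log_log {f : ℕ → ℝ}
    (hf : (fun n : ℕ ↦ f n - log n - log (log n)) =o[atTop] fun n : ℕ ↦ log (log n)) :
    f ~[atTop] fun n : ℕ ↦ log n := by
  have hlog : Tendsto (fun n : ℕ ↦ log n) atTop atTop :=
    tendsto_log_atTop.comp tendsto_natCast_atTop_atTop
  have hloglog : (fun n : ℕ ↦ log (log n)) =o[atTop] fun n : ℕ ↦ log n :=
    isLittleO_log_id_atTop.comp_tendsto hlog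
  refine ((hf.trans hloglog).add hloglog).congr_left fun n ↦ ?_
  simp

lemma eventually_le_two_mul_log_of_isLittleO_log_log {f : ℕ → ℝ}
    (hf : (fun n : ℕ ↦ f n - log n - log (log n)) =o[atTop] fun n : ℕ ↦ log (log n)) :
    ∀ᶠ n : ℕ in atTop, f n ≤ 2 * log n := by
  filter_upwards [(isEquivalent_log_of_isLittleO_log_log hf).def one_pos] with n hn
  have hlog : 0 ≤ log n := log_natCast_nonneg n
  simp only [Pi.sub_apply, norm_eq_abs, abs_of_nonneg hlog] at hn
  linarith [le_abs_self (f n - log n)]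

theorem small_sets_sparse_general {α β : ℝ} (hα : 0 < α) (hαβ : α < 2 * β)
    {p d : ℕ → ℝ} (hp01 : ∀ n, 0 ≤ p n ∧ p n ≤ 1) (hd : Tendsto d atTop atTop)
    (hpd : ∀ᶠ n : ℕ in atTop, n * p n ≤ d n) :
    Tendsto
      (fun n : ℕ ↦ gnpProb n (p n) fun G ↦ ∀ U : Finset (Fin n), (#U : ℝ) ≤ α * n →
        ({e ∈ G.edgeSet | ∀ v ∈ e, v ∈ U}.ncard : ℝ) ≤ β * d n * #U)
      atTop (nhds 1) := by
  have hβ : 0 < β := by linarith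
  set r := √(2 * β / α)
  have hr : 1 < r := lt_sqrt_of_sq_lt (by rwa [one_pow, one_lt_div hα])
  have hsize {n : ℕ} (U : Finset (Fin n)) :
      (#U : ℝ) ≤ α * n ↔ r ^ 2 * #U ≤ 2 * β * Fintype.card (Fin n) := by
    rw [sq_sqrt (by positivity), Fintype.card_fin, div_mul_eq_mul_div, div_le_iff₀ hα, mul_assoc,
      mul_assoc, mul_assoc, mul_le_mul_iff_right₀ two_pos, mul_le_mul_iff_right₀ hβ, mul_comm α]
  have hκ : 0 < 1 - r⁻¹ := sub_pos.2 (inv_lt_one_of_one_lt₀ hr)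
  have hratio := (tendsto_denseSetRatio hβ hr).comp hd
  have hlower : Tendsto (fun n ↦ 1 - denseSetRatio β r (d n) / (1 - denseSetRatio β r (d n)))
      atTop (nhds 1) := by
    simpa using (hratio.div (hratio.const_sub 1) (by simp)).const_sub 1
  refine tendsto_of_tendsto_of_tendsto_of_le_of_le' hlower tendsto_const_nhds ?_ ?_
  · filter_upwards [hpd, hratio.eventually_lt_const one_pos,
      ((hd.const_mul_atTop hβ).const_mul_atTop hκ).eventually_ge_atTop 2] with n hpn hq hdn
    simp only [gnpProb_eq_binomialRandom_real (p := ⟨p n, hp01 n⟩) n, hsize]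
    exact one_sub_le_binomialRandom_real_sparse hβ hr (by simpa using hpn) hdn hq
  · refine .of_forall fun n ↦ ?_
    rw [gnpProb_eq_binomialRandom_real (p := ⟨p n, hp01 n⟩) n]
    exact measureReal_le_one

/-- **Lemma (small sets span few edges).**
Let `ε > 0` and let `p(n)` satisfy `n·p(n) − log n − log log n → ∞` and
`n·p(n) − log n − log log n = o(log log n)`. Then whp `G ~ G(n, p(n))` is such that
every vertex set `U` with `|U| ≤ εn/100` spans at most `ε|U|·(log n)/10` edges. -/
theorem small_sets_sparse
    (ε : ℝ) (hε : 0 < ε)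
    (p : ℕ → ℝ) (hp01 : ∀ n, 0 ≤ p n ∧ p n ≤ 1)
    (hp : Filter.Tendsto
      (fun n : ℕ => n * p n - Real.log n - Real.log (Real.log n))
      Filter.atTop Filter.atTop)
    (hp' : (fun n : ℕ => n * p n - Real.log n - Real.log (Real.log n))
      =o[Filter.atTop] (fun n : ℕ => Real.log (Real.log n))) :
    Filter.Tendsto
      (fun n : ℕ => gnpProb n (p n) (fun G =>
        ∀ U : Finset (Fin n), (U.card : ℝ) ≤ ε * n / 100 →
          (({e ∈ G.edgeSet | ∀ v ∈ e, v ∈ U}).ncard : ℝ)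
            ≤ ε * U.card * Real.log n / 10))
      Filter.atTop (nhds 1) := by
  have hlog : Tendsto (fun n : ℕ ↦ 2 * log n) atTop atTop :=
    (tendsto_log_atTop.comp tendsto_natCast_atTop_atTop).const_mul_atTop two_pos
  convert small_sets_sparse_general (α := ε / 100) (β := ε / 20) (by linarith) (by linarith) hp01
    hlog (eventually_le_two_mul_log_of_isLittleO_log_log hp') using 7 <;> ring
end
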